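/- arXiv:2211.10895 — 7 statements merged into one kernel-verified Lean document; each statement's English description precedes it below -/
import Mathlib

section
/- There exists a finite simple bipartite graph G without isolated vertices, on n = 14 vertices and with chromatic number χ(G) = 2, such that f_o(G) < n/χ(G); namely the bipartite complement of the Heawood graph, which satisfies f_o(G) = 6 < 7. -/
/-!
The graph is the bipartite complement of the Heawood graph. Identify both the points and the lines
of the Fano plane with the nonzero vectors of `𝔽₂³`, so that a point `x` lies on a line `y` iff
`x ⬝ y = 0`; then `x` and `y` are adjacent iff `x ⬝ y = 1`. Let an odd induced subgraph consist of
the points `A` and the lines `B`, with sums `a` and `b` in `𝔽₂³`. Oddness says `x ⬝ b = 1` for all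
`x ∈ A` and `y ⬝ a = 1` for all `y ∈ B`. Hence `A` lies in the affine plane `{x | x ⬝ b = 1}`, which
is empty (`b = 0`) or has four elements with sum zero, and similarly for `B`. If `|A| = 4` then
`a = 0`, so `B = ∅`, so `b = 0`, so `A = ∅`, which is absurd. Thus `|A| ≤ 3` and likewise `|B| ≤ 3`.
The bound six is attained by the three unit vectors on either side, which induce a matching.
-/

open scoped Classical

/-- `fo G` is the maximum number of vertices of an odd induced subgraph of `G`,
i.e. an induced subgraph in which every vertex has odd degree. -/
noncomputable def fo {V : Type*} [Fintype V] (G : SimpleGraph V) : ℕ :=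
  sSup {n | ∃ s : Finset V,
    (∀ v ∈ s, Odd ((s.filter (fun u => G.Adj v u)).card)) ∧ s.card = n}

/-- The line `l_j` of the Fano plane is incident with the points `p_j`, `p_{j+1}`, `p_{j+3}`. -/
abbrev FanoInc (i j : Fin 7) : Prop := i = j ∨ i = j + 1 ∨ i = j + 3

/-- The bipartite complement of the Heawood graph; `inl i` is the point `p_i`, `inr j` is the
line `l_j`. -/
def coHeawood : SimpleGraph (Fin 7 ⊕ Fin 7) where
  Adj
    | .inl i, .inr j => ¬ FanoInc i j
    | .inr j, .inl i => ¬ FanoInc i j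
    | _, _ => False
  symm := ⟨by rintro (i | i) (j | j) h <;> exact h⟩
  loopless := ⟨by rintro (i | i) h <;> exact h⟩

/-- Homogeneous coordinates of the points: `p_i` is `α ^ i`, where `α ^ 3 = α + 1` in `𝔽₈`, written
in the basis `1, α, α ^ 2`. -/
def ptVec : Fin 7 → Fin 3 → ZMod 2 :=
  ![![1, 0, 0], ![0, 1, 0], ![0, 0, 1], ![1, 1, 0], ![0, 1, 1], ![1, 1, 1], ![1, 0, 1]]

/-- Homogeneous coordinates of the lines: `lnVec j` is the functional vanishing exactly on the
points of `l_j`. -/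
def lnVec : Fin 7 → Fin 3 → ZMod 2 :=
  ![![0, 0, 1], ![1, 0, 0], ![1, 1, 0], ![1, 1, 1], ![0, 1, 1], ![1, 0, 1], ![0, 1, 0]]

/-- Adjacency in `coHeawood` is the dot product of coordinates over `𝔽₂`. -/
lemma dot_eq_ite (i j : Fin 7) :
    ptVec i ⬝ᵥ lnVec j = if ¬ FanoInc i j then 1 else 0 := by
  revert i j; decide

/-- An affine plane of `𝔽₂³` avoiding the origin has at most four elements, and when it has four
their sum is zero. -/
lemma ptVec_plane (b : Fin 3 → ZMod 2) :
    ({i | ptVec i ⬝ᵥ b = 1} : Finset (Fin 7)).card ≤ 4 ∧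
      (({i | ptVec i ⬝ᵥ b = 1} : Finset (Fin 7)).card = 4 →
        ∑ i with ptVec i ⬝ᵥ b = 1, ptVec i = 0) := by
  revert b; decide

lemma lnVec_plane (a : Fin 3 → ZMod 2) :
    ({j | a ⬝ᵥ lnVec j = 1} : Finset (Fin 7)).card ≤ 4 ∧
      (({j | a ⬝ᵥ lnVec j = 1} : Finset (Fin 7)).card = 4 →
        ∑ j with a ⬝ᵥ lnVec j = 1, lnVec j = 0) := by
  revert a; decide

/-- The degree of a point in the subgraph induced by `s`, modulo two, is its dot product with the
sum of the lines in `s`. -/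
lemma card_adj_inl (s : Finset (Fin 7 ⊕ Fin 7)) (i : Fin 7) :
    ((s.filter (fun u => coHeawood.Adj (.inl i) u)).card : ZMod 2) =
      ptVec i ⬝ᵥ ∑ j ∈ s.toRight, lnVec j := by
  rw [dotProduct_sum, Finset.card_filter, Nat.cast_sum]
  conv_lhs => rw [← Finset.toLeft_disjSum_toRight (u := s)]
  rw [Finset.sum_disjSum]
  simp [coHeawood, dot_eq_ite]

lemma card_adj_inr (s : Finset (Fin 7 ⊕ Fin 7)) (j : Fin 7) :
    ((s.filter (fun u => coHeawood.Adj (.inr j) u)).card : ZMod 2) =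
      (∑ i ∈ s.toLeft, ptVec i) ⬝ᵥ lnVec j := by
  rw [sum_dotProduct, Finset.card_filter, Nat.cast_sum]
  conv_lhs => rw [← Finset.toLeft_disjSum_toRight (u := s)]
  rw [Finset.sum_disjSum]
  simp [coHeawood, dot_eq_ite]

lemma card_le_six (s : Finset (Fin 7 ⊕ Fin 7))
    (hs : ∀ v ∈ s, Odd ((s.filter (fun u => coHeawood.Adj v u)).card)) : s.card ≤ 6 := by
  have hA : ∀ i ∈ s.toLeft, ptVec i ⬝ᵥ ∑ j ∈ s.toRight, lnVec j = 1 := fun i hi => by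
    rw [← card_adj_inl]
    exact ZMod.natCast_eq_one_iff_odd.2 (hs _ (Finset.mem_toLeft.1 hi))
  have hB : ∀ j ∈ s.toRight, (∑ i ∈ s.toLeft, ptVec i) ⬝ᵥ lnVec j = 1 := fun j hj => by
    rw [← card_adj_inr]
    exact ZMod.natCast_eq_one_iff_odd.2 (hs _ (Finset.mem_toRight.1 hj))
  rw [← Finset.card_toLeft_add_card_toRight]
  generalize s.toLeft = A at *
  generalize s.toRight = B at *
  -- If one side is empty, the sum over it vanishes, and so the other side is empty too.
  have hA0 : A = ∅ → B = ∅ := by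
    rintro rfl
    exact Finset.eq_empty_of_forall_notMem fun j hj => by simpa using hB j hj
  have hB0 : B = ∅ → A = ∅ := by
    rintro rfl
    exact Finset.eq_empty_of_forall_notMem fun i hi => by simpa using hA i hi
  have hA3 : A.card ≤ 3 := by
    obtain ⟨h4, hsum⟩ := ptVec_plane (∑ j ∈ B, lnVec j)
    have hsub : A ⊆ ({i | ptVec i ⬝ᵥ ∑ j ∈ B, lnVec j = 1} : Finset (Fin 7)) :=
      fun i hi => by simpa using hA i hi
    by_contra! hc
    have heq := Finset.eq_of_subset_of_card_le hsub (by lia)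
    rw [← heq] at h4 hsum
    have ha := hsum (by lia)
    have hBe : B = ∅ := Finset.eq_empty_of_forall_notMem fun j hj => by
      simpa [ha] using hB j hj
    simp [hB0 hBe] at hc
  have hB3 : B.card ≤ 3 := by
    obtain ⟨h4, hsum⟩ := lnVec_plane (∑ i ∈ A, ptVec i)
    have hsub : B ⊆ ({j | (∑ i ∈ A, ptVec i) ⬝ᵥ lnVec j = 1} : Finset (Fin 7)) :=
      fun j hj => by simpa using hB j hj
    by_contra! hc
    have heq := Finset.eq_of_subset_of_card_le hsub (by lia)
    rw [← heq] at h4 hsum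
    have hb := hsum (by lia)
    have hAe : A = ∅ := Finset.eq_empty_of_forall_notMem fun i hi => by
      simpa [hb] using hA i hi
    simp [hA0 hAe] at hc
  lia

lemma fo_coHeawood : fo coHeawood = 6 := by
  refine IsGreatest.csSup_eq ⟨?_, ?_⟩
  -- The points and the lines whose coordinates are the unit vectors attain the bound.
  · refine ⟨Finset.disjSum {0, 1, 2} {1, 6, 0}, ?_, by decide⟩
    rintro (i | j) h
    · rw [← ZMod.natCast_eq_one_iff_odd, card_adj_inl, Finset.toRight_disjSum]
      rw [Finset.inl_mem_disjSum] at h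
      revert i; decide
    · rw [← ZMod.natCast_eq_one_iff_odd, card_adj_inr, Finset.toLeft_disjSum]
      rw [Finset.inr_mem_disjSum] at h
      revert j; decide
  · rintro n ⟨s, hs, rfl⟩
    exact card_le_six s hs

lemma chromaticNumber_coHeawood : coHeawood.chromaticNumber = 2 := by
  refine le_antisymm ?_ ?_
  · refine SimpleGraph.Colorable.chromaticNumber_le (n := 2)
      ⟨SimpleGraph.Coloring.mk (Sum.elim (fun _ => 0) (fun _ => 1)) ?_⟩
    rintro (i | i) (j | j) h
    · exact h.elim
    · simp
    · simp
    · exact h.elim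
  · have h : coHeawood.Adj (.inl 0) (.inr 1) := by
      change ¬ FanoInc 0 1
      decide
    exact SimpleGraph.two_le_chromaticNumber_of_adj h

/-- There exists a finite simple (bipartite) graph on 14 vertices, with chromatic
number 2 and no isolated vertices, such that `f_o(G) = 6 < 14 / 2 = n / χ(G)`. -/
theorem exists_counterexample_scott :
    ∃ (V : Type) (_ : Fintype V) (G : SimpleGraph V),
      Fintype.card V = 14 ∧ G.chromaticNumber = 2 ∧ (∀ v, ∃ w, G.Adj v w) ∧
      fo G = 6 ∧ (fo G : ℚ) < (Fintype.card V : ℚ) / 2 := by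
  refine ⟨Fin 7 ⊕ Fin 7, inferInstance, coHeawood, by simp, chromaticNumber_coHeawood, ?_,
    fo_coHeawood, by rw [fo_coHeawood]; norm_num⟩
  rintro (i | j)
  · have h : ∃ j, ¬ FanoInc i j := by revert i; decide
    exact ⟨.inr h.choose, h.choose_spec⟩
  · have h : ∃ i, ¬ FanoInc i j := by revert j; decide
    exact ⟨.inl h.choose, h.choose_spec⟩
end

section
/- If T is a tree of order n ≥ 2, then f_o(L(T)) ≥ f(n), where f(n) = ⌈n/2⌉ if n ≡ 0 or 3 (mod 4), and f(n) = ⌊(n-1)/2⌋ if n ≡ 1 or 2 (mod 4). -/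
/-!
An edge `uv` of a set `S` of edges has degree `deg u + deg v - 2` in the line graph induced on
`S`, so `S` gives an odd induced subgraph exactly when every edge of `S` joins a vertex of odd
and a vertex of even degree in `S` (`le_fo_lineGraph`). Counting edges at their even ends, `|S|`
is then even, and the claim reduces to finding such an `S` with `2 |S| ≥ n - 2`.

This is a dynamic programming argument on a rooted tree. A rooted piece with `m` edges is
described by the surplus `2 |S| - m` attainable for each label (prescribed final parity) of its
root and each actual degree parity there (`Ach`). As far as a lower bound is concerned, hanging a
piece below a new root has only four possible effects (`ChildType`): those of nothing, of a
single vertex, of an edge rooted at an end, and of a root with two leaves and a pendant path of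
length two. A root with `α`, `β`, `γ` children of the last three kinds has surpluses given by
explicit formulas (`RootProfile`), and a case analysis on the parities of `α + β` and `β + γ`
shows that it is again of one of the four kinds (`RootProfile.childType`). Each kind provides a
set with surplus at least `-1`, which is the inequality above.

The recursion runs over rooted pieces glued along edges (`RT`); since such pieces can be extended
by a leaf anywhere (`RT.insert_leaf`), every connected graph has one spanning all its vertices.
-/

open scoped Classical

/-- The number of edges of the edge set `S` that are incident with `v`. -/
noncomputable def edeg {V : Type*} (S : Finset (Sym2 V)) (v : V) : ℕ :=
  (S.filter (fun e => v ∈ e)).card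

/-- `RT T r A`: the vertex set `A`, rooted at `r`, is built from single vertices by repeatedly
hanging one rooted piece below the root of another, along an edge of `T`. -/
inductive RT {V : Type*} (T : SimpleGraph V) : V → Finset V → Prop
  | single (r : V) : RT T r {r}
  | join {r s : V} {A B : Finset V} : RT T r A → RT T s B → Disjoint A B → T.Adj r s →
      RT T r (A ∪ B)

lemma RT.root_mem {V : Type*} {T : SimpleGraph V} {r : V} {A : Finset V} (h : RT T r A) :
    r ∈ A := by
  induction h with
  | single r => simp
  | join _ _ _ _ ih _ => exact Finset.mem_union_left _ ih

lemma RT.insert_leaf {V : Type*} {T : SimpleGraph V} {r : V} {A : Finset V} (h : RT T r A)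
    {u v : V} (hu : u ∈ A) (hv : v ∉ A) (huv : T.Adj u v) : RT T r (insert v A) := by
  induction h with
  | single r =>
    obtain rfl : u = r := by simpa using hu
    have := RT.join (RT.single (T := T) u) (RT.single v)
      (by simpa [eq_comm] using hv) huv
    rwa [Finset.union_comm] at this
  | @join r s A B hA hB hd hrs ihA ihB =>
    rw [Finset.mem_union, not_or] at hv
    rcases Finset.mem_union.1 hu with hu | hu
    · rw [← Finset.insert_union]
      exact RT.join (ihA hu hv.1) hB (by simp [hd, hv.2]) hrs
    · rw [← Finset.union_insert]
      exact RT.join hA (ihB hu hv.2) (by simp [hd, hv.1]) hrs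

lemma exists_RT_univ {V : Type*} [Fintype V] {T : SimpleGraph V} (hT : T.Connected) (r : V) :
    RT T r Finset.univ := by
  obtain ⟨A, hA, hmax⟩ := (Set.toFinite {A : Finset V | RT T r A}).exists_maximal
    ⟨{r}, RT.single r⟩
  by_cases hne : A = Finset.univ
  · rwa [← hne]
  · obtain ⟨w, hw⟩ : ∃ w, w ∉ A := by
      by_contra! h
      exact hne (Finset.eq_univ_iff_forall.2 h)
    obtain ⟨p⟩ := hT.preconnected r w
    obtain ⟨d, -, h1, h2⟩ := p.exists_boundary_dart (A : Set V)
      (by simpa using RT.root_mem hA) (by simpa using hw)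
    have h3 := RT.insert_leaf hA (by simpa using h1) (by simpa using h2) d.adj
    exact absurd (hmax h3 (Finset.subset_insert _ _) (Finset.mem_insert_self _ _))
      (by simpa using h2)

/-- `Ach T A r b d k`: there is a set `S` of edges of `T` inside the vertex set `A`, with surplus
`2 |S| - (|A| - 1)` at least `k`, and a labelling `ℓ` of the vertices (`true` for odd) such that
every edge of `S` joins vertices with different labels and `ℓ v` is the parity of the degree of
`v` in `S` for every `v ≠ r` in `A`. The root `r` has label `b` while the parity of its degree in
`S` is `d`; these may differ, in anticipation of further edges at `r`. The condition on
`Odd S.card` follows from the others, by counting edges at their ends labelled even; recording it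
lets it be carried along the recursion. -/
def Ach {V : Type*} (T : SimpleGraph V) (A : Finset V) (r : V) (b d : Bool) (k : ℤ) : Prop :=
  ∃ (S : Finset (Sym2 V)) (ℓ : V → Bool),
    (∀ e ∈ S, e ∈ T.edgeSet) ∧ (∀ e ∈ S, ∀ v ∈ e, v ∈ A) ∧ ℓ r = b ∧
    (∀ v ∈ A, v ≠ r → (Odd (edeg S v) ↔ ℓ v = true)) ∧ (Odd (edeg S r) ↔ d = true) ∧
    (∀ u v, s(u, v) ∈ S → ℓ u ≠ ℓ v) ∧ (Odd S.card ↔ b = false ∧ d = true) ∧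
    k ≤ 2 * (S.card : ℤ) - ((A.card : ℤ) - 1)

lemma Ach.mono {V : Type*} {T : SimpleGraph V} {A : Finset V} {r : V} {b d : Bool} {k k' : ℤ}
    (h : Ach T A r b d k) (hk : k' ≤ k) : Ach T A r b d k' := by
  obtain ⟨S, ℓ, h1, h2, h3, h4, h5, h6, h7, h8⟩ := h
  exact ⟨S, ℓ, h1, h2, h3, h4, h5, h6, h7, hk.trans h8⟩

lemma Ach.single {V : Type*} (T : SimpleGraph V) (r : V) (b : Bool) :
    Ach T {r} r b false 0 :=
  ⟨∅, fun _ => b, by simp, by simp, rfl, by simp, by simp [edeg], by simp, by simp, by simp⟩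

lemma edeg_union {V : Type*} {S S' : Finset (Sym2 V)} (h : Disjoint S S') (v : V) :
    edeg (S ∪ S') v = edeg S v + edeg S' v := by
  unfold edeg
  rw [Finset.filter_union, Finset.card_union_of_disjoint]
  exact Finset.disjoint_filter_filter h

lemma edeg_insert {V : Type*} {S : Finset (Sym2 V)} {e : Sym2 V} (h : e ∉ S) (v : V) :
    edeg (insert e S) v = edeg S v + if v ∈ e then 1 else 0 := by
  unfold edeg
  rw [Finset.filter_insert]
  split_ifs
  · rw [Finset.card_insert_of_notMem (by simp [h])]
  · simp

lemma edeg_eq_zero {V : Type*} {S : Finset (Sym2 V)} {A : Finset V}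
    (h : ∀ e ∈ S, ∀ v ∈ e, v ∈ A) {v : V} (hv : v ∉ A) : edeg S v = 0 := by
  unfold edeg
  rw [Finset.card_eq_zero, Finset.filter_eq_empty_iff]
  exact fun e he hve => hv (h e he v hve)

lemma disjoint_edges {V : Type*} {S S' : Finset (Sym2 V)} {A B : Finset V}
    (h : ∀ e ∈ S, ∀ v ∈ e, v ∈ A) (h' : ∀ e ∈ S', ∀ v ∈ e, v ∈ B) (hd : Disjoint A B) :
    Disjoint S S' := by
  rw [Finset.disjoint_left]
  intro e he he'
  induction e using Sym2.ind with
  | _ u v =>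
    exact Finset.disjoint_left.1 hd (h _ he u (by simp)) (h' _ he' u (by simp))

/-- Both pieces are kept and the connecting edge is left unused; the child's root must then
satisfy its own parity condition. -/
lemma Ach.glue {V : Type*} {T : SimpleGraph V} {A B : Finset V} {r s : V} {b c d : Bool}
    {k k' : ℤ} (h : Ach T A r b d k) (h' : Ach T B s c c k') (hr : r ∈ A)
    (hd : Disjoint A B) : Ach T (A ∪ B) r b d (k + k' - 1) := by
  obtain ⟨S, ℓ, h1, h2, h3, h4, h5, h6, h7, h8⟩ := h
  obtain ⟨S', ℓ', h1', h2', h3', h4', h5', h6', h7', h8'⟩ := h'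
  have hSS := disjoint_edges h2 h2' hd
  have hrB : r ∉ B := Finset.disjoint_left.1 hd hr
  have hAB : ∀ v ∈ A, v ∉ B := fun v hv => Finset.disjoint_left.1 hd hv
  refine ⟨S ∪ S', fun v => if v ∈ B then ℓ' v else ℓ v, ?_, ?_, ?_, ?_, ?_, ?_, ?_, ?_⟩
  · intro e he
    rcases Finset.mem_union.1 he with he | he
    exacts [h1 e he, h1' e he]
  · intro e he v hv
    rcases Finset.mem_union.1 he with he | he
    exacts [Finset.mem_union_left _ (h2 e he v hv), Finset.mem_union_right _ (h2' e he v hv)]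
  · simp [hrB, h3]
  · intro v hv hvr
    rw [edeg_union hSS]
    by_cases hvB : v ∈ B
    · rw [edeg_eq_zero h2 (fun h => hAB v h hvB)]
      by_cases hvs : v = s
      · subst hvs; simp [hvB, h5', h3']
      · simp [hvB, h4' v hvB hvs]
    · rw [edeg_eq_zero h2' hvB]
      have hvA : v ∈ A := by simpa [hvB] using hv
      simp [hvB, h4 v hvA hvr]
  · rw [edeg_union hSS, edeg_eq_zero h2' hrB]
    simpa using h5
  · intro u v huv
    rcases Finset.mem_union.1 huv with he | he
    · have hu := hAB u (h2 _ he u (by simp))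
      have hv := hAB v (h2 _ he v (by simp))
      simpa [hu, hv] using h6 u v he
    · have hu := h2' _ he u (by simp)
      have hv := h2' _ he v (by simp)
      simpa [hu, hv] using h6' u v he
  · rw [Finset.card_union_of_disjoint hSS, Nat.odd_add', ← h7]
    have : ¬ Odd S'.card := by rw [h7']; rintro ⟨h, h'⟩; simp [h] at h'
    rw [Nat.not_odd_iff_even] at this
    rw [Nat.odd_iff, Nat.odd_iff]
    rw [Nat.even_iff] at this
    rw [Nat.even_iff]
    omega
  · rw [Finset.card_union_of_disjoint hSS, Finset.card_union_of_disjoint hd]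
    push_cast
    linarith

/-- Both pieces are kept and the connecting edge is used: it changes the parity of the degree
at both roots, and the roots must carry different labels. -/
lemma Ach.glueEdge {V : Type*} {T : SimpleGraph V} {A B : Finset V} {r s : V} {b d : Bool}
    {k k' : ℤ} (h : Ach T A r b d k) (h' : Ach T B s (!b) b k') (hr : r ∈ A) (hs : s ∈ B)
    (hd : Disjoint A B) (hrs : T.Adj r s) : Ach T (A ∪ B) r b (!d) (k + k' + 1) := by
  obtain ⟨S, ℓ, h1, h2, h3, h4, h5, h6, h7, h8⟩ := h
  obtain ⟨S', ℓ', h1', h2', h3', h4', h5', h6', h7', h8'⟩ := h'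
  have hSS := disjoint_edges h2 h2' hd
  have hrB : r ∉ B := Finset.disjoint_left.1 hd hr
  have hAB : ∀ v ∈ A, v ∉ B := fun v hv => Finset.disjoint_left.1 hd hv
  have hsA : s ∉ A := fun h => hAB s h hs
  have hnew : s(r, s) ∉ S ∪ S' := by
    intro he
    rcases Finset.mem_union.1 he with he | he
    · exact hsA (h2 _ he s (by simp))
    · exact hrB (h2' _ he r (by simp))
  refine ⟨insert s(r, s) (S ∪ S'), fun v => if v ∈ B then ℓ' v else ℓ v,
    ?_, ?_, ?_, ?_, ?_, ?_, ?_, ?_⟩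
  · intro e he
    rcases Finset.mem_insert.1 he with rfl | he
    · exact hrs
    rcases Finset.mem_union.1 he with he | he
    exacts [h1 e he, h1' e he]
  · intro e he v hv
    rcases Finset.mem_insert.1 he with rfl | he
    · rcases Sym2.mem_iff.1 hv with rfl | rfl
      exacts [Finset.mem_union_left _ hr, Finset.mem_union_right _ hs]
    rcases Finset.mem_union.1 he with he | he
    exacts [Finset.mem_union_left _ (h2 e he v hv), Finset.mem_union_right _ (h2' e he v hv)]
  · simp [hrB, h3]
  · intro v hv hvr
    rw [edeg_insert hnew, edeg_union hSS]
    by_cases hvB : v ∈ B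
    · rw [edeg_eq_zero h2 (fun h => hAB v h hvB)]
      by_cases hvs : v = s
      · subst hvs
        simp [hvB, h3', Nat.odd_add_one, h5']
      · simp [hvB, hvr, hvs, h4' v hvB hvs]
    · rw [edeg_eq_zero h2' hvB]
      have hvA : v ∈ A := by simpa [hvB] using hv
      have hvs : v ≠ s := fun h => hvB (h ▸ hs)
      simp [hvB, hvr, hvs, h4 v hvA hvr]
  · rw [edeg_insert hnew, edeg_union hSS, edeg_eq_zero h2' hrB]
    simp [Nat.odd_add_one, h5]
  · intro u v huv
    rcases Finset.mem_insert.1 huv with he | he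
    · rcases Sym2.eq_iff.1 he with ⟨rfl, rfl⟩ | ⟨rfl, rfl⟩ <;> simp [hrB, hs, h3, h3']
    rcases Finset.mem_union.1 he with he | he
    · have hu := hAB u (h2 _ he u (by simp))
      have hv := hAB v (h2 _ he v (by simp))
      simpa [hu, hv] using h6 u v he
    · have hu := h2' _ he u (by simp)
      have hv := h2' _ he v (by simp)
      simpa [hu, hv] using h6' u v he
  · rw [Finset.card_insert_of_notMem hnew, Finset.card_union_of_disjoint hSS]
    rw [Nat.odd_iff] at h7 h7' ⊢
    cases b <;> cases d <;> simp at h7 h7' ⊢ <;> omega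
  · rw [Finset.card_insert_of_notMem hnew, Finset.card_union_of_disjoint hSS,
      Finset.card_union_of_disjoint hd]
    push_cast
    linarith

/-- The four ways in which a rooted piece `B` can contribute as a child: it does at least as well
as, in this order, nothing at all; a single vertex; an edge rooted at an end; a root with two
leaves and a pendant path of length two. For a child `s`, the states `(b, b)` leave the edge to
the parent unused, while `(true, false)` and `(false, true)` use it for a parent labelled even
and odd respectively. -/
def ChildType {V : Type*} (T : SimpleGraph V) (B : Finset V) (s : V) : Prop :=
  (∃ b, Ach T B s b b 1) ∨
  ((∃ b, Ach T B s b b 0) ∧ Ach T B s true false 0) ∨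
  ((∃ b, Ach T B s b b (-1)) ∧ Ach T B s true false (-1) ∧ Ach T B s false true 1) ∨
  ((∃ b, Ach T B s b b 0) ∧ Ach T B s true false (-4) ∧ Ach T B s false true 2)

/-- The piece `A` rooted at `r` is at least as good as a root with `α`, `β`, `γ` children of the
second, third and fourth kind of `ChildType`. A child of these kinds adds to the surplus
`-1`, `-2`, `-1` when its edge is unused, `1`, `0`, `-3` when it is used at an even root, and
(only the last two kinds) `2`, `3` when it is used at an odd root. Hence the best surplus is
`α - γ` at an even root and `2 * β + 3 * γ - α` at an odd one, and reaching the other degree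
parity costs one change of choice at a child, that is `2` or `4`. -/
def RootProfile {V : Type*} (T : SimpleGraph V) (A : Finset V) (r : V) : Prop :=
  ∃ α β γ : ℕ,
    (∀ d : Bool, ((α + β) % 2 = d.toNat) → Ach T A r false d (α - γ)) ∧
    (∀ d : Bool, ((α + β) % 2 ≠ d.toNat) → 1 ≤ α + β + γ → Ach T A r false d (α - γ - 2)) ∧
    (∀ d : Bool, ((β + γ) % 2 = d.toNat) → Ach T A r true d (2 * β + 3 * γ - α)) ∧
    (∀ d : Bool, ((β + γ) % 2 ≠ d.toNat) → 1 ≤ β + γ → Ach T A r true d (2 * β + 3 * γ - α - 4))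

/-- The four kinds of children suffice: a root carrying any numbers `α`, `β`, `γ` of them is, seen
as a child itself, again of one of the four kinds. The cases are the parities of `α + β` and
`β + γ`; in each, `(α - γ) + (2 * β + 3 * γ - α) = 2 * (β + γ)` keeps the two optima from being
small together. -/
lemma RootProfile.childType {V : Type*} {T : SimpleGraph V} {A : Finset V} {r : V}
    (h : RootProfile T A r) : ChildType T A r := by
  obtain ⟨α, β, γ, h1, h2, h3, h4⟩ := h
  rcases Nat.mod_two_eq_zero_or_one (α + β) with hP | hP <;>
  rcases Nat.mod_two_eq_zero_or_one (β + γ) with hQ | hQ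
  · have e1 := h1 false (by simp [hP])
    have e3 := h3 false (by simp [hQ])
    have e4 := h4 true (by simp [hQ])
    by_cases hx : 1 ≤ (α : ℤ) - γ
    · exact Or.inl ⟨_, e1.mono hx⟩
    by_cases hx : 0 ≤ (α : ℤ) - γ
    · exact Or.inr (Or.inl ⟨⟨_, e1.mono hx⟩, e3.mono (by omega)⟩)
    · exact Or.inl ⟨_, (e4 (by omega)).mono (by omega)⟩
  · have e1 := h1 false (by simp [hP])
    have e3 := h3 true (by simp [hQ])
    by_cases hx : 1 ≤ (α : ℤ) - γ
    · exact Or.inl ⟨_, e1.mono hx⟩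
    · exact Or.inl ⟨_, e3.mono (by omega)⟩
  · have e1 := h1 true (by simp [hP])
    have e2 := h2 false (by simp [hP]) (by omega)
    have e3 := h3 false (by simp [hQ])
    have e4 := h4 true (by simp [hQ])
    by_cases hx : 3 ≤ (α : ℤ) - γ
    · exact Or.inl ⟨_, e2.mono (by omega)⟩
    by_cases hy : 1 ≤ β + γ ∧ 5 ≤ 2 * (β : ℤ) + 3 * γ - α
    · exact Or.inl ⟨_, (e4 hy.1).mono (by omega)⟩
    · exact Or.inr (Or.inr (Or.inl
        ⟨⟨_, e2.mono (by omega)⟩, e3.mono (by omega), e1.mono (by omega)⟩))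
  · have e1 := h1 true (by simp [hP])
    have e2 := h2 false (by simp [hP]) (by omega)
    have e3 := h3 true (by simp [hQ])
    have e4 := h4 false (by simp [hQ]) (by omega)
    by_cases hx : 3 ≤ (α : ℤ) - γ
    · exact Or.inl ⟨_, e2.mono (by omega)⟩
    by_cases hy : 1 ≤ 2 * (β : ℤ) + 3 * γ - α
    · exact Or.inl ⟨_, e3.mono hy⟩
    · exact Or.inr (Or.inr (Or.inr
        ⟨⟨_, e2.mono (by omega)⟩, e4.mono (by omega), e1.mono (by omega)⟩))

lemma RootProfile.single {V : Type*} (T : SimpleGraph V) (r : V) : RootProfile T {r} r := by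
  refine ⟨0, 0, 0, ?_, ?_, ?_, ?_⟩
  · rintro (_ | _) h
    · simpa using Ach.single T r false
    · simp at h
  · intro d _ h; omega
  · rintro (_ | _) h
    · simpa using Ach.single T r true
    · simp at h
  · intro d _ h; omega

lemma RootProfile.join {V : Type*} {T : SimpleGraph V} {A B : Finset V} {r s : V}
    (h : RootProfile T A r) (h' : ChildType T B s) (hr : r ∈ A) (hs : s ∈ B)
    (hd : Disjoint A B) (hrs : T.Adj r s) :
    RootProfile T (A ∪ B) r := by
  obtain ⟨α, β, γ, h1, h2, h3, h4⟩ := h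
  have bn : ∀ d : Bool, (!d).toNat = 1 - d.toNat := by decide
  have bl : ∀ d : Bool, d.toNat ≤ 1 := by decide
  -- `z` leaves the connecting edge unused, `e` and `o` use it with an even and odd label at `r`.
  have z : ∀ {b d k k'}, (∃ c, Ach T B s c c k') → Ach T A r b d k →
      Ach T (A ∪ B) r b d (k + k' - 1) := by
    rintro b d k k' ⟨c, hc⟩ hk
    exact hk.glue hc hr hd
  have e : ∀ {d k k'}, Ach T B s true false k' → Ach T A r false (!d) k →
      Ach T (A ∪ B) r false d (k + k' + 1) := by
    intro d k k' hc hk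
    simpa using hk.glueEdge hc hr hs hd hrs
  have o : ∀ {d k k'}, Ach T B s false true k' → Ach T A r true (!d) k →
      Ach T (A ∪ B) r true d (k + k' + 1) := by
    intro d k k' hc hk
    simpa using hk.glueEdge hc hr hs hd hrs
  rcases h' with hz | ⟨hz, he⟩ | ⟨hz, he, ho⟩ | ⟨hz, he, ho⟩
  · refine ⟨α, β, γ, fun d hp => ?_, fun d hp hc => ?_, fun d hp => ?_, fun d hp hc => ?_⟩
    · exact (z hz (h1 d hp)).mono (by omega)
    · exact (z hz (h2 d hp hc)).mono (by omega)
    · exact (z hz (h3 d hp)).mono (by omega)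
    · exact (z hz (h4 d hp hc)).mono (by omega)
  · refine ⟨α + 1, β, γ, fun d hp => ?_, fun d hp hc => ?_, fun d hp => ?_, fun d hp hc => ?_⟩ <;>
    have := bn d <;> have := bl d
    · exact (e he (h1 (!d) (by omega))).mono (by omega)
    · exact (z hz (h1 d (by omega))).mono (by omega)
    · exact (z hz (h3 d hp)).mono (by omega)
    · exact (z hz (h4 d hp hc)).mono (by omega)
  · refine ⟨α, β + 1, γ, fun d hp => ?_, fun d hp hc => ?_, fun d hp => ?_, fun d hp hc => ?_⟩ <;>
    have := bn d <;> have := bl d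
    · exact (e he (h1 (!d) (by omega))).mono (by omega)
    · exact (z hz (h1 d (by omega))).mono (by omega)
    · exact (o ho (h3 (!d) (by omega))).mono (by omega)
    · exact (z hz (h3 d (by omega))).mono (by omega)
  · refine ⟨α, β, γ + 1, fun d hp => ?_, fun d hp hc => ?_, fun d hp => ?_, fun d hp hc => ?_⟩ <;>
    have := bn d <;> have := bl d
    · exact (z hz (h1 d (by omega))).mono (by omega)
    · exact (e he (h1 (!d) (by omega))).mono (by omega)
    · exact (o ho (h3 (!d) (by omega))).mono (by omega)
    · exact (z hz (h3 d (by omega))).mono (by omega)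

lemma RT.rootProfile {V : Type*} {T : SimpleGraph V} {r : V} {A : Finset V} (h : RT T r A) :
    RootProfile T A r := by
  induction h with
  | single r => exact RootProfile.single T r
  | join hA hB hd hrs ihA ihB => exact ihA.join ihB.childType hA.root_mem hB.root_mem hd hrs

lemma ChildType.ach {V : Type*} {T : SimpleGraph V} {A : Finset V} {r : V}
    (h : ChildType T A r) : ∃ b, Ach T A r b b (-1) := by
  rcases h with ⟨b, h⟩ | ⟨⟨b, h⟩, -⟩ | ⟨⟨b, h⟩, -⟩ | ⟨⟨b, h⟩, -⟩ <;>
    exact ⟨b, h.mono (by norm_num)⟩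

/-- The degree of an edge `uv` of `S` in the line graph restricted to `S` is
`deg u + deg v - 2`. -/
lemma edeg_add_edeg {V : Type*} {S : Finset (Sym2 V)} {u v : V} (huv : u ≠ v)
    (h : s(u, v) ∈ S) :
    (S.filter (fun f => s(u, v) ≠ f ∧ ((s(u, v) : Set V) ∩ f).Nonempty)).card + 2 =
      edeg S u + edeg S v := by
  have hU : S.filter (fun f => u ∈ f) ∪ S.filter (fun f => v ∈ f) =
      insert s(u, v)
        (S.filter (fun f => s(u, v) ≠ f ∧ ((s(u, v) : Set V) ∩ f).Nonempty)) := by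
    ext f
    simp only [Finset.mem_union, Finset.mem_filter, Finset.mem_insert, Set.Nonempty,
      Set.mem_inter_iff, SetLike.mem_coe, Sym2.mem_iff]
    constructor
    · by_cases hf : f = s(u, v)
      · simp [hf]
      · rintro (⟨h1, h2⟩ | ⟨h1, h2⟩)
        · exact Or.inr ⟨h1, Ne.symm hf, u, Or.inl rfl, h2⟩
        · exact Or.inr ⟨h1, Ne.symm hf, v, Or.inr rfl, h2⟩
    · rintro (rfl | ⟨h1, -, x, rfl | rfl, h2⟩)
      · simp [h]
      · exact Or.inl ⟨h1, h2⟩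
      · exact Or.inr ⟨h1, h2⟩
  have hI : S.filter (fun f => u ∈ f) ∩ S.filter (fun f => v ∈ f) = {s(u, v)} := by
    ext f
    simp only [Finset.mem_inter, Finset.mem_filter, Finset.mem_singleton]
    constructor
    · rintro ⟨⟨-, h1⟩, -, h2⟩
      exact (Sym2.mem_and_mem_iff huv).1 ⟨h1, h2⟩
    · rintro rfl; simp [h]
  have := Finset.card_union_add_card_inter (S.filter (fun f => u ∈ f)) (S.filter (fun f => v ∈ f))
  rw [hU, hI, Finset.card_insert_of_notMem (by simp), Finset.card_singleton] at this
  unfold edeg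
  omega

lemma le_fo_lineGraph {V : Type*} [Fintype V] {T : SimpleGraph V} {S : Finset (Sym2 V)}
    (hS : ∀ e ∈ S, e ∈ T.edgeSet)
    (hodd : ∀ u v, s(u, v) ∈ S → ¬ (Odd (edeg S u) ↔ Odd (edeg S v))) :
    S.card ≤ fo T.lineGraph := by
  have hmap : (S.subtype (· ∈ T.edgeSet)).map (Function.Embedding.subtype _) = S :=
    Finset.subtype_map_of_mem hS
  refine le_csSup ⟨Fintype.card T.edgeSet, ?_⟩ ⟨S.subtype (· ∈ T.edgeSet), ?_, ?_⟩
  · rintro n ⟨s, -, rfl⟩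
    exact Finset.card_le_univ s
  · rintro ⟨e, heT⟩ he
    have heS : e ∈ S := by simpa using he
    induction e using Sym2.ind with
    | _ u v =>
      have hcard : ((S.subtype (· ∈ T.edgeSet)).filter
          (fun f => T.lineGraph.Adj ⟨s(u, v), heT⟩ f)).card =
          (S.filter (fun f => s(u, v) ≠ f ∧ ((s(u, v) : Set V) ∩ f).Nonempty)).card := by
        conv_rhs => rw [← hmap, Finset.filter_map, Finset.card_map]
        congr 1
        ext f
        simp [SimpleGraph.lineGraph_adj_iff_exists, Set.Nonempty, Subtype.ext_iff]
      have huv : u ≠ v := T.ne_of_adj heT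
      have h1 := edeg_add_edeg huv heS
      have h2 := hodd u v heS
      rw [hcard]
      rw [Nat.odd_iff] at *
      rw [Nat.odd_iff] at h2
      omega
  · conv_rhs => rw [← hmap, Finset.card_map]

/-- If `T` is a tree of order `n ≥ 2`, then `f_o(L(T)) ≥ f(n)`, where `f(n) = ⌈n/2⌉` if
`n ≡ 0, 3 (mod 4)` and `f(n) = ⌊(n-1)/2⌋` if `n ≡ 1, 2 (mod 4)`. -/
theorem fo_lineGraph_tree {V : Type*} [Fintype V] (T : SimpleGraph V)
    (hT : T.IsTree) (hn : 2 ≤ Fintype.card V) :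
    fo T.lineGraph ≥
      (if Fintype.card V % 4 = 0 ∨ Fintype.card V % 4 = 3 then
        (Fintype.card V + 1) / 2 else (Fintype.card V - 1) / 2) := by
  obtain ⟨r⟩ := hT.connected.nonempty
  obtain ⟨b, S, ℓ, h1, -, h3, h4, h5, h6, h7, h8⟩ :=
    (exists_RT_univ hT.connected r).rootProfile.childType.ach
  have hℓ : ∀ v, Odd (edeg S v) ↔ ℓ v = true := by
    intro v
    by_cases hv : v = r
    · rw [hv, h5, h3]
    · exact h4 v (Finset.mem_univ v) hv
  have hle : S.card ≤ fo T.lineGraph := by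
    refine le_fo_lineGraph h1 fun u v huv => ?_
    rw [hℓ, hℓ, ← Bool.eq_iff_iff]
    exact h6 u v huv
  -- `|S|` is even, which sharpens `|S| ≥ (n - 2) / 2` to the stated bound.
  have heven : S.card % 2 = 0 := by
    rw [← Nat.even_iff, ← Nat.not_odd_iff_even, h7]
    cases b <;> simp
  rw [Finset.card_univ] at h8
  split_ifs <;> omega
end

section
/- If G is a finite simple graph with m ≥ 2 edges in which every connected component has at least 3 vertices, then f_o(L(G)) ≥ m/χ(L(G)), where χ(L(G)) is the chromatic number of the line graph of G; equivalently, χ(L(G)) · f_o(L(G)) ≥ m. -/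
/-!
An odd induced subgraph of `L(G)` is a set `F` of edges of `G` such that every edge `uv ∈ F` joins a
vertex of odd `F`-degree to a vertex of even `F`-degree, since `uv` meets `deg u + deg v - 2` other
edges of `F`. Write `D = χ(L(G))`. It suffices to find in each component, with vertex set `U` and
`n = |U| ≥ 3`, such a set `F` with `D |F| ≥ |E(G[U])|`, and to take the union.

*Lower bound for `F`* (`Conn.good`). Take a spanning tree with classes `A`, `B`, `|A| ≤ |B|`. If `|B|`
is even, a `B`-join in the tree has odd degrees exactly on `B`, hence is admissible and has at least
`|B|` edges. If `|B|` is odd, `B` contains a leaf, which is deleted first. So `|F| ≥ 2⌊(n + 1) / 4⌋`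
can be achieved.

*Upper bound for the edges* (`IsCol.card_le`). Colour classes are matchings, so
`|E(G[U])| ≤ D ⌊n / 2⌋`. The two bounds settle everything but `n = 4j + 2` with more than `2jD`
edges, where `2j + 2` edges in `F` are needed instead of `2j`.

*The case `n = 4j + 2`* (`good_two_mod_four`). By induction on `j`, it is enough to split off a
connected triple `W` with connected complement (`Split3`: the parts give `2` and `2j`), or a
connected quadruple `W` with connected complement which meets fewer than `2D` edges (`Split4`: the
complement satisfies the induction hypothesis). Such a `W` is found at the end `p₁ p₂ p₃ p₄ …` of a
longest path of `G[U]` (`PathEnd`): what is separated from the path by `p₁, p₂, p₃` has a very simple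
shape, and `W` consists of `p₂`, `p₃` or a neighbour of `p₃`, along with vertices near it. The few
configurations without such a `W` contain vertices of small degree next to one of large degree,
which contradicts `|E(G[U])| > 2jD` because all degrees are at most `D` and sum to `2|E(G[U])|`.
-/

open scoped Classical

namespace OddLine

set_option linter.unusedSectionVars false

variable {V : Type*} [Fintype V]

/-- Number of edges of the edge set `F` at the vertex `v`. -/
noncomputable def deg (F : Finset (Sym2 V)) (v : V) : ℕ := (F.filter (fun e => v ∈ e)).card

/-- The vertex set `U` induces a connected subgraph of `G`, phrased as: a nonempty part of `U`
which no edge of `G[U]` leaves is all of `U`. -/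
def Conn (G : SimpleGraph V) (U : Finset V) : Prop :=
  U.Nonempty ∧ ∀ X ⊆ U, X.Nonempty → (∀ x ∈ X, ∀ y ∈ U, G.Adj x y → y ∈ X) → X = U

/-- `G[U]` has a set `F` of at least `k` edges, each of which joins a vertex of odd `F`-degree to
a vertex of even `F`-degree. Such sets are the vertex sets of odd induced subgraphs of the line
graph. -/
def Good (G : SimpleGraph V) (U : Finset V) (k : ℕ) : Prop :=
  ∃ F : Finset (Sym2 V), (∀ u v, s(u, v) ∈ F →
    G.Adj u v ∧ u ∈ U ∧ v ∈ U ∧ Odd (deg F u + deg F v)) ∧ k ≤ F.card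

/-- The edges of `G[U]`. -/
noncomputable def E (G : SimpleGraph V) (U : Finset V) : Finset (Sym2 V) :=
  Finset.univ.filter (fun e => e ∈ G.edgeSet ∧ ∀ v ∈ e, v ∈ U)

variable {G : SimpleGraph V}

lemma mem_E {U : Finset V} {u v : V} : s(u, v) ∈ E G U ↔ G.Adj u v ∧ u ∈ U ∧ v ∈ U := by
  simp [E]

/-! ### Connected vertex sets -/

lemma Conn.of_root {U : Finset V} {c : V} (hc : c ∈ U)
    (h : ∀ X ⊆ U, c ∈ X → (∀ x ∈ X, ∀ y ∈ U, G.Adj x y → y ∈ X) → X = U) : Conn G U := by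
  refine ⟨⟨c, hc⟩, fun X hX hne hcl => ?_⟩
  by_cases hcX : c ∈ X
  · exact h X hX hcX hcl
  · have := h (U \ X) Finset.sdiff_subset (by simp [hc, hcX]) (by
      intro x hx y hy hxy
      simp only [Finset.mem_sdiff] at hx ⊢
      exact ⟨hy, fun hyX => hx.2 (hcl y hyX x hx.1 hxy.symm)⟩)
    obtain ⟨x, hx⟩ := hne
    have h2 : x ∈ U \ X := by rw [this]; exact hX hx
    simp [hx] at h2

lemma conn_singleton (G : SimpleGraph V) (v : V) : Conn G {v} := by
  refine ⟨by simp, fun X hX hne _ => ?_⟩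
  exact (Finset.subset_singleton_iff.1 hX).resolve_left hne.ne_empty

lemma Conn.exists_edge {U U' : Finset V} (h : Conn G U) (hs : U' ⊆ U) (hne : U'.Nonempty)
    (hU : U' ≠ U) : ∃ x ∈ U', ∃ y ∈ U, y ∉ U' ∧ G.Adj x y := by
  by_contra! hcon
  exact hU (h.2 U' hs hne fun x hx y hy hxy => by
    by_contra hy'
    exact hcon x hx y hy hy' hxy)

lemma Conn.insert_adj {U : Finset V} (h : Conn G U) {x y : V} (hx : x ∈ U) (hxy : G.Adj x y) :
    Conn G (insert y U) := by
  refine Conn.of_root (c := y) (by simp) fun X hX hyX hcl => ?_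
  have hxX : x ∈ X := hcl y hyX x (by simp [hx]) hxy.symm
  have h1 : X ∩ U = U := h.2 _ Finset.inter_subset_right ⟨x, by simp [hxX, hx]⟩ (by
    intro a ha b hb hab
    simp only [Finset.mem_inter] at ha ⊢
    exact ⟨hcl a ha.1 b (by simp [hb]) hab, hb⟩)
  refine hX.antisymm fun a ha => ?_
  rcases Finset.mem_insert.1 ha with rfl | ha
  · exact hyX
  · exact (Finset.mem_inter.1 (h1.symm ▸ ha)).1

/-- A connected set can be built up from a single vertex by adding one neighbour at a time. -/
lemma Conn.induction {U : Finset V} (h : Conn G U) {P : Finset V → Prop}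
    (h0 : ∀ v, P {v})
    (hs : ∀ U' ⊆ U, ∀ x ∈ U', ∀ y ∈ U, y ∉ U' → G.Adj x y → P U' → P (insert y U')) : P U := by
  obtain ⟨v, hv⟩ := h.1
  have key : ∀ k, k < U.card → ∃ U' ⊆ U, U'.card = k + 1 ∧ P U' := by
    intro k
    induction k with
    | zero => exact fun _ => ⟨{v}, by simpa using hv, by simp, h0 v⟩
    | succ k ih =>
      intro hk
      obtain ⟨U', hU', hc, hP⟩ := ih (by omega)
      obtain ⟨x, hx, y, hy, hy', hxy⟩ := h.exists_edge hU'
        (Finset.card_pos.1 (by omega)) (by rintro rfl; omega)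
      exact ⟨insert y U', Finset.insert_subset hy hU', by simp [hy', hc],
        hs U' hU' x hx y hy hy' hxy hP⟩
  have hpos := Finset.card_pos.2 h.1
  obtain ⟨U', hU', hc, hP⟩ := key (U.card - 1) (by omega)
  rwa [Finset.eq_of_subset_of_card_le hU' (by omega)] at hP

/-- Deleting a set `W` which is attached to the rest at a single vertex keeps connectedness. -/
lemma Conn.sdiff_of_attach {U W : Finset V} (h : Conn G U) {c : V} (hc : c ∈ U) (hcW : c ∉ W)
    (hW : ∀ x ∈ W, ∀ y ∈ U, y ∉ W → G.Adj x y → y = c) : Conn G (U \ W) := by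
  refine Conn.of_root (c := c) (by simp [hc, hcW]) fun X hX hcX hcl => ?_
  have h1 : X ∪ (U ∩ W) = U := h.2 _
    (Finset.union_subset (hX.trans Finset.sdiff_subset) Finset.inter_subset_left)
    ⟨c, by simp [hcX]⟩ (by
      intro x hx y hy hxy
      by_cases hyW : y ∈ W
      · simp [hy, hyW]
      · rcases Finset.mem_union.1 hx with hx | hx
        · exact Finset.mem_union_left _ (hcl x hx y (by simp [hy, hyW]) hxy)
        · have := hW x (Finset.mem_inter.1 hx).2 y hy hyW hxy
          subst this
          exact Finset.mem_union_left _ hcX)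
  refine hX.antisymm fun a ha => ?_
  simp only [Finset.mem_sdiff] at ha
  have h2 : a ∈ X ∪ (U ∩ W) := h1.symm ▸ ha.1
  simpa [ha.2] using h2

/-- The component of `p` in `G[U]`. -/
lemma exists_component (G : SimpleGraph V) {U : Finset V} {p : V} (hp : p ∈ U) :
    ∃ R ⊆ U, p ∈ R ∧ Conn G R ∧ ∀ x ∈ R, ∀ y ∈ U, G.Adj x y → y ∈ R := by
  obtain ⟨R, hR, hmax⟩ := Finset.exists_max_image
    (Finset.univ.filter fun R : Finset V => R ⊆ U ∧ p ∈ R ∧ Conn G R) Finset.card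
    ⟨{p}, by simp [hp, conn_singleton]⟩
  simp only [Finset.mem_filter, Finset.mem_univ, true_and] at hR hmax
  refine ⟨R, hR.1, hR.2.1, hR.2.2, fun x hx y hy hxy => ?_⟩
  by_contra hyR
  have := hmax (insert y R) ⟨Finset.insert_subset hy hR.1, by simp [hR.2.1],
    hR.2.2.insert_adj hx hxy⟩
  rw [Finset.card_insert_of_notMem hyR] at this
  omega

/-! ### Counting edges -/

lemma sum_deg (F : Finset (Sym2 V)) (B : Finset V) :
    ∑ v ∈ B, deg F v = ∑ e ∈ F, (B.filter (fun v => v ∈ e)).card := by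
  simp only [deg]
  exact Finset.sum_card_bipartiteAbove_eq_sum_card_bipartiteBelow (fun v e => v ∈ e)

lemma sum_deg_eq_two_mul {F : Finset (Sym2 V)} {U : Finset V} (hF : F ⊆ E G U) :
    ∑ v ∈ U, deg F v = 2 * F.card := by
  rw [sum_deg, Finset.sum_const_nat (m := 2), mul_comm]
  intro e he
  induction e with
  | h a b =>
    have := mem_E.1 (hF he)
    rw [Finset.card_eq_two]
    refine ⟨a, b, this.1.ne, ?_⟩
    ext x
    simp only [Finset.mem_filter, Sym2.mem_iff, Finset.mem_insert, Finset.mem_singleton]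
    constructor
    · exact fun h => h.2
    · rintro (rfl | rfl) <;> simp [this.2.1, this.2.2]

lemma deg_le {U X : Finset V} {v : V} (hX : ∀ y ∈ U, G.Adj v y → y ∈ X) :
    deg (E G U) v ≤ X.card := by
  refine (Finset.card_le_card (t := X.image fun y => s(v, y)) ?_).trans Finset.card_image_le
  intro e he
  simp only [Finset.mem_filter] at he
  obtain ⟨y, rfl⟩ := he.2
  have := mem_E.1 he.1
  exact Finset.mem_image_of_mem _ (hX y this.2.2 this.1)

lemma le_deg {U X : Finset V} {v : V} (hv : v ∈ U) (hX : X ⊆ U) (hadj : ∀ y ∈ X, G.Adj v y) :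
    X.card ≤ deg (E G U) v := by
  rw [← Finset.card_image_of_injective X (f := fun y => s(v, y))
    (fun a b hab => Sym2.congr_right.1 hab)]
  refine Finset.card_le_card fun e he => ?_
  obtain ⟨y, hy, rfl⟩ := Finset.mem_image.1 he
  simp [mem_E, hv, hX hy, hadj y hy]

/-! ### Edge sets joining odd to even vertices -/

lemma Good.mono {U U' : Finset V} {k k' : ℕ} (h : Good G U k) (hU : U ⊆ U') (hk : k' ≤ k) :
    Good G U' k' := by
  obtain ⟨F, hF, hc⟩ := h
  exact ⟨F, fun u v huv => ⟨(hF u v huv).1, hU (hF u v huv).2.1, hU (hF u v huv).2.2.1,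
    (hF u v huv).2.2.2⟩, hk.trans hc⟩

lemma deg_union_left {F₁ F₂ : Finset (Sym2 V)} {v : V} (h : ∀ e ∈ F₂, v ∉ e) :
    deg (F₁ ∪ F₂) v = deg F₁ v := by
  rw [deg, deg, Finset.filter_union, Finset.filter_eq_empty_iff.2 (fun e he => h e he),
    Finset.union_empty]

lemma Good.union {U₁ U₂ : Finset V} {k₁ k₂ : ℕ} (h₁ : Good G U₁ k₁) (h₂ : Good G U₂ k₂)
    (hd : Disjoint U₁ U₂) : Good G (U₁ ∪ U₂) (k₁ + k₂) := by
  obtain ⟨F₁, hF₁, hc₁⟩ := h₁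
  obtain ⟨F₂, hF₂, hc₂⟩ := h₂
  have mem₁ : ∀ e ∈ F₁, ∀ v ∈ e, v ∈ U₁ := by
    rintro e he v ⟨w, rfl⟩
    exact (hF₁ _ _ he).2.1
  have mem₂ : ∀ e ∈ F₂, ∀ v ∈ e, v ∈ U₂ := by
    rintro e he v ⟨w, rfl⟩
    exact (hF₂ _ _ he).2.1
  have hdis : ∀ v, v ∈ U₁ → v ∉ U₂ := fun v h1 h2 => Finset.disjoint_left.1 hd h1 h2
  have d₁ : ∀ v ∈ U₁, deg (F₁ ∪ F₂) v = deg F₁ v := fun v hv =>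
    deg_union_left fun e he hve => hdis v hv (mem₂ e he v hve)
  have d₂ : ∀ v ∈ U₂, deg (F₁ ∪ F₂) v = deg F₂ v := fun v hv => by
    rw [Finset.union_comm]
    exact deg_union_left fun e he hve => hdis v (mem₁ e he v hve) hv
  refine ⟨F₁ ∪ F₂, fun u v huv => ?_, ?_⟩
  · rcases Finset.mem_union.1 huv with h | h
    · obtain ⟨a, b, c, d⟩ := hF₁ u v h
      exact ⟨a, by simp [b], by simp [c], by rwa [d₁ u b, d₁ v c]⟩
    · obtain ⟨a, b, c, d⟩ := hF₂ u v h
      exact ⟨a, by simp [b], by simp [c], by rwa [d₂ u b, d₂ v c]⟩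
  · rw [Finset.card_union_of_disjoint]
    · omega
    · refine Finset.disjoint_left.2 fun e h1 h2 => ?_
      induction e with
      | h a b => exact hdis a (hF₁ a b h1).2.1 (hF₂ a b h2).2.1

/-- Existence of `T`-joins in a connected graph, for `T` of even size. -/
lemma Conn.exists_join {H : SimpleGraph V} {U : Finset V} (h : Conn H U) :
    ∀ T ⊆ U, Even T.card → ∃ F : Finset (Sym2 V), F ⊆ E H U ∧ ∀ v, Odd (deg F v) ↔ v ∈ T := by
  refine h.induction (P := fun U => ∀ T ⊆ U, Even T.card → ∃ F : Finset (Sym2 V),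
    F ⊆ E H U ∧ ∀ v, Odd (deg F v) ↔ v ∈ T) ?_ ?_
  · intro v T hT hev
    rcases Finset.subset_singleton_iff.1 hT with rfl | rfl
    · exact ⟨∅, by simp, by simp [deg]⟩
    · simp at hev
  · intro U' _ x hx y _ hy hxy ih T hT hev
    have hmono : E H U' ⊆ E H (insert y U') := by
      intro e he
      induction e with
      | h a b =>
        have := mem_E.1 he
        exact mem_E.2 ⟨this.1, by simp [this.2.1], by simp [this.2.2]⟩
    by_cases hyT : y ∈ T
    · have hxy' : x ≠ y := hxy.ne
      -- the edge `xy` serves `y`; at `x` it toggles the prescribed parity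
      have hT' : symmDiff (T.erase y) {x} ⊆ U' := by
        intro a ha
        rw [Finset.mem_symmDiff] at ha
        rcases ha with ha | ha
        · exact (Finset.mem_insert.1 (hT (Finset.mem_of_mem_erase ha.1))).resolve_left
            (Finset.ne_of_mem_erase ha.1)
        · rw [Finset.mem_singleton.1 ha.1]; exact hx
      have hcard : Even (symmDiff (T.erase y) {x}).card := by
        by_cases hxT : x ∈ T
        · have : symmDiff (T.erase y) {x} = (T.erase y).erase x := by
            ext a; simp only [Finset.mem_symmDiff, Finset.mem_erase, Finset.mem_singleton]
            grind
          rw [this, Finset.card_erase_of_mem (by simp [hxT, hxy']), Finset.card_erase_of_mem hyT]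
          have : 2 ≤ T.card := Finset.one_lt_card.2 ⟨x, hxT, y, hyT, hxy'⟩
          grind
        · have : symmDiff (T.erase y) {x} = insert x (T.erase y) := by
            ext a; simp only [Finset.mem_symmDiff, Finset.mem_erase, Finset.mem_singleton,
              Finset.mem_insert]
            grind
          rw [this, Finset.card_insert_of_notMem (by simp [hxT]), Finset.card_erase_of_mem hyT]
          have : 1 ≤ T.card := Finset.card_pos.2 ⟨y, hyT⟩
          rwa [Nat.sub_add_cancel this]
      obtain ⟨F, hF, hpar⟩ := ih _ hT' hcard
      have hyF : ∀ e ∈ F, y ∉ e := by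
        rintro e he ⟨b, rfl⟩
        exact hy (mem_E.1 (hF he)).2.1
      have hnot : s(x, y) ∉ F := fun hh => hyF _ hh (by simp)
      refine ⟨insert s(x, y) F, ?_, fun v => ?_⟩
      · refine Finset.insert_subset (mem_E.2 ⟨hxy, by simp [hx], by simp⟩) (hF.trans hmono)
      · by_cases hv : v ∈ s(x, y)
        · have : deg (insert s(x, y) F) v = deg F v + 1 := by
            rw [deg, Finset.filter_insert, if_pos hv, Finset.card_insert_of_notMem (by simp [hnot]),
              deg]
          rw [this, Nat.odd_add_one, hpar]
          rcases Sym2.mem_iff.1 hv with rfl | rfl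
          · simp [Finset.mem_symmDiff, hxy']
          · simp [Finset.mem_symmDiff, hxy'.symm, hyT]
        · have : deg (insert s(x, y) F) v = deg F v := by
            rw [deg, Finset.filter_insert, if_neg hv, deg]
          rw [this, hpar]
          have : v ≠ x ∧ v ≠ y := by simpa using hv
          simp [Finset.mem_symmDiff, this.1, this.2]
    · obtain ⟨F, hF, hpar⟩ := ih T
        (fun a ha => (Finset.mem_insert.1 (hT ha)).resolve_left (by rintro rfl; exact hyT ha)) hev
      exact ⟨F, hF.trans hmono, hpar⟩

/-- A spanning tree `H` of `G[U]`, together with its bipartition `(A, B)`. -/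
lemma Conn.exists_tree {U : Finset V} (h : Conn G U) :
    ∃ (H : SimpleGraph V) (A B : Finset V), H ≤ G ∧ Disjoint A B ∧ A ∪ B = U ∧
      (∀ u v, H.Adj u v → (u ∈ A ∧ v ∈ B) ∨ (u ∈ B ∧ v ∈ A)) ∧ Conn H U ∧
      (E H U).card + 1 ≤ U.card := by
  refine h.induction (P := fun U => ∃ (H : SimpleGraph V) (A B : Finset V),
    H ≤ G ∧ Disjoint A B ∧ A ∪ B = U ∧
      (∀ u v, H.Adj u v → (u ∈ A ∧ v ∈ B) ∨ (u ∈ B ∧ v ∈ A)) ∧ Conn H U ∧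
      (E H U).card + 1 ≤ U.card) ?_ ?_
  · intro v
    refine ⟨⊥, {v}, ∅, bot_le, by simp, by simp, by simp, conn_singleton _ _, ?_⟩
    have : E (⊥ : SimpleGraph V) {v} = ∅ := by
      ext e
      simp [E]
    simp [this]
  · rintro U' - x hx y - hy hxy ⟨H, A, B, hHG, hdis, hU, hbip, hconn, hcard⟩
    have hyA : y ∉ A := fun hh => hy (hU ▸ Finset.mem_union_left _ hh)
    have hyB : y ∉ B := fun hh => hy (hU ▸ Finset.mem_union_right _ hh)
    have hadj : ∀ u v, (H ⊔ SimpleGraph.edge x y).Adj u v →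
        H.Adj u v ∨ (u = x ∧ v = y) ∨ (u = y ∧ v = x) := by
      intro u v huv
      rw [SimpleGraph.sup_adj, SimpleGraph.edge_adj] at huv
      tauto
    have hle : H ⊔ SimpleGraph.edge x y ≤ G := by
      intro u v huv
      rcases hadj u v huv with h | ⟨rfl, rfl⟩ | ⟨rfl, rfl⟩
      · exact hHG h
      · exact hxy
      · exact hxy.symm
    have hc : Conn (H ⊔ SimpleGraph.edge x y) (insert y U') := by
      refine Conn.insert_adj (x := x) ⟨hconn.1, fun X hX hne hcl => hconn.2 X hX hne ?_⟩ hx ?_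
      · exact fun a ha b hb hab => hcl a ha b hb (Or.inl hab)
      · rw [SimpleGraph.sup_adj, SimpleGraph.edge_adj]
        exact Or.inr ⟨by simp, hxy.ne⟩
    have hE : (E (H ⊔ SimpleGraph.edge x y) (insert y U')).card + 1 ≤ (insert y U').card := by
      have hsub : E (H ⊔ SimpleGraph.edge x y) (insert y U') ⊆ insert s(x, y) (E H U') := by
        intro e he
        induction e with
        | h a b =>
          obtain ⟨hab, ha, hb⟩ := mem_E.1 he
          rcases hadj a b hab with h | ⟨rfl, rfl⟩ | ⟨rfl, rfl⟩
          · refine Finset.mem_insert_of_mem (mem_E.2 ⟨h, ?_⟩)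
            rw [← hU]
            simp only [Finset.mem_union]
            have := hbip a b h
            tauto
          · simp
          · simp [Sym2.eq_swap]
      have := (Finset.card_le_card hsub).trans (Finset.card_insert_le _ _)
      rw [Finset.card_insert_of_notMem hy]
      omega
    rw [← hU, Finset.mem_union] at hx
    rcases hx with hx | hx
    · refine ⟨_, A, insert y B, hle, by simp [hyA, hdis], by rw [Finset.union_insert, hU],
        fun u v huv => ?_, hc, hE⟩
      have := hbip u v
      rcases hadj u v huv with h | ⟨rfl, rfl⟩ | ⟨rfl, rfl⟩
      · simp only [Finset.mem_insert]; tauto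
      · simp [hx]
      · simp [hx]
    · refine ⟨_, insert y A, B, hle, by simp [hyB, hdis], by rw [Finset.insert_union, hU],
        fun u v huv => ?_, hc, hE⟩
      have := hbip u v
      rcases hadj u v huv with h | ⟨rfl, rfl⟩ | ⟨rfl, rfl⟩
      · simp only [Finset.mem_insert]; tauto
      · simp [hx]
      · simp [hx]

/-- In a connected bipartite graph with an even colour class `B`, a `B`-join has odd degrees on
`B`, even degrees off `B`, and at least `#B` edges. -/
lemma good_of_bipartite {H : SimpleGraph V} {U A B : Finset V} (hH : H ≤ G) (hconn : Conn H U)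
    (hdis : Disjoint A B) (hB : B ⊆ U)
    (hbip : ∀ u ∈ U, ∀ v ∈ U, H.Adj u v → (u ∈ A ∧ v ∈ B) ∨ (u ∈ B ∧ v ∈ A))
    (hev : Even B.card) : Good G U B.card := by
  obtain ⟨F, hF, hpar⟩ := hconn.exists_join B hB hev
  have hAB : ∀ v, v ∈ A → v ∉ B := fun v h1 h2 => Finset.disjoint_left.1 hdis h1 h2
  refine ⟨F, fun u v huv => ?_, ?_⟩
  · obtain ⟨h1, h2, h3⟩ := mem_E.1 (hF huv)
    refine ⟨hH h1, h2, h3, ?_⟩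
    have hu := hpar u
    have hv := hpar v
    rcases hbip u h2 v h3 h1 with ⟨ha, hb⟩ | ⟨hb, ha⟩
    · have := hAB u ha
      have e1 : Even (deg F u) := by rw [← Nat.not_odd_iff_even]; tauto
      exact e1.add_odd (hv.2 hb)
    · have := hAB v ha
      have e1 : Even (deg F v) := by rw [← Nat.not_odd_iff_even]; tauto
      exact (hu.2 hb).add_even e1
  · have h1 : ∑ v ∈ B, deg F v = F.card := by
      rw [sum_deg, Finset.sum_const_nat (m := 1), mul_one]
      intro e he
      induction e with
      | h a b =>
        obtain ⟨h1, h2, h3⟩ := mem_E.1 (hF he)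
        rw [Finset.card_eq_one]
        rcases hbip a h2 b h3 h1 with ⟨ha, hb⟩ | ⟨hb, ha⟩
        · refine ⟨b, ?_⟩
          have := hAB a ha
          ext x; simp only [Finset.mem_filter, Sym2.mem_iff, Finset.mem_singleton]
          grind
        · refine ⟨a, ?_⟩
          have := hAB b ha
          ext x; simp only [Finset.mem_filter, Sym2.mem_iff, Finset.mem_singleton]
          grind
    rw [← h1, Finset.card_eq_sum_ones]
    exact Finset.sum_le_sum fun v hv => ((hpar v).2 hv).pos

/-- The same with a spanning tree: if the larger class `B` is odd, it contains a vertex of degree at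
most one, because the degrees over `B` sum to at most `|U| - 1 < 2|B|`; this vertex is deleted. -/
lemma good_of_tree {H : SimpleGraph V} {U A B : Finset V} (hH : H ≤ G) (hconn : Conn H U)
    (hdis : Disjoint A B) (hU : A ∪ B = U)
    (hbip : ∀ u v, H.Adj u v → (u ∈ A ∧ v ∈ B) ∨ (u ∈ B ∧ v ∈ A))
    (hcard : (E H U).card + 1 ≤ U.card) (hle : A.card ≤ B.card) :
    Good G U (2 * (B.card / 2)) := by
  have hBU : B ⊆ U := hU ▸ Finset.subset_union_right
  have hAB : ∀ v, v ∈ A → v ∉ B := fun v h1 h2 => Finset.disjoint_left.1 hdis h1 h2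
  rcases Nat.even_or_odd B.card with hev | hodd
  · have := good_of_bipartite hH hconn hdis hBU (fun u _ v _ => hbip u v) hev
    exact this.mono subset_rfl (by omega)
  · have hUc : U.card = A.card + B.card := by rw [← hU, Finset.card_union_of_disjoint hdis]
    have hsum : ∑ v ∈ B, deg (E H U) v < ∑ v ∈ B, 2 := by
      have h1 : ∑ v ∈ B, deg (E H U) v ≤ (E H U).card := by
        rw [sum_deg, Finset.card_eq_sum_ones]
        refine Finset.sum_le_sum fun e he => ?_
        induction e with
        | h a b =>
          rw [Finset.card_le_one]
          have := hbip a b (mem_E.1 he).1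
          intro x hx z hz
          simp only [Finset.mem_filter, Sym2.mem_iff] at hx hz
          grind
      simp only [Finset.sum_const, smul_eq_mul]
      omega
    obtain ⟨b, hb, hdeg⟩ := Finset.exists_lt_of_sum_lt hsum
    have huniq : ∀ x z, x ∈ U → z ∈ U → H.Adj b x → H.Adj b z → x = z := by
      intro x z hx hz hbx hbz
      by_contra hne
      have := le_deg (G := H) (U := U) (X := {x, z}) (hBU hb)
        (by intro a; simp; rintro (rfl | rfl) <;> assumption)
        (by intro a; simp; rintro (rfl | rfl) <;> assumption)
      rw [Finset.card_pair hne] at this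
      omega
    by_cases hUb : U = {b}
    · refine Good.mono (k := 0) ⟨∅, by simp, by simp⟩ subset_rfl ?_
      have : U.card = 1 := by rw [hUb]; simp
      omega
    · have hc : Conn H (U \ {b}) := by
        obtain ⟨x, hx, y, hy, hy', hxy⟩ := hconn.exists_edge (U' := {b}) (by simpa using hBU hb)
          (by simp) (Ne.symm hUb)
        rw [Finset.mem_singleton] at hx
        subst hx
        refine hconn.sdiff_of_attach (c := y) hy hy' fun a ha z hz _ haz => ?_
        rw [Finset.mem_singleton] at ha
        subst ha
        exact huniq z y hz hy haz hxy
      have hcB : (B.erase b).card = B.card - 1 := Finset.card_erase_of_mem hb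
      have := good_of_bipartite (A := A) (B := B.erase b) hH hc
        (hdis.mono_right (Finset.erase_subset _ _))
        (by intro a ha; simp only [Finset.mem_erase] at ha; simp [ha.1, hBU ha.2])
        (by
          intro u hu v hv huv
          simp only [Finset.mem_sdiff, Finset.mem_singleton] at hu hv
          have := hbip u v huv
          simp only [Finset.mem_erase]
          tauto)
        (by rw [hcB]; exact Nat.Odd.sub_odd hodd odd_one)
      refine this.mono Finset.sdiff_subset ?_
      rw [hcB]
      grind

/-- The larger class of a spanning tree has at least `⌈|U| / 2⌉` vertices. -/
lemma Conn.good {U : Finset V} (h : Conn G U) : Good G U (2 * ((U.card + 1) / 4)) := by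
  obtain ⟨H, A, B, hH, hdis, hU, hbip, hconn, hcard⟩ := h.exists_tree
  have hUc : U.card = A.card + B.card := by rw [← hU, Finset.card_union_of_disjoint hdis]
  rcases le_total A.card B.card with hle | hle
  · exact (good_of_tree hH hconn hdis hU hbip hcard hle).mono subset_rfl (by omega)
  · exact (good_of_tree hH hconn hdis.symm (by rw [Finset.union_comm, hU])
      (fun u v huv => (hbip u v huv).symm) hcard hle).mono subset_rfl (by omega)

/-! ### The end of a longest path -/

/-- `l` lists the vertices of a path of `G[U]`. -/
def IsPth (G : SimpleGraph V) (U : Finset V) (l : List V) : Prop :=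
  l.Nodup ∧ l.IsChain G.Adj ∧ ∀ x ∈ l, x ∈ U

lemma exists_longest {U : Finset V} {l₀ : List V} (h₀ : IsPth G U l₀) :
    ∃ l, IsPth G U l ∧ l₀.length ≤ l.length ∧ ∀ l', IsPth G U l' → l'.length ≤ l.length := by
  have hb : ∀ l', IsPth G U l' → l'.length ≤ U.card := fun l' h => by
    rw [← List.toFinset_card_of_nodup h.1]
    exact Finset.card_le_card fun x hx => h.2.2 x (List.mem_toFinset.1 hx)
  have hne : ∃ n l, IsPth G U l ∧ l.length = n := ⟨_, l₀, h₀, rfl⟩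
  obtain ⟨l, hl, hlen⟩ := Nat.findGreatest_spec
    (P := fun n => ∃ l, IsPth G U l ∧ l.length = n) (hb l₀ h₀) ⟨l₀, h₀, rfl⟩
  have hmax : ∀ l', IsPth G U l' → l'.length ≤ l.length := fun l' h' => by
    rw [hlen]
    exact Nat.le_findGreatest (hb l' h') ⟨l', h', rfl⟩
  exact ⟨l, hl, hmax _ h₀, hmax⟩

/-- What a longest path `p₁p₂p₃p₄…` of `G[U]` reveals about its end: `R` is the component of
`p₄` after deleting `p₁, p₂, p₃`, and `O` is the union of the other components. The fields `no1`,
`no2`, `no3` hold because a violation would give a longer path, and `att` follows from these and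
connectedness: `O` is attached at `p₂` by single vertices only, and at `p₃` by trees of depth at
most two or triangles. -/
structure PathEnd (G : SimpleGraph V) (U : Finset V) (p₁ p₂ p₃ p₄ : V) (R O : Finset V) :
    Prop where
  mem : ∀ x, x ∈ U ↔ x = p₁ ∨ x = p₂ ∨ x = p₃ ∨ x ∈ R ∨ x ∈ O
  ne12 : p₁ ≠ p₂
  ne13 : p₁ ≠ p₃
  ne23 : p₂ ≠ p₃
  R1 : p₁ ∉ R
  R2 : p₂ ∉ R
  R3 : p₃ ∉ R
  O1 : p₁ ∉ O
  O2 : p₂ ∉ O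
  O3 : p₃ ∉ O
  RO : ∀ x ∈ R, x ∉ O
  p4R : p₄ ∈ R
  a12 : G.Adj p₁ p₂
  a23 : G.Adj p₂ p₃
  a34 : G.Adj p₃ p₄
  connR : Conn G R
  noRO : ∀ x ∈ R, ∀ y ∈ O, ¬ G.Adj x y
  no1 : ∀ o ∈ O, ¬ G.Adj p₁ o
  no2 : ∀ o ∈ O, ∀ o' ∈ O, G.Adj p₂ o → ¬ G.Adj o o'
  no3 : ∀ o ∈ O, ∀ o' ∈ O, ∀ o'' ∈ O, G.Adj p₃ o → G.Adj o o' → G.Adj o' o'' → o'' = o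
  att : ∀ o ∈ O, G.Adj p₂ o ∨ G.Adj p₃ o ∨ ∃ a ∈ O, G.Adj p₃ a ∧ G.Adj a o

lemma exists_pathEnd {U : Finset V} (h : Conn G U) {l₀ : List V} (h₀ : IsPth G U l₀)
    (h4 : 4 ≤ l₀.length) : ∃ p₁ p₂ p₃ p₄ R O, PathEnd G U p₁ p₂ p₃ p₄ R O := by
  obtain ⟨l, hl, hlen, hmax⟩ := exists_longest h₀
  match l, hl, hmax, h4.trans hlen with
  | p₁ :: p₂ :: p₃ :: p₄ :: q, hl, hmax, _ =>
  obtain ⟨hnd, hch, hU⟩ := hl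
  simp only [List.nodup_cons, List.mem_cons, not_or] at hnd
  obtain ⟨⟨n12, n13, n14, n1q⟩, ⟨n23, n24, n2q⟩, ⟨n34, n3q⟩, n4q, hqnd⟩ := hnd
  simp only [List.isChain_cons_cons] at hch
  obtain ⟨a12, a23, a34, hq⟩ := hch
  have u1 : p₁ ∈ U := hU _ (by simp)
  have u2 : p₂ ∈ U := hU _ (by simp)
  have u3 : p₃ ∈ U := hU _ (by simp)
  have u4 : p₄ ∈ U := hU _ (by simp)
  obtain ⟨R, hRU, h4R, hRc, hRcl⟩ := exists_component G (U := U \ {p₁, p₂, p₃}) (p := p₄)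
    (by simp [u4, Ne.symm n14, Ne.symm n24, Ne.symm n34])
  have hqR : ∀ x ∈ q, x ∈ R := by
    have hqU : ∀ x ∈ q, x ∈ U \ {p₁, p₂, p₃} := by
      intro x hx
      have : x ∈ U := hU x (by simp [hx])
      simp only [Finset.mem_sdiff, Finset.mem_insert, Finset.mem_singleton, not_or]
      refine ⟨this, ?_, ?_, ?_⟩ <;> rintro rfl <;> contradiction
    have aux : ∀ (q : List V) (p : V), p ∈ R → (p :: q).IsChain G.Adj →
        (∀ x ∈ q, x ∈ U \ {p₁, p₂, p₃}) → ∀ x ∈ q, x ∈ R := by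
      intro q
      induction q with
      | nil => simp
      | cons b q ih =>
        intro p hp hc hs x hx
        rw [List.isChain_cons_cons] at hc
        have hb : b ∈ R := hRcl p hp b (hs b (by simp)) hc.1
        rcases List.mem_cons.1 hx with rfl | hx
        · exact hb
        · exact ih b hb hc.2 (fun y hy => hs y (by simp [hy])) x hx
    exact aux q p₄ h4R hq hqU
  have hR : ∀ x ∈ R, x ∈ U ∧ x ≠ p₁ ∧ x ≠ p₂ ∧ x ≠ p₃ := fun x hx => by
    simpa using hRU hx
  set O := (U \ {p₁, p₂, p₃}) \ R with hO
  have hOm : ∀ x, x ∈ O ↔ (x ∈ U ∧ x ≠ p₁ ∧ x ≠ p₂ ∧ x ≠ p₃) ∧ x ∉ R := fun x => by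
    simp [hO]
  have hOq : ∀ x ∈ O, x ∈ U ∧ x ≠ p₁ ∧ x ≠ p₂ ∧ x ≠ p₃ ∧ x ≠ p₄ ∧ x ∉ q := fun x hx => by
    have := (hOm x).1 hx
    refine ⟨this.1.1, this.1.2.1, this.1.2.2.1, this.1.2.2.2, ?_, fun h => this.2 (hqR x h)⟩
    rintro rfl
    exact this.2 h4R
  have no1 : ∀ o ∈ O, ¬ G.Adj p₁ o := by
    intro o ho hadj
    have := hOq o ho
    have := hmax (o :: p₁ :: p₂ :: p₃ :: p₄ :: q) ⟨by simp; tauto, by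
      simp only [List.isChain_cons_cons]; exact ⟨hadj.symm, a12, a23, a34, hq⟩, by
      intro x hx
      rcases List.mem_cons.1 hx with rfl | hx
      · exact this.1
      · exact hU x hx⟩
    simp at this
  have no2 : ∀ o ∈ O, ∀ o' ∈ O, G.Adj p₂ o → ¬ G.Adj o o' := by
    intro o ho o' ho' h1 h2
    have t1 := hOq o ho
    have t2 := hOq o' ho'
    have := h2.ne
    have := hmax (o' :: o :: p₂ :: p₃ :: p₄ :: q) ⟨by simp; tauto, by
      simp only [List.isChain_cons_cons]; exact ⟨h2.symm, h1.symm, a23, a34, hq⟩, by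
      intro x hx
      simp only [List.mem_cons] at hx hU
      rcases hx with rfl | rfl | hx
      · exact t2.1
      · exact t1.1
      · exact hU x (Or.inr hx)⟩
    simp at this
  have no3 : ∀ o ∈ O, ∀ o' ∈ O, ∀ o'' ∈ O, G.Adj p₃ o → G.Adj o o' → G.Adj o' o'' → o'' = o := by
    intro o ho o' ho' o'' ho'' h1 h2 h3
    by_contra hne
    have t1 := hOq o ho
    have t2 := hOq o' ho'
    have t3 := hOq o'' ho''
    have e1 := h2.ne
    have e2 := h3.ne
    have := hmax (o'' :: o' :: o :: p₃ :: p₄ :: q) ⟨by simp; tauto, by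
      simp only [List.isChain_cons_cons]; exact ⟨h3.symm, h2.symm, h1.symm, a34, hq⟩, by
      intro x hx
      simp only [List.mem_cons] at hx hU
      rcases hx with rfl | rfl | rfl | hx
      · exact t3.1
      · exact t2.1
      · exact t1.1
      · exact hU x (Or.inr (Or.inr hx))⟩
    simp at this
  have noRO : ∀ x ∈ R, ∀ y ∈ O, ¬ G.Adj x y := by
    intro x hx y hy hxy
    exact ((hOm y).1 hy).2 (hRcl x hx y (by have := (hOm y).1 hy; simp [this.1]) hxy)
  refine ⟨p₁, p₂, p₃, p₄, R, O, ?_⟩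
  refine ⟨?_, n12, n13, n23, fun h => (hR _ h).2.1 rfl, fun h => (hR _ h).2.2.1 rfl,
    fun h => (hR _ h).2.2.2 rfl, fun h => (hOq _ h).2.1 rfl, fun h => (hOq _ h).2.2.1 rfl,
    fun h => (hOq _ h).2.2.2.1 rfl, fun x hx hxO => ((hOm x).1 hxO).2 hx, h4R, a12, a23, a34, hRc,
    noRO, no1, no2, no3, ?_⟩
  · intro x
    have := hR x
    have := hOm x
    constructor
    · tauto
    · rintro (rfl | rfl | rfl | h | h) <;> tauto
  · intro o ho
    by_contra hcon
    -- the vertices of `O` violating the claim would form a union of components of `G[U]`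
    set X := O.filter fun o => ¬ (G.Adj p₂ o ∨ G.Adj p₃ o ∨ ∃ a ∈ O, G.Adj p₃ a ∧ G.Adj a o)
    have hX : X = U := by
      refine h.2 X ?_ ⟨o, by simp only [X, Finset.mem_filter]; exact ⟨ho, hcon⟩⟩ ?_
      · intro x hx
        exact (hOq x (Finset.mem_filter.1 hx).1).1
      · intro x hx y hy hxy
        simp only [X, Finset.mem_filter] at hx
        obtain ⟨hxO, hxn⟩ := hx
        by_cases hyO : y ∈ O
        · simp only [X, Finset.mem_filter]
          refine ⟨hyO, ?_⟩
          rintro (h' | h' | ⟨a, ha, h1, h2⟩)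
          · exact no2 y hyO x hxO h' hxy.symm
          · exact hxn (Or.inr (Or.inr ⟨y, hyO, h', hxy.symm⟩))
          · have := no3 a ha y hyO x hxO h1 h2 hxy.symm
            subst this
            exact hxn (Or.inr (Or.inl h1))
        · exfalso
          by_cases hyR : y ∈ R
          · exact noRO y hyR x hxO hxy.symm
          · have := hOm y
            have : y = p₁ ∨ y = p₂ ∨ y = p₃ := by tauto
            rcases this with rfl | rfl | rfl
            · exact no1 x hxO hxy.symm
            · exact hxn (Or.inl hxy.symm)
            · exact hxn (Or.inr (Or.inl hxy.symm))
    have : p₁ ∈ X := by rw [hX]; exact u1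
    exact (hOq p₁ (Finset.mem_filter.1 this).1).2.1 rfl

/-! ### Splitting off three or four vertices -/

/-- For connectedness it suffices to reach all vertices from a connected part `R`. -/
lemma conn_of_core {U' R : Finset V} (hR : Conn G R) (hRU : R ⊆ U')
    (h : ∀ X, R ⊆ X → (∀ x ∈ X, ∀ y ∈ U', G.Adj x y → y ∈ X) → ∀ y ∈ U', y ∈ X) :
    Conn G U' := by
  obtain ⟨c, hc⟩ := hR.1
  refine Conn.of_root (hRU hc) fun X hX hcX hcl => hX.antisymm fun y hy => h X ?_ hcl y hy
  have : X ∩ R = R := hR.2 _ Finset.inter_subset_right ⟨c, by simp [hc, hcX]⟩ (by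
    intro x hx y hy hxy
    simp only [Finset.mem_inter] at hx ⊢
    exact ⟨hcl x hx.1 y (hRU hy) hxy, hy⟩)
  exact Finset.inter_eq_right.1 this

/-- A connected triple whose removal keeps `G[U]` connected. -/
def Split3 (G : SimpleGraph V) (U : Finset V) : Prop :=
  ∃ W ⊆ U, W.card = 3 ∧ Conn G W ∧ Conn G (U \ W)

/-- A connected quadruple whose removal keeps `G[U]` connected, and such that all edges it meets
are covered by two adjacent vertices. -/
def Split4 (G : SimpleGraph V) (U : Finset V) : Prop :=
  ∃ W ⊆ U, W.card = 4 ∧ Conn G W ∧ Conn G (U \ W) ∧ ∃ c₁ ∈ U, ∃ c₂ ∈ U, G.Adj c₁ c₂ ∧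
    ∀ x ∈ W, ∀ y ∈ U, G.Adj x y → x = c₁ ∨ x = c₂ ∨ y = c₁ ∨ y = c₂

lemma split3 {U : Finset V} {a b c : V} (ha : a ∈ U) (hb : b ∈ U) (hc : c ∈ U) (hab : a ≠ b)
    (h1 : G.Adj c a) (h2 : G.Adj c b) (hconn : Conn G (U \ {a, b, c})) : Split3 G U := by
  refine ⟨{a, b, c}, ?_, ?_, ?_, hconn⟩
  · intro x; simp only [Finset.mem_insert, Finset.mem_singleton]
    rintro (rfl | rfl | rfl) <;> assumption
  · have := h1.ne; have := h2.ne
    exact Finset.card_eq_three.2 ⟨a, b, c, hab, by tauto, by tauto, rfl⟩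
  · exact ((conn_singleton G c).insert_adj (by simp) h2).insert_adj (x := c) (by simp) h1

/-- The quadruple is the path `t - a - c - q`, its inner vertices `a`, `c` being the cover. -/
lemma split4 {U : Finset V} {t a c q : V} (ht : t ∈ U) (ha : a ∈ U) (hc : c ∈ U) (hq : q ∈ U)
    (htc : t ≠ c) (htq : t ≠ q) (haq : a ≠ q)
    (h1 : G.Adj a t) (h2 : G.Adj c a) (h3 : G.Adj c q)
    (nt : ∀ y ∈ U, G.Adj t y → y = a ∨ y = c) (nq : ∀ y ∈ U, G.Adj q y → y = c)
    (hconn : Conn G (U \ {t, q, a, c})) : Split4 G U := by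
  refine ⟨{t, q, a, c}, ?_, ?_, ?_, hconn, c, hc, a, ha, h2, ?_⟩
  · intro x; simp only [Finset.mem_insert, Finset.mem_singleton]
    rintro (rfl | rfl | rfl | rfl) <;> assumption
  · have := h1.ne; have := h2.ne; have := h3.ne
    rw [Finset.card_insert_of_notMem, Finset.card_insert_of_notMem, Finset.card_pair] <;>
    · simp; try tauto
  · exact (((conn_singleton G c).insert_adj (by simp) h2).insert_adj (x := c) (by simp)
      h3).insert_adj (x := a) (by simp) h1
  · intro x hx y hy hxy
    simp only [Finset.mem_insert, Finset.mem_singleton] at hx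
    have := nt y hy
    have := nq y hy
    rcases hx with rfl | rfl | rfl | rfl <;> tauto

section Ends

/-! Throughout, `D` bounds the degrees, and `hdef` says that the degrees of `G[U]` fall short of `D`
by less than `2D` in total; it is the form in which the assumption `|E(G[U])| > (|U| / 2 - 1) D` is
used. It rules out several vertices of small degree next to a vertex of large degree. -/

variable {U : Finset V} {D : ℕ}

lemma three_le (hlow : ∀ v, deg (E G U) v ≤ D) {v a b c : V} (hv : v ∈ U) (ha : a ∈ U)
    (hb : b ∈ U) (hc : c ∈ U) (hab : a ≠ b) (hac : a ≠ c) (hbc : b ≠ c) (h1 : G.Adj v a)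
    (h2 : G.Adj v b) (h3 : G.Adj v c) : 3 ≤ D := by
  refine le_trans ?_ (hlow v)
  rw [← Finset.card_eq_three.2 ⟨a, b, c, hab, hac, hbc, rfl⟩]
  apply le_deg hv
  · intro x; simp only [Finset.mem_insert, Finset.mem_singleton]
    rintro (rfl | rfl | rfl) <;> assumption
  · intro x; simp only [Finset.mem_insert, Finset.mem_singleton]
    rintro (rfl | rfl | rfl) <;> assumption

lemma four_le (hlow : ∀ v, deg (E G U) v ≤ D) {v a b c d : V} (hv : v ∈ U) (ha : a ∈ U)
    (hb : b ∈ U) (hc : c ∈ U) (hd : d ∈ U) (hab : a ≠ b) (hac : a ≠ c) (had : a ≠ d)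
    (hbc : b ≠ c) (hbd : b ≠ d) (hcd : c ≠ d) (h1 : G.Adj v a)
    (h2 : G.Adj v b) (h3 : G.Adj v c) (h4 : G.Adj v d) : 4 ≤ D := by
  refine le_trans ?_ (hlow v)
  have : ({a, b, c, d} : Finset V).card = 4 := by
    rw [Finset.card_insert_of_notMem, Finset.card_insert_of_notMem, Finset.card_pair hcd] <;>
    · simp; try tauto
  rw [← this]
  apply le_deg hv
  · intro x; simp only [Finset.mem_insert, Finset.mem_singleton]
    rintro (rfl | rfl | rfl | rfl) <;> assumption
  · intro x; simp only [Finset.mem_insert, Finset.mem_singleton]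
    rintro (rfl | rfl | rfl | rfl) <;> assumption

lemma deg_le_one {v a : V} (h : ∀ y ∈ U, G.Adj v y → y = a) : deg (E G U) v ≤ 1 := by
  simpa using deg_le (X := {a}) (fun y hy hvy => by simpa using h y hy hvy)

lemma deg_le_two {v a b : V} (h : ∀ y ∈ U, G.Adj v y → y = a ∨ y = b) :
    deg (E G U) v ≤ 2 :=
  (deg_le (X := {a, b}) (fun y hy hvy => by simpa using h y hy hvy)).trans Finset.card_le_two

/-- Three pendant vertices have too small a degree sum as soon as `D ≥ 3`. -/
lemma no_three_pendant
    (hdef : ∀ Z ⊆ U, Z.card * D < 2 * D + ∑ v ∈ Z, deg (E G U) v) (hD : 3 ≤ D)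
    {a b c a' b' c' : V} (ha : a ∈ U) (hb : b ∈ U) (hc : c ∈ U) (hab : a ≠ b) (hac : a ≠ c)
    (hbc : b ≠ c) (na : ∀ y ∈ U, G.Adj a y → y = a') (nb : ∀ y ∈ U, G.Adj b y → y = b')
    (nc : ∀ y ∈ U, G.Adj c y → y = c') : False := by
  have h := hdef {a, b, c} (by
    intro x; simp only [Finset.mem_insert, Finset.mem_singleton]
    rintro (rfl | rfl | rfl) <;> assumption)
  rw [Finset.card_eq_three.2 ⟨a, b, c, hab, hac, hbc, rfl⟩, Finset.sum_insert (by simp; tauto),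
    Finset.sum_pair hbc] at h
  have := deg_le_one na
  have := deg_le_one nb
  have := deg_le_one nc
  omega

lemma four_deg
    (hdef : ∀ Z ⊆ U, Z.card * D < 2 * D + ∑ v ∈ Z, deg (E G U) v)
    {a b c d : V} (ha : a ∈ U) (hb : b ∈ U) (hc : c ∈ U) (hd : d ∈ U) (hab : a ≠ b) (hac : a ≠ c)
    (had : a ≠ d) (hbc : b ≠ c) (hbd : b ≠ d) (hcd : c ≠ d) :
    4 * D < 2 * D + (deg (E G U) a + deg (E G U) b + deg (E G U) c + deg (E G U) d) := by
  have h := hdef {a, b, c, d} (by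
    intro x; simp only [Finset.mem_insert, Finset.mem_singleton]
    rintro (rfl | rfl | rfl | rfl) <;> assumption)
  have h4 : ({a, b, c, d} : Finset V).card = 4 := by
    rw [Finset.card_insert_of_notMem, Finset.card_insert_of_notMem, Finset.card_pair hcd] <;>
    · simp; try tauto
  rw [h4, Finset.sum_insert (by simp; tauto), Finset.sum_insert (by simp; tauto),
    Finset.sum_pair hcd] at h
  omega

variable {p₁ p₂ p₃ p₄ : V} {R O : Finset V}

/-- Some neighbour `a ∈ O` of `p₃` has at least two neighbours in `O`: these are pendant vertices at
`a`. There are not three of them, so they can be split off together with `a`. -/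
lemma PathEnd.case_cherry (P : PathEnd G U p₁ p₂ p₃ p₄ R O) (hU : Conn G U)
    (hlow : ∀ v, deg (E G U) v ≤ D)
    (hdef : ∀ Z ⊆ U, Z.card * D < 2 * D + ∑ v ∈ Z, deg (E G U) v)
    {a t t' : V} (ha : a ∈ O) (ha3 : G.Adj p₃ a) (ht : t ∈ O) (ht' : t' ∈ O)
    (hat : G.Adj a t) (hat' : G.Adj a t') (htt : t ≠ t') : Split3 G U := by
  have mO : ∀ x ∈ O, x ∈ U := fun x hx => by rw [P.mem]; tauto
  have m3 : p₃ ∈ U := by rw [P.mem]; tauto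
  have pend : ∀ s ∈ O, G.Adj a s → ∀ y ∈ U, G.Adj s y → y = a := by
    intro s hs has y hy hsy
    rcases (P.mem y).1 hy with rfl | rfl | rfl | hyR | hyO
    · exact (P.no1 s hs hsy.symm).elim
    · exact (P.no2 s hs a ha hsy.symm has.symm).elim
    · have e1 := P.no3 s hs a ha t ht hsy.symm has.symm hat
      have e2 := P.no3 s hs a ha t' ht' hsy.symm has.symm hat'
      exact (htt (e1.trans e2.symm)).elim
    · exact (P.noRO y hyR s hs hsy.symm).elim
    · exact P.no3 a ha s hs y hyO ha3 has hsy
  have na2 : ¬ G.Adj a p₂ := fun h => P.no2 a ha t ht h.symm hat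
  by_cases h3 : ∃ s ∈ O, G.Adj a s ∧ s ≠ t ∧ s ≠ t'
  · obtain ⟨s, hs, has, h1, h2⟩ := h3
    exact (no_three_pendant hdef
      (three_le hlow (mO a ha) (mO t ht) (mO t' ht') (mO s hs) htt h1.symm h2.symm hat hat' has)
      (mO t ht) (mO t' ht') (mO s hs) htt h1.symm h2.symm (pend t ht hat) (pend t' ht' hat')
      (pend s hs has)).elim
  · push Not at h3
    refine split3 (mO t ht) (mO t' ht') (mO a ha) htt hat hat'
      (hU.sdiff_of_attach (c := p₃) m3 ?_ ?_)
    · simp only [Finset.mem_insert, Finset.mem_singleton]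
      rintro (rfl | rfl | rfl) <;> exact P.O3 (by assumption)
    · intro x hx y hy hyW hxy
      simp only [Finset.mem_insert, Finset.mem_singleton, not_or] at hx hyW
      rcases hx with rfl | rfl | rfl
      · exact (hyW.2.2 (pend x ht hat y hy hxy)).elim
      · exact (hyW.2.2 (pend x ht' hat' y hy hxy)).elim
      · rcases (P.mem y).1 hy with rfl | rfl | rfl | hyR | hyO
        · exact (P.no1 x ha hxy.symm).elim
        · exact (na2 hxy).elim
        · rfl
        · exact (P.noRO y hyR x ha hxy.symm).elim
        · exact (hyW.2.1 (h3 y hyO hxy hyW.1)).elim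

/-- Some vertex of `O` is adjacent to `p₂`. Vertices of `O` adjacent to `p₂` but not to `p₃` are
pendant at `p₂`, so there are at most two of them; `p₂` is split off with two of its pendant or
otherwise dispensable neighbours. -/
lemma PathEnd.case_second (P : PathEnd G U p₁ p₂ p₃ p₄ R O)
    (hlow : ∀ v, deg (E G U) v ≤ D)
    (hdef : ∀ Z ⊆ U, Z.card * D < 2 * D + ∑ v ∈ Z, deg (E G U) v)
    {o : V} (ho : o ∈ O) (ho2 : G.Adj p₂ o) : Split3 G U := by
  have mO : ∀ x ∈ O, x ∈ U := fun x hx => by rw [P.mem]; tauto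
  have mR : ∀ x ∈ R, x ∈ U := fun x hx => by rw [P.mem]; tauto
  have m1 : p₁ ∈ U := by rw [P.mem]; tauto
  have m2 : p₂ ∈ U := by rw [P.mem]; tauto
  have m3 : p₃ ∈ U := by rw [P.mem]; tauto
  have neO1 : ∀ x ∈ O, x ≠ p₁ := fun x hx h => P.O1 (h ▸ hx)
  have neO2 : ∀ x ∈ O, x ≠ p₂ := fun x hx h => P.O2 (h ▸ hx)
  have neO3 : ∀ x ∈ O, x ≠ p₃ := fun x hx h => P.O3 (h ▸ hx)
  have pend : ∀ s ∈ O, G.Adj p₂ s → ¬ G.Adj p₃ s → ∀ y ∈ U, G.Adj s y → y = p₂ := by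
    intro s hs h2 h3 y hy hsy
    rcases (P.mem y).1 hy with rfl | rfl | rfl | hyR | hyO
    · exact (P.no1 s hs hsy.symm).elim
    · rfl
    · exact (h3 hsy.symm).elim
    · exact (P.noRO y hyR s hs hsy.symm).elim
    · exact (P.no2 s hs y hyO h2 hsy).elim
  -- when only `o` and `p₁` can depend on `p₂`, the triple is `p₁, o, p₂`
  have fin : ∀ o ∈ O, G.Adj p₂ o → (∀ s ∈ O, G.Adj p₂ s → ¬ G.Adj p₃ s → s = o) →
      Split3 G U := by
    intro o ho ho2 hall
    refine split3 m1 (mO o ho) m2 (neO1 o ho).symm P.a12.symm ho2 (conn_of_core P.connR ?_ ?_)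
    · intro x hx
      simp only [Finset.mem_sdiff, Finset.mem_insert, Finset.mem_singleton, not_or]
      exact ⟨mR x hx, fun h => P.R1 (h ▸ hx), fun h => P.RO x hx (h ▸ ho), fun h => P.R2 (h ▸ hx)⟩
    · intro X hRX hcl
      simp only [Finset.mem_sdiff, Finset.mem_insert, Finset.mem_singleton, not_or] at hcl ⊢
      have h3X : p₃ ∈ X := hcl p₄ (hRX P.p4R) p₃
        ⟨m3, P.ne13.symm, (neO3 o ho).symm, P.ne23.symm⟩ P.a34.symm
      have hX : ∀ s ∈ O, s ≠ o → G.Adj p₃ s → s ∈ X := fun s hs hso h =>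
        hcl p₃ h3X s ⟨mO s hs, neO1 s hs, hso, neO2 s hs⟩ h
      rintro y ⟨hy, hy1, hyo, hy2⟩
      rcases (P.mem y).1 hy with h | h | rfl | hyR | hyO
      · exact (hy1 h).elim
      · exact (hy2 h).elim
      · exact h3X
      · exact hRX hyR
      · rcases P.att y hyO with h | h | ⟨a, ha, h3a, hay⟩
        · by_cases h3 : G.Adj p₃ y
          · exact hX y hyO hyo h3
          · exact (hyo (hall y hyO h h3)).elim
        · exact hX y hyO hyo h
        · have hao : a ≠ o := by rintro rfl; exact P.no2 a ha y hyO ho2 hay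
          exact hcl a (hX a ha hao h3a) y ⟨hy, hy1, hyo, hy2⟩ hay
  by_cases hpure : ∃ s ∈ O, G.Adj p₂ s ∧ ¬ G.Adj p₃ s
  · obtain ⟨s, hs, hs2, hs3⟩ := hpure
    by_cases hpure2 : ∃ s' ∈ O, G.Adj p₂ s' ∧ ¬ G.Adj p₃ s' ∧ s' ≠ s
    · obtain ⟨s', hs', hs2', hs3', hne⟩ := hpure2
      have hD : 3 ≤ D := three_le hlow m2 (mO s hs) (mO s' hs') m3 hne.symm (neO3 s hs)
        (neO3 s' hs') hs2 hs2' P.a23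
      by_cases hpure3 : ∃ r ∈ O, G.Adj p₂ r ∧ ¬ G.Adj p₃ r ∧ r ≠ s ∧ r ≠ s'
      · obtain ⟨r, hr, hr2, hr3, e1, e2⟩ := hpure3
        exact (no_three_pendant hdef hD (mO s hs) (mO s' hs') (mO r hr) hne.symm e1.symm e2.symm
          (pend s hs hs2 hs3) (pend s' hs' hs2' hs3') (pend r hr hr2 hr3)).elim
      · push Not at hpure3
        by_cases h1 : ∃ y ∈ U, G.Adj p₁ y ∧ y ≠ p₂
        · obtain ⟨z, hz, h1z, hz2⟩ := h1
          refine split3 (mO s hs) (mO s' hs') m2 hne.symm hs2 hs2' (conn_of_core P.connR ?_ ?_)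
          · intro x hx
            simp only [Finset.mem_sdiff, Finset.mem_insert, Finset.mem_singleton, not_or]
            exact ⟨mR x hx, fun h => P.RO x hx (h ▸ hs), fun h => P.RO x hx (h ▸ hs'),
              fun h => P.R2 (h ▸ hx)⟩
          · intro X hRX hcl
            simp only [Finset.mem_sdiff, Finset.mem_insert, Finset.mem_singleton, not_or] at hcl ⊢
            have h3X : p₃ ∈ X := hcl p₄ (hRX P.p4R) p₃
              ⟨m3, (neO3 s hs).symm, (neO3 s' hs').symm, P.ne23.symm⟩ P.a34.symm
            have hX : ∀ r ∈ O, r ≠ s → r ≠ s' → G.Adj p₃ r → r ∈ X := fun r hr e1 e2 h =>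
              hcl p₃ h3X r ⟨mO r hr, e1, e2, neO2 r hr⟩ h
            rintro y ⟨hy, hys, hys', hy2⟩
            rcases (P.mem y).1 hy with rfl | h | rfl | hyR | hyO
            · have hzX : z ∈ X := by
                rcases (P.mem z).1 hz with rfl | rfl | rfl | hzR | hzO
                · exact (h1z.ne rfl).elim
                · exact (hz2 rfl).elim
                · exact h3X
                · exact hRX hzR
                · exact (P.no1 z hzO h1z).elim
              exact hcl z hzX y ⟨hy, hys, hys', hy2⟩ h1z.symm
            · exact (hy2 h).elim
            · exact h3X
            · exact hRX hyR
            · rcases P.att y hyO with h | h | ⟨a, ha, h3a, hay⟩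
              · by_cases h3 : G.Adj p₃ y
                · exact hX y hyO hys hys' h3
                · exact (hys' (hpure3 y hyO h h3 hys)).elim
              · exact hX y hyO hys hys' h
              · have has : a ≠ s := by rintro rfl; exact hs3 h3a
                have has' : a ≠ s' := by rintro rfl; exact hs3' h3a
                exact hcl a (hX a ha has has' h3a) y ⟨hy, hys, hys', hy2⟩ hay
        · push Not at h1
          exact (no_three_pendant hdef hD m1 (mO s hs) (mO s' hs') (neO1 s hs).symm
            (neO1 s' hs').symm hne.symm h1 (pend s hs hs2 hs3) (pend s' hs' hs2' hs3')).elim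
    · push Not at hpure2
      exact fin s hs hs2 hpure2
  · push Not at hpure
    exact fin o ho ho2 fun s hs h2 h3 => (h3 (hpure s hs h2)).elim


/-- `O` hangs at `p₃` only, by pendant vertices and by legs `p₃ - a - t` (where possibly `t` is
adjacent to `p₃`, too). If `p₁, p₂` are not attached to `R`, they form one more leg. Two legs, or a
leg and two pendant vertices, contradict `hdef` through the large degree of `p₃`. In the remaining
configurations `p₃` is split off together with whatever hangs at it. -/
lemma PathEnd.case_third (P : PathEnd G U p₁ p₂ p₃ p₄ R O)
    (hlow : ∀ v, deg (E G U) v ≤ D)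
    (hdef : ∀ Z ⊆ U, Z.card * D < 2 * D + ∑ v ∈ Z, deg (E G U) v)
    (hno2 : ∀ o ∈ O, ¬ G.Adj p₂ o)
    (hch : ∀ a ∈ O, G.Adj p₃ a → ∀ t ∈ O, ∀ t' ∈ O, G.Adj a t → G.Adj a t' → t = t') :
    Split3 G U ∨ Split4 G U := by
  have mO : ∀ x ∈ O, x ∈ U := fun x hx => by rw [P.mem]; tauto
  have mR : ∀ x ∈ R, x ∈ U := fun x hx => by rw [P.mem]; tauto
  have m1 : p₁ ∈ U := by rw [P.mem]; tauto
  have m2 : p₂ ∈ U := by rw [P.mem]; tauto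
  have m3 : p₃ ∈ U := by rw [P.mem]; tauto
  have m4 : p₄ ∈ U := mR _ P.p4R
  have neO1 : ∀ x ∈ O, x ≠ p₁ := fun x hx h => P.O1 (h ▸ hx)
  have neO2 : ∀ x ∈ O, x ≠ p₂ := fun x hx h => P.O2 (h ▸ hx)
  have neO3 : ∀ x ∈ O, x ≠ p₃ := fun x hx h => P.O3 (h ▸ hx)
  have neR1 : ∀ x ∈ R, x ≠ p₁ := fun x hx h => P.R1 (h ▸ hx)
  have neR2 : ∀ x ∈ R, x ≠ p₂ := fun x hx h => P.R2 (h ▸ hx)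
  have neR3 : ∀ x ∈ R, x ≠ p₃ := fun x hx h => P.R3 (h ▸ hx)
  have neRO : ∀ x ∈ R, ∀ y ∈ O, x ≠ y := fun x hx y hy h => P.RO x hx (h ▸ hy)
  have neO4 : ∀ x ∈ O, x ≠ p₄ := fun x hx h => neRO p₄ P.p4R x hx h.symm
  have n24 := (neR2 _ P.p4R).symm
  have n14 := (neR1 _ P.p4R).symm
  have n12 := P.ne12
  have n13 := P.ne13
  have n23 := P.ne23
  -- neighbourhoods of the vertices of `O`
  have nO : ∀ o ∈ O, ∀ y ∈ U, G.Adj o y → y = p₃ ∨ y ∈ O := by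
    intro o ho y hy hoy
    rcases (P.mem y).1 hy with rfl | rfl | rfl | hyR | hyO
    · exact (P.no1 o ho hoy.symm).elim
    · exact (hno2 o ho hoy.symm).elim
    · exact Or.inl rfl
    · exact (P.noRO y hyR o ho hoy.symm).elim
    · exact Or.inr hyO
  have pend : ∀ o ∈ O, (∀ o' ∈ O, ¬ G.Adj o o') → ∀ y ∈ U, G.Adj o y → y = p₃ :=
    fun o ho h y hy hoy => (nO o ho y hy hoy).resolve_right fun hyO => h y hyO hoy
  have att3 : ∀ o ∈ O, (∀ o' ∈ O, ¬ G.Adj o o') → G.Adj p₃ o := by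
    intro o ho h
    rcases P.att o ho with h' | h' | ⟨a, ha, _, hao⟩
    · exact (hno2 o ho h').elim
    · exact h'
    · exact (h a ha hao.symm).elim
  -- the first two vertices of the path, when they are not attached to `R`
  have nb1 : (∀ z ∈ R, ¬ G.Adj p₁ z) → ∀ y ∈ U, G.Adj p₁ y → y = p₂ ∨ y = p₃ := by
    intro h y hy h1y
    rcases (P.mem y).1 hy with rfl | rfl | rfl | hyR | hyO
    · exact (h1y.ne rfl).elim
    · exact Or.inl rfl
    · exact Or.inr rfl
    · exact (h y hyR h1y).elim
    · exact (P.no1 y hyO h1y).elim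
  have nb2 : (∀ z ∈ R, ¬ G.Adj p₂ z) → ∀ y ∈ U, G.Adj p₂ y → y = p₁ ∨ y = p₃ := by
    intro h y hy h2y
    rcases (P.mem y).1 hy with rfl | rfl | rfl | hyR | hyO
    · exact Or.inl rfl
    · exact (h2y.ne rfl).elim
    · exact Or.inr rfl
    · exact (h y hyR h2y).elim
    · exact (hno2 y hyO h2y).elim
  -- connectedness of what remains: `R`, `R ∪ {p₁}` or `R ∪ {p₁, p₂}`
  have hC0 : ∀ W : Finset V, (∀ x ∈ R, x ∉ W) → (∀ x ∈ U, x ∉ W → x ∈ R) → Conn G (U \ W) := by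
    intro W h1 h2
    refine conn_of_core P.connR (fun x hx => Finset.mem_sdiff.2 ⟨mR x hx, h1 x hx⟩) ?_
    intro X hX _ y hy
    rw [Finset.mem_sdiff] at hy
    exact hX (h2 y hy.1 hy.2)
  have hC1 : (∃ z ∈ R, G.Adj p₁ z) → ∀ W : Finset V, (∀ x ∈ R, x ∉ W) →
      (∀ x ∈ U, x ∉ W → x ∈ R ∨ x = p₁) → Conn G (U \ W) := by
    rintro ⟨z, hz, h1z⟩ W h1 h2
    refine conn_of_core P.connR (fun x hx => Finset.mem_sdiff.2 ⟨mR x hx, h1 x hx⟩) ?_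
    intro X hX hcl y hy
    rcases h2 y (Finset.mem_sdiff.1 hy).1 (Finset.mem_sdiff.1 hy).2 with h | rfl
    · exact hX h
    · exact hcl z (hX hz) _ hy h1z.symm
  have hC2 : ((∃ z ∈ R, G.Adj p₁ z) ∨ ∃ z ∈ R, G.Adj p₂ z) → ∀ W : Finset V, (∀ x ∈ R, x ∉ W) →
      p₁ ∉ W → p₂ ∉ W → (∀ x ∈ U, x ∉ W → x ∈ R ∨ x = p₁ ∨ x = p₂) → Conn G (U \ W) := by
    intro hz W h1 hp1 hp2 h2
    refine conn_of_core P.connR (fun x hx => Finset.mem_sdiff.2 ⟨mR x hx, h1 x hx⟩) ?_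
    intro X hX hcl y hy
    have i1 : p₁ ∈ U \ W := Finset.mem_sdiff.2 ⟨m1, hp1⟩
    have i2 : p₂ ∈ U \ W := Finset.mem_sdiff.2 ⟨m2, hp2⟩
    have : p₁ ∈ X ∧ p₂ ∈ X := by
      rcases hz with ⟨z, hz, h⟩ | ⟨z, hz, h⟩
      · have := hcl z (hX hz) _ i1 h.symm
        exact ⟨this, hcl _ this _ i2 P.a12⟩
      · have := hcl z (hX hz) _ i2 h.symm
        exact ⟨hcl _ this _ i1 P.a12.symm, this⟩
    rcases h2 y (Finset.mem_sdiff.1 hy).1 (Finset.mem_sdiff.1 hy).2 with h | rfl | rfl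
    · exact hX h
    · exact this.1
    · exact this.2
  by_cases hleg : ∃ a ∈ O, ∃ t ∈ O, G.Adj p₃ a ∧ G.Adj a t
  · -- all vertices of a leg have degree at most two
    obtain ⟨a, ha, t, ht, h3a, hat⟩ := hleg
    have na : ∀ a ∈ O, ∀ t ∈ O, G.Adj p₃ a → G.Adj a t → ∀ y ∈ U, G.Adj a y → y = t ∨ y = p₃ := by
      intro a ha t ht h3a hat y hy hay
      rcases nO a ha y hy hay with h | h
      · exact Or.inr h
      · exact Or.inl (hch a ha h3a y h t ht hay hat)
    have nt : ∀ a ∈ O, ∀ t ∈ O, G.Adj p₃ a → G.Adj a t → ∀ y ∈ U, G.Adj t y → y = a ∨ y = p₃ := by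
      intro a ha t ht h3a hat y hy hty
      rcases nO t ht y hy hty with h | h
      · exact Or.inr h
      · exact Or.inl (P.no3 a ha t ht y h h3a hat hty)
    have da := deg_le_two (na a ha t ht h3a hat)
    have dt := deg_le_two (nt a ha t ht h3a hat)
    have hD3 : 3 ≤ D := three_le hlow m3 (mO a ha) m2 m4 (neO2 a ha) (neO4 a ha) n24 h3a
      P.a23.symm P.a34
    by_cases hz : (∃ z ∈ R, G.Adj p₁ z) ∨ ∃ z ∈ R, G.Adj p₂ z
    · by_cases hO' : ∃ o ∈ O, o ≠ a ∧ o ≠ t ∧ ∃ o' ∈ O, G.Adj o o'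
      · exfalso
        obtain ⟨o, ho, hoa, hot, o', ho', hoo⟩ := hO'
        -- a second leg
        have h3oo : G.Adj p₃ o ∨ G.Adj p₃ o' := by
          rcases P.att o ho with h' | h' | ⟨b, hb, h3b, hbo⟩
          · exact (hno2 o ho h').elim
          · exact Or.inl h'
          · have := P.no3 b hb o ho o' ho' h3b hbo hoo
            subst this
            exact Or.inr h3b
        have ho'a : o' ≠ a := by
          rintro rfl
          exact hot (hch o' ha h3a o ho t ht hoo.symm hat)
        have ho't : o' ≠ t := by
          rintro rfl
          exact hoa (P.no3 a ha o' ht o ho h3a hat hoo.symm)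
        have h4 := four_deg hdef (mO a ha) (mO t ht) (mO o ho) (mO o' ho') hat.ne hoa.symm
          ho'a.symm hot.symm ho't.symm hoo.ne
        rcases h3oo with h | h
        · have := deg_le_two (na o ho o' ho' h hoo)
          have := deg_le_two (nt o ho o' ho' h hoo)
          have := four_le hlow m3 (mO a ha) (mO o ho) m2 m4 hoa.symm (neO2 a ha) (neO4 a ha)
            (neO2 o ho) (neO4 o ho) n24 h3a h P.a23.symm P.a34
          omega
        · have := deg_le_two (na o' ho' o ho h hoo.symm)
          have := deg_le_two (nt o' ho' o ho h hoo.symm)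
          have := four_le hlow m3 (mO a ha) (mO o' ho') m2 m4 ho'a.symm (neO2 a ha) (neO4 a ha)
            (neO2 o' ho') (neO4 o' ho') n24 h3a h P.a23.symm P.a34
          omega
      · push Not at hO'
        by_cases hq : ∃ q ∈ O, q ≠ a ∧ q ≠ t
        · obtain ⟨q, hqO, hqa, hqt⟩ := hq
          have iq := hO' q hqO hqa hqt
          by_cases hq' : ∃ q' ∈ O, q' ≠ a ∧ q' ≠ t ∧ q' ≠ q
          · exfalso
            obtain ⟨q', hqO', hqa', hqt', hqq⟩ := hq'
            have h4 := four_deg hdef (mO a ha) (mO t ht) (mO q hqO) (mO q' hqO') hat.ne hqa.symm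
              hqa'.symm hqt.symm hqt'.symm hqq.symm
            have := deg_le_one (pend q hqO iq)
            have := deg_le_one (pend q' hqO' (hO' q' hqO' hqa' hqt'))
            omega
          · push Not at hq'
            right
            refine split4 (mO t ht) (mO a ha) m3 (mO q hqO) (neO3 t ht) hqt.symm hqa.symm hat h3a
              (att3 q hqO iq) (nt a ha t ht h3a hat) (pend q hqO iq) (hC2 hz _ ?_ ?_ ?_ ?_)
            · intro x hx
              simp only [Finset.mem_insert, Finset.mem_singleton, not_or]
              exact ⟨neRO x hx t ht, neRO x hx q hqO, neRO x hx a ha, neR3 x hx⟩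
            · simp only [Finset.mem_insert, Finset.mem_singleton, not_or]
              exact ⟨(neO1 t ht).symm, (neO1 q hqO).symm, (neO1 a ha).symm, n13⟩
            · simp only [Finset.mem_insert, Finset.mem_singleton, not_or]
              exact ⟨(neO2 t ht).symm, (neO2 q hqO).symm, (neO2 a ha).symm, n23⟩
            · intro x hx
              simp only [Finset.mem_insert, Finset.mem_singleton, not_or]
              rintro ⟨xt, xq, xa, x3⟩
              have e1 := hq' x
              have e2 := (P.mem x).1 hx
              clear * - e1 e2 xt xq xa x3
              tauto
        · push Not at hq
          left
          refine split3 (mO t ht) m3 (mO a ha) (neO3 t ht) hat h3a.symm (hC2 hz _ ?_ ?_ ?_ ?_)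
          · intro x hx
            simp only [Finset.mem_insert, Finset.mem_singleton, not_or]
            exact ⟨neRO x hx t ht, neR3 x hx, neRO x hx a ha⟩
          · simp only [Finset.mem_insert, Finset.mem_singleton, not_or]
            exact ⟨(neO1 t ht).symm, n13, (neO1 a ha).symm⟩
          · simp only [Finset.mem_insert, Finset.mem_singleton, not_or]
            exact ⟨(neO2 t ht).symm, n23, (neO2 a ha).symm⟩
          · intro x hx
            simp only [Finset.mem_insert, Finset.mem_singleton, not_or]
            rintro ⟨xt, x3, xa⟩
            have e1 := hq x
            have e2 := (P.mem x).1 hx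
            clear * - e1 e2 xt x3 xa
            tauto
    · -- the legs `a, t` and `p₂, p₁`
      exfalso
      push Not at hz
      have h4 := four_deg hdef (mO a ha) (mO t ht) m1 m2 hat.ne (neO1 a ha) (neO2 a ha)
        (neO1 t ht) (neO2 t ht) n12
      have d1 := deg_le_two (nb1 hz.1)
      have d2 := deg_le_two (nb2 hz.2)
      by_cases h3t : G.Adj p₃ t
      · have := four_le hlow m3 (mO a ha) (mO t ht) m2 m4 hat.ne (neO2 a ha) (neO4 a ha)
          (neO2 t ht) (neO4 t ht) n24 h3a h3t P.a23.symm P.a34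
        omega
      by_cases h31 : G.Adj p₃ p₁
      · have := four_le hlow m3 (mO a ha) m1 m2 m4 (neO1 a ha) (neO2 a ha) (neO4 a ha)
          n12 n14 n24 h3a h31 P.a23.symm P.a34
        omega
      have := deg_le_one (U := U) (v := t) (a := a) (G := G) fun y hy h =>
        (nt a ha t ht h3a hat y hy h).resolve_right (by rintro rfl; exact h3t h.symm)
      have := deg_le_one (U := U) (v := p₁) (a := p₂) (G := G) fun y hy h =>
        (nb1 hz.1 y hy h).resolve_right (by rintro rfl; exact h31 h.symm)
      omega
  · -- without legs all vertices of `O` are pendant at `p₃`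
    push Not at hleg
    have iso : ∀ o ∈ O, ∀ o' ∈ O, ¬ G.Adj o o' := by
      intro o ho o' ho' hoo
      rcases P.att o ho with h' | h' | ⟨b, hb, h3b, hbo⟩
      · exact (hno2 o ho h').elim
      · exact hleg o ho o' ho' h' hoo
      · exact hleg b hb o ho h3b hbo
    by_cases hq : ∃ q, q ∈ O
    · obtain ⟨q, hqO⟩ := hq
      have pq := pend q hqO (iso q hqO)
      have aq := att3 q hqO (iso q hqO)
      by_cases hq' : ∃ q' ∈ O, q' ≠ q
      · obtain ⟨q', hqO', hqq⟩ := hq'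
        have pq' := pend q' hqO' (iso q' hqO')
        have aq' := att3 q' hqO' (iso q' hqO')
        have hD := four_le hlow m3 (mO q hqO) (mO q' hqO') m2 m4 hqq.symm (neO2 q hqO)
          (neO4 q hqO) (neO2 q' hqO') (neO4 q' hqO') n24 aq aq' P.a23.symm P.a34
        by_cases hr : ∃ r ∈ O, r ≠ q ∧ r ≠ q'
        · obtain ⟨r, hrO, hrq, hrq'⟩ := hr
          exact (no_three_pendant hdef (by omega) (mO q hqO) (mO q' hqO') (mO r hrO) hqq.symm
            hrq.symm hrq'.symm pq pq' (pend r hrO (iso r hrO))).elim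
        push Not at hr
        by_cases hz : (∃ z ∈ R, G.Adj p₁ z) ∨ ∃ z ∈ R, G.Adj p₂ z
        · left
          refine split3 (mO q hqO) (mO q' hqO') m3 hqq.symm aq aq' (hC2 hz _ ?_ ?_ ?_ ?_)
          · intro x hx
            simp only [Finset.mem_insert, Finset.mem_singleton, not_or]
            exact ⟨neRO x hx q hqO, neRO x hx q' hqO', neR3 x hx⟩
          · simp only [Finset.mem_insert, Finset.mem_singleton, not_or]
            exact ⟨(neO1 q hqO).symm, (neO1 q' hqO').symm, n13⟩
          · simp only [Finset.mem_insert, Finset.mem_singleton, not_or]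
            exact ⟨(neO2 q hqO).symm, (neO2 q' hqO').symm, n23⟩
          · intro x hx
            simp only [Finset.mem_insert, Finset.mem_singleton, not_or]
            rintro ⟨xq, xq', x3⟩
            have e1 := hr x
            have e2 := (P.mem x).1 hx
            clear * - e1 e2 xq xq' x3
            tauto
        · exfalso
          push Not at hz
          have h4 := four_deg hdef (mO q hqO) (mO q' hqO') m1 m2 hqq.symm (neO1 q hqO) (neO2 q hqO)
            (neO1 q' hqO') (neO2 q' hqO') n12
          have := deg_le_two (nb1 hz.1)
          have := deg_le_two (nb2 hz.2)
          have := deg_le_one pq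
          have := deg_le_one pq'
          omega
      · push Not at hq'
        by_cases h1R : ∃ z ∈ R, G.Adj p₁ z
        · left
          refine split3 (mO q hqO) m2 m3 (neO2 q hqO) aq P.a23.symm (hC1 h1R _ ?_ ?_)
          · intro x hx
            simp only [Finset.mem_insert, Finset.mem_singleton, not_or]
            exact ⟨neRO x hx q hqO, neR2 x hx, neR3 x hx⟩
          · intro x hx
            simp only [Finset.mem_insert, Finset.mem_singleton, not_or]
            rintro ⟨xq, x2, x3⟩
            have e1 := hq' x
            have e2 := (P.mem x).1 hx
            clear * - e1 e2 xq x2 x3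
            tauto
        · push Not at h1R
          right
          refine split4 m1 m2 m3 (mO q hqO) n13 (neO1 q hqO).symm (neO2 q hqO).symm P.a12.symm
            P.a23.symm aq (nb1 h1R) pq (hC0 _ ?_ ?_)
          · intro x hx
            simp only [Finset.mem_insert, Finset.mem_singleton, not_or]
            exact ⟨neR1 x hx, neRO x hx q hqO, neR2 x hx, neR3 x hx⟩
          · intro x hx
            simp only [Finset.mem_insert, Finset.mem_singleton, not_or]
            rintro ⟨x1, xq, x2, x3⟩
            have e1 := hq' x
            have e2 := (P.mem x).1 hx
            clear * - e1 e2 x1 xq x2 x3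
            tauto
    · push Not at hq
      left
      refine split3 m1 m3 m2 n13 P.a12.symm P.a23 (hC0 _ ?_ ?_)
      · intro x hx
        simp only [Finset.mem_insert, Finset.mem_singleton, not_or]
        exact ⟨neR1 x hx, neR3 x hx, neR2 x hx⟩
      · intro x hx
        simp only [Finset.mem_insert, Finset.mem_singleton, not_or]
        rintro ⟨x1, x3, x2⟩
        have e1 := hq x
        have e2 := (P.mem x).1 hx
        clear * - e1 e2 x1 x3 x2
        tauto

end Ends

/-! ### Connected sets of `4j + 2` vertices -/

/-- The edge `xy` itself is counted at both of its ends, which saves one. -/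
lemma card_cover {U : Finset V} {S : Finset (Sym2 V)} (hS : S ⊆ E G U) {x y : V}
    (hxy : s(x, y) ∈ E G U) (h : ∀ e ∈ S, x ∈ e ∨ y ∈ e) :
    S.card + 1 ≤ deg (E G U) x + deg (E G U) y := by
  have h1 : S ⊆ (E G U).filter (fun e => x ∈ e) ∪ (E G U).filter (fun e => y ∈ e) := by
    intro e he
    simp only [Finset.mem_union, Finset.mem_filter]
    have := h e he
    have := hS he
    tauto
  have h2 : 1 ≤ ((E G U).filter (fun e => x ∈ e) ∩ (E G U).filter (fun e => y ∈ e)).card :=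
    Finset.card_pos.2 ⟨s(x, y), by simp [hxy]⟩
  have h3 := Finset.card_union_add_card_inter ((E G U).filter (fun e => x ∈ e))
    ((E G U).filter (fun e => y ∈ e))
  have h4 := Finset.card_le_card h1
  simp only [deg]
  omega

/-- Two adjacent vertices do not cover more than `2D` edges, and a disjoint edge, joined to them by
connectedness, yields a path on four vertices. -/
lemma exists_path_four {U : Finset V} {D : ℕ} (h : Conn G U) (hlow : ∀ v, deg (E G U) v ≤ D)
    (hE : 2 * D < (E G U).card) : ∃ l, IsPth G U l ∧ 4 ≤ l.length := by
  by_contra hcon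
  have hp : ∀ a ∈ U, ∀ b ∈ U, ∀ c ∈ U, ∀ d ∈ U, G.Adj a b → G.Adj b c → G.Adj c d → a ≠ c →
      a ≠ d → b ≠ d → False := by
    intro a ha b hb c hc d hd hab hbc hcd h1 h2 h3
    refine hcon ⟨[a, b, c, d], ⟨?_, ?_, ?_⟩, by simp⟩
    · simp [hab.ne, hbc.ne, hcd.ne, h1, h2, h3]
    · simp [hab, hbc, hcd]
    · simp [ha, hb, hc, hd]
  obtain ⟨e, he⟩ : (E G U).Nonempty := Finset.card_pos.1 (by omega)
  induction e with
  | h x y =>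
    obtain ⟨hxy, hx, hy⟩ := mem_E.1 he
    obtain ⟨f, hf, hfx, hfy⟩ : ∃ f ∈ E G U, x ∉ f ∧ y ∉ f := by
      by_contra! hc
      have h1 := card_cover subset_rfl he fun f hf => or_iff_not_imp_left.2 fun h =>
        by_contra fun h' => h' (hc f hf h)
      have h2 := hlow x
      have h3 := hlow y
      omega
    induction f with
    | h z t =>
      obtain ⟨hzt, hz, ht⟩ := mem_E.1 hf
      simp only [Sym2.mem_iff, not_or] at hfx hfy
      have hX := h.2 (U.filter fun v => v = x ∨ v = y ∨ G.Adj v x ∨ G.Adj v y)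
        (Finset.filter_subset _ _) ⟨x, by simp [hx]⟩ (by
          intro v hv w hw hvw
          simp only [Finset.mem_filter] at hv ⊢
          refine ⟨hw, ?_⟩
          by_contra! hcw
          obtain ⟨hwx, hwy, awx, awy⟩ := hcw
          obtain ⟨hvU, rfl | rfl | hvx | hvy⟩ := hv
          · exact awx hvw.symm
          · exact awy hvw.symm
          · exact hp w hw v hvU x hx y hy hvw.symm hvx hxy hwx hwy
              (by rintro rfl; exact awy hvw.symm)
          · exact hp w hw v hvU y hy x hx hvw.symm hvy hxy.symm hwy hwx
              (by rintro rfl; exact awx hvw.symm))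
      rw [← hX] at hz
      simp only [Finset.mem_filter] at hz
      obtain ⟨hz, hzx | hzy | hzx | hzy⟩ := hz
      · exact hfx.1 hzx.symm
      · exact hfy.1 hzy.symm
      · exact hp t ht z hz x hx y hy hzt.symm hzx hxy (Ne.symm hfx.2) (Ne.symm hfy.2)
          (Ne.symm hfy.1)
      · exact hp t ht z hz y hy x hx hzt.symm hzy hxy.symm (Ne.symm hfy.2) (Ne.symm hfx.2)
          (Ne.symm hfx.1)

/-- The vertices of a quadruple as in `Split4` meet at most `2D - 1` edges. -/
lemma card_sdiff_quadruple {U W : Finset V} {D : ℕ} (hlow : ∀ v, deg (E G U) v ≤ D) {c₁ c₂ : V}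
    (h1 : c₁ ∈ U) (h2 : c₂ ∈ U) (hc : G.Adj c₁ c₂)
    (hcov : ∀ x ∈ W, ∀ y ∈ U, G.Adj x y → x = c₁ ∨ x = c₂ ∨ y = c₁ ∨ y = c₂) :
    (E G U).card + 1 ≤ (E G (U \ W)).card + 2 * D := by
  have hS := card_cover (S := (E G U).filter fun e => ∃ v ∈ W, v ∈ e) (Finset.filter_subset _ _)
    (mem_E.2 ⟨hc, h1, h2⟩) (by
      intro e he
      simp only [Finset.mem_filter] at he
      obtain ⟨he, v, hv, y, rfl⟩ := he
      have := hcov v hv y (mem_E.1 he).2.2 (mem_E.1 he).1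
      simp only [Sym2.mem_iff]
      rcases this with h | h | h | h <;> simp [h])
  have hT : ((E G U).filter fun e => ¬ ∃ v ∈ W, v ∈ e).card ≤ (E G (U \ W)).card := by
    refine Finset.card_le_card fun e he => ?_
    induction e with
    | h a b =>
      simp only [Finset.mem_filter, mem_E, Sym2.mem_iff] at he ⊢
      obtain ⟨⟨hab, ha, hb⟩, hW⟩ := he
      push Not at hW
      simp only [Finset.mem_sdiff]
      exact ⟨hab, ⟨ha, fun h => (hW a h).1 rfl⟩, hb, fun h => (hW b h).2 rfl⟩
  have hsum := Finset.card_filter_add_card_filter_not (s := E G U) (fun e => ∃ v ∈ W, v ∈ e)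
  have := hlow c₁
  have := hlow c₂
  omega

lemma exists_split {U : Finset V} {D : ℕ} (h : Conn G U) (hlow : ∀ v, deg (E G U) v ≤ D)
    (hE : 2 * D < (E G U).card)
    (hdef : ∀ Z ⊆ U, Z.card * D < 2 * D + ∑ v ∈ Z, deg (E G U) v) : Split3 G U ∨ Split4 G U := by
  obtain ⟨l, hl, h4⟩ := exists_path_four h hlow hE
  obtain ⟨p₁, p₂, p₃, p₄, R, O, P⟩ := exists_pathEnd h hl h4
  by_cases hno2 : ∃ o ∈ O, G.Adj p₂ o
  · obtain ⟨o, ho, ho2⟩ := hno2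
    exact Or.inl (P.case_second hlow hdef ho ho2)
  by_cases hch : ∃ a ∈ O, G.Adj p₃ a ∧ ∃ t ∈ O, ∃ t' ∈ O, G.Adj a t ∧ G.Adj a t' ∧ t ≠ t'
  · obtain ⟨a, ha, h3a, t, ht, t', ht', hat, hat', hne⟩ := hch
    exact Or.inl (P.case_cherry h hlow hdef ha h3a ht ht' hat hat' hne)
  push Not at hno2 hch
  exact P.case_third hlow hdef hno2 hch

/-- If `|U| = 4j + 2` and `G[U]` has more than `2jD` edges, the bound of `Conn.good` can be raised
by two: the degree sum forces a splitting, whose parts are treated separately. -/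
lemma good_two_mod_four {D : ℕ} (hD : ∀ (U : Finset V) v, deg (E G U) v ≤ D) :
    ∀ j (U : Finset V), 1 ≤ j → Conn G U → U.card = 4 * j + 2 → 2 * j * D < (E G U).card →
      Good G U (2 * j + 2) := by
  intro j
  induction j with
  | zero => intro U h; omega
  | succ j ih =>
    intro U _ hU hc hE
    have hdef : ∀ Z ⊆ U, Z.card * D < 2 * D + ∑ v ∈ Z, deg (E G U) v := by
      intro Z hZ
      have h1 := sum_deg_eq_two_mul (G := G) (U := U) subset_rfl
      rw [← Finset.sum_sdiff hZ] at h1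
      have h2 : ∑ v ∈ U \ Z, deg (E G U) v ≤ (U \ Z).card * D := by
        simpa using Finset.sum_le_card_nsmul (U \ Z) _ D fun v _ => hD U v
      have h3 := Finset.card_sdiff_add_card_eq_card hZ
      rw [hc] at h3
      have h4 : (U \ Z).card * D + Z.card * D = 4 * (j * D) + 6 * D := by
        rw [← add_mul, h3]; ring
      have h5 : 2 * (j + 1) * D = 2 * (j * D) + 2 * D := by ring
      omega
    have hE2 : 2 * D < (E G U).card :=
      lt_of_le_of_lt (Nat.mul_le_mul_right D (by omega)) hE
    rcases exists_split hU (hD U) hE2 hdef with ⟨W, hWU, hW3, hW, hUW⟩ |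
      ⟨W, hWU, hW4, hW, hUW, c₁, hc₁, c₂, hc₂, hcc, hcov⟩
    · have h3 := Finset.card_sdiff_add_card_eq_card hWU
      have := (hW.good.union hUW.good Finset.disjoint_sdiff).mono
        (U' := U) (k' := 2 * (j + 1) + 2) (by rw [Finset.union_sdiff_of_subset hWU]) (by omega)
      exact this
    · have h3 := Finset.card_sdiff_add_card_eq_card hWU
      have h4 := card_sdiff_quadruple (hD U) hc₁ hc₂ hcc hcov
      have h5 : 2 * (j + 1) * D = 2 * j * D + 2 * D := by ring
      rcases Nat.eq_zero_or_pos j with rfl | hj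
      · -- two vertices remain, but also at least two edges
        exfalso
        have h6 : (U \ W).card = 2 := by omega
        obtain ⟨a, b, hab, hs⟩ := Finset.card_eq_two.1 h6
        have h7 : E G (U \ W) ⊆ {s(a, b)} := by
          intro e he
          induction e with
          | h u v =>
            obtain ⟨huv, hu, hv⟩ := mem_E.1 he
            rw [hs] at hu hv
            simp only [Finset.mem_insert, Finset.mem_singleton] at hu hv ⊢
            have := huv.ne
            rcases hu with rfl | rfl <;> rcases hv with rfl | rfl <;>
              first | exact (this rfl).elim | rfl | exact Sym2.eq_swap
        have := Finset.card_le_card h7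
        rw [Finset.card_singleton] at this
        omega
      · have hg := ih (U \ W) hj hUW (by omega) (by omega)
        exact (hW.good.union hg Finset.disjoint_sdiff).mono
          (by rw [Finset.union_sdiff_of_subset hWU]) (by omega)

/-! ### Edge colourings -/

/-- `c` is a proper edge colouring of `G` with colours below `D`; values off the edge set are
irrelevant. -/
def IsCol (G : SimpleGraph V) (c : Sym2 V → ℕ) (D : ℕ) : Prop :=
  (∀ e ∈ G.edgeSet, c e < D) ∧
    ∀ e ∈ G.edgeSet, ∀ f ∈ G.edgeSet, ∀ v, v ∈ e → v ∈ f → c e = c f → e = f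

lemma mem_edgeSet_of_mem_E {U : Finset V} {e : Sym2 V} (h : e ∈ E G U) : e ∈ G.edgeSet := by
  simp only [E, Finset.mem_filter] at h
  exact h.2.1

lemma IsCol.deg_le {c : Sym2 V → ℕ} {D : ℕ} (h : IsCol G c D) (U : Finset V) (v : V) :
    deg (E G U) v ≤ D := by
  rw [deg, ← Finset.card_range D]
  refine Finset.card_le_card_of_injOn c ?_ ?_
  · intro e he
    simp only [Finset.coe_filter, Set.mem_ofPred_eq] at he
    simpa using h.1 e (mem_edgeSet_of_mem_E he.1)
  · intro e he f hf hef
    simp only [Finset.coe_filter, Set.mem_ofPred_eq] at he hf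
    exact h.2 e (mem_edgeSet_of_mem_E he.1) f (mem_edgeSet_of_mem_E hf.1) v he.2 hf.2 hef

/-- Each colour class is a matching, so it has at most `⌊|U| / 2⌋` edges in `G[U]`. -/
lemma IsCol.card_le {c : Sym2 V → ℕ} {D : ℕ} (h : IsCol G c D) (U : Finset V) :
    (E G U).card ≤ D * (U.card / 2) := by
  rw [Finset.card_eq_sum_card_fiberwise (f := c) (t := Finset.range D)
    (fun e he => by simpa using h.1 e (mem_edgeSet_of_mem_E he))]
  refine (Finset.sum_le_card_nsmul _ _ (U.card / 2) fun i _ => ?_).trans (by simp)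
  have h1 := sum_deg_eq_two_mul (G := G) (U := U) (F := (E G U).filter fun e => c e = i)
    (Finset.filter_subset _ _)
  have h2 : ∑ v ∈ U, deg ((E G U).filter fun e => c e = i) v ≤ U.card * 1 := by
    refine (Finset.sum_le_card_nsmul _ _ 1 fun v _ => ?_).trans (by simp)
    refine Finset.card_le_one.2 fun e he f hf => ?_
    simp only [Finset.mem_filter] at he hf
    exact h.2 e (mem_edgeSet_of_mem_E he.1.1) f (mem_edgeSet_of_mem_E hf.1.1) v he.2 hf.2
      (he.1.2.trans hf.1.2.symm)
  omega

/-- For `|U| = 4j, 4j + 1, 4j + 3` the bounds of `Conn.good` and `IsCol.card_le` match. -/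
lemma IsCol.exists_good_of_conn {c : Sym2 V → ℕ} {D : ℕ} (h : IsCol G c D) {U : Finset V}
    (hU : Conn G U) (h3 : 3 ≤ U.card) : ∃ k, Good G U k ∧ (E G U).card ≤ D * k := by
  have hcard := h.card_le U
  by_cases h2 : U.card % 4 = 2
  · by_cases hE : (E G U).card ≤ D * (2 * ((U.card + 1) / 4))
    · exact ⟨_, hU.good, hE⟩
    · refine ⟨_, good_two_mod_four h.deg_le (U.card / 4) U (by omega) hU (by omega) ?_,
        hcard.trans (Nat.mul_le_mul_left D (by omega))⟩
      have : (U.card + 1) / 4 = U.card / 4 := by omega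
      rw [this] at hE
      rw [mul_comm]
      omega
  · exact ⟨_, hU.good, hcard.trans (Nat.mul_le_mul_left D (by omega))⟩

/-- `U` is a union of vertex sets of components, each of which has at least three vertices. -/
lemma IsCol.exists_good {c : Sym2 V → ℕ} {D : ℕ} (h : IsCol G c D)
    (hcomp : ∀ R, Conn G R → (∀ x ∈ R, ∀ y, G.Adj x y → y ∈ R) → 3 ≤ R.card) :
    ∀ U : Finset V, (∀ x ∈ U, ∀ y, G.Adj x y → y ∈ U) → ∃ k, Good G U k ∧ (E G U).card ≤ D * k := by
  intro U
  induction U using Finset.strongInduction with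
  | H U ih =>
    intro hU
    rcases U.eq_empty_or_nonempty with rfl | ⟨p, hp⟩
    · refine ⟨0, ⟨∅, by simp, by simp⟩, ?_⟩
      have := h.card_le ∅
      simpa using this
    · obtain ⟨R, hRU, hpR, hR, hcl⟩ := exists_component G hp
      have hcl' : ∀ x ∈ R, ∀ y, G.Adj x y → y ∈ R := fun x hx y hxy =>
        hcl x hx y (hU x (hRU hx) y hxy) hxy
      obtain ⟨k, hk, hkE⟩ := h.exists_good_of_conn hR (hcomp R hR hcl')
      obtain ⟨k', hk', hkE'⟩ := ih (U \ R)
        ((Finset.ssubset_iff_of_subset Finset.sdiff_subset).2 ⟨p, hp, by simp [hpR]⟩) (by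
          intro x hx y hxy
          rw [Finset.mem_sdiff] at hx ⊢
          exact ⟨hU x hx.1 y hxy, fun hy => hx.2 (hcl' y hy x hxy.symm)⟩)
      have hg := hk.union hk' Finset.disjoint_sdiff
      rw [Finset.union_sdiff_of_subset hRU] at hg
      refine ⟨k + k', hg, ?_⟩
      have hsub : E G U ⊆ E G R ∪ E G (U \ R) := by
        intro e he
        induction e with
        | h a b =>
          obtain ⟨hab, ha, hb⟩ := mem_E.1 he
          simp only [Finset.mem_union, mem_E, Finset.mem_sdiff]
          by_cases haR : a ∈ R
          · exact Or.inl ⟨hab, haR, hcl' a haR b hab⟩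
          · exact Or.inr ⟨hab, ⟨ha, haR⟩, hb, fun hbR => haR (hcl' b hbR a hab.symm)⟩
      have := (Finset.card_le_card hsub).trans (Finset.card_union_le _ _)
      rw [mul_add]
      omega

/-! ### Passing to the line graph -/

/-- The degree of the edge `uv` in the line graph of `F` is `deg F u + deg F v - 2`. -/
lemma deg_add_deg {F : Finset (Sym2 V)} {u v : V} (hne : u ≠ v) (h : s(u, v) ∈ F) :
    deg F u + deg F v =
      (F.filter fun f => s(u, v) ≠ f ∧ ∃ w, w ∈ s(u, v) ∧ w ∈ f).card + 2 := by
  have h1 : F.filter (fun f => u ∈ f) ∪ F.filter (fun f => v ∈ f) =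
      insert s(u, v) (F.filter fun f => s(u, v) ≠ f ∧ ∃ w, w ∈ s(u, v) ∧ w ∈ f) := by
    ext f
    simp only [Finset.mem_union, Finset.mem_filter, Finset.mem_insert]
    by_cases hf : f = s(u, v)
    · simp [hf, h]
    · simp [hf, Ne.symm hf, Sym2.mem_iff]
      tauto
  have h2 : F.filter (fun f => u ∈ f) ∩ F.filter (fun f => v ∈ f) = {s(u, v)} := by
    ext f
    simp only [Finset.mem_inter, Finset.mem_filter, Finset.mem_singleton]
    constructor
    · rintro ⟨⟨_, h1⟩, _, h2⟩
      exact (Sym2.mem_and_mem_iff hne).1 ⟨h1, h2⟩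
    · rintro rfl
      simp [h]
  have h3 := Finset.card_union_add_card_inter (F.filter fun f => u ∈ f) (F.filter fun f => v ∈ f)
  rw [h1, h2, Finset.card_insert_of_notMem (by simp), Finset.card_singleton] at h3
  simp only [deg]
  omega

lemma le_fo {W : Type*} [Fintype W] (H : SimpleGraph W) (s : Finset W)
    (h : ∀ v ∈ s, Odd ((s.filter (fun u => H.Adj v u)).card)) : s.card ≤ fo H := by
  refine le_csSup ⟨Fintype.card W, ?_⟩ ⟨s, h, rfl⟩
  rintro n ⟨t, _, rfl⟩
  exact Finset.card_le_univ t

lemma Good.le_fo {U : Finset V} {k : ℕ} (h : Good G U k) : k ≤ fo G.lineGraph := by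
  obtain ⟨F, hF, hk⟩ := h
  have hFG : ∀ e ∈ F, e ∈ G.edgeSet := by
    intro e he
    induction e with
    | h u v => exact (hF u v he).1
  have hmap : ∀ (p : Sym2 V → Prop) [DecidablePred p], ((Finset.univ.filter fun e : G.edgeSet => e.1 ∈ F).filter
      fun e => p e.1).card = (F.filter p).card := by
    intro p _
    rw [← Finset.card_map (Function.Embedding.subtype _)]
    congr 1
    ext e
    simp only [Finset.mem_map, Finset.mem_filter, Finset.mem_univ, true_and,
      Function.Embedding.subtype_apply, Subtype.exists, exists_and_right, exists_eq_right]
    constructor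
    · rintro ⟨⟨_, h⟩, h'⟩
      exact ⟨h, h'⟩
    · intro h
      exact ⟨⟨hFG e h.1, h.1⟩, h.2⟩
  refine hk.trans ?_
  have h0 := hmap fun _ => True
  simp only [Finset.filter_true] at h0
  rw [← h0]
  refine OddLine.le_fo _ _ ?_
  rintro ⟨e, heG⟩ he
  simp only [Finset.mem_filter, Finset.mem_univ, true_and] at he
  induction e with
  | h u v =>
    have h1 := deg_add_deg (hF u v he).1.ne he
    have h2 := (hF u v he).2.2.2
    have h3 := hmap fun f => s(u, v) ≠ f ∧ ∃ w, w ∈ s(u, v) ∧ w ∈ f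
    rw [h1, ← h3] at h2
    have h4 : Odd ((Finset.univ.filter fun e : G.edgeSet => e.1 ∈ F).filter
      fun e => s(u, v) ≠ e.1 ∧ ∃ w, w ∈ s(u, v) ∧ w ∈ e.1).card := by
      rw [Nat.odd_iff] at h2 ⊢
      omega
    convert h4 using 4 with f
    rw [SimpleGraph.lineGraph_adj_iff_exists]
    simp only [ne_eq, Subtype.ext_iff]

lemma exists_isCol (G : SimpleGraph V) {D : ℕ} (h : G.lineGraph.Colorable D) :
    ∃ c, IsCol G c D := by
  obtain ⟨C⟩ := h
  refine ⟨fun e => if h : e ∈ G.edgeSet then (C ⟨e, h⟩ : ℕ) else 0, ?_, ?_⟩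
  · intro e he
    simp [he]
  · intro e he f hf v hve hvf hef
    by_contra hne
    refine C.valid (v := ⟨e, he⟩) (w := ⟨f, hf⟩) ?_ ?_
    · rw [SimpleGraph.lineGraph_adj_iff_exists]
      exact ⟨by simpa using hne, v, hve, hvf⟩
    · simpa [he, hf, Fin.val_inj] using hef

/-- A nonempty set which no edge leaves contains a component. -/
lemma three_le_card_of_closed (hcomp : ∀ c : G.ConnectedComponent, 3 ≤ c.supp.ncard)
    {R : Finset V} (hR : R.Nonempty) (hcl : ∀ x ∈ R, ∀ y, G.Adj x y → y ∈ R) : 3 ≤ R.card := by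
  obtain ⟨p, hp⟩ := hR
  refine (hcomp (G.connectedComponentMk p)).trans ?_
  rw [← Set.ncard_coe_finset]
  refine Set.ncard_le_ncard ?_ R.finite_toSet
  intro x hx
  rw [SimpleGraph.ConnectedComponent.mem_supp_iff, SimpleGraph.ConnectedComponent.eq] at hx
  obtain ⟨w⟩ := hx.symm
  have : ∀ {a b : V}, G.Walk a b → a ∈ R → b ∈ R := by
    intro a b w
    induction w with
    | nil => exact id
    | cons hab _ ih => exact fun ha => ih (hcl _ ha _ hab)
  exact this w hp

end OddLine

/-- If `G` has `m ≥ 2` edges and every connected component of `G` has at least 3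
vertices, then `χ(L(G)) · f_o(L(G)) ≥ m`, i.e. `f_o(L(G)) ≥ m / χ(L(G))`. -/
theorem fo_lineGraph_ge_edges_div_chromatic {V : Type*} [Fintype V] (G : SimpleGraph V)
    (hm : 2 ≤ G.edgeFinset.card)
    (hcomp : ∀ c : G.ConnectedComponent, 3 ≤ c.supp.ncard) :
    (G.edgeFinset.card : ℕ∞) ≤ G.lineGraph.chromaticNumber * fo G.lineGraph := by
  obtain ⟨D, hD⟩ := ENat.ne_top_iff_exists.1
    (SimpleGraph.chromaticNumber_ne_top_iff_exists.2 ⟨_, G.lineGraph.colorable_of_fintype⟩)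
  obtain ⟨c, hc⟩ := OddLine.exists_isCol G (SimpleGraph.chromaticNumber_le_iff_colorable.1 hD.ge)
  obtain ⟨k, hk, hE⟩ := hc.exists_good
    (fun R hR hcl => OddLine.three_le_card_of_closed hcomp hR.1 hcl) Finset.univ (by simp)
  have hEG : G.edgeFinset = OddLine.E G Finset.univ := by
    ext e
    simp [OddLine.E]
  rw [← hD, hEG]
  exact_mod_cast hE.trans (Nat.mul_le_mul_left D hk.le_fo)
end

section
/- If G is a cubic (3-regular) finite simple graph of order n, then f_o(L(G)) ≥ n/2; equivalently, 2 · f_o(L(G)) ≥ n. -/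
/-!
An odd induced subgraph of `L(G)` is a set `E` of edges of `G` such that `deg_E a + deg_E b` is odd
for every edge `ab` of `E`.  Such an `E` with `2 |E| ≥ |Z|` is built inside every connected
component `Z` of `G`.

*Trees.*  Let `S` be spanned by a rooted tree with at most two children per vertex (`RT`).  By
induction along the tree, `S` is of one of three kinds (`Typed`), where a pending edge is a
future edge from the root to its parent, already counted in the degree of the root:
* there is a valid `E` with `2 |E| ≥ |S|`;
* there is a valid `E` with `2 |E| ≥ |S| - 1`, and one with the same bound and a pending edge that
  gives the root odd degree;
* there is a valid `E` with `2 |E| ≥ |S| - 2`, and one with `2 |E| ≥ |S|` and a pending edge that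
  gives the root even degree.

In all cases `2 |E| ≥ |S| - 2`.

*Components.*  In a component `Z` of a cubic graph there is a path `a - b - c` whose removal leaves
a connected set `R` (`exists_path_removal`).  The set `R` is spanned by a tree as above, rooted at
a vertex with a neighbour outside `R` (`RT.of_conn`).  Adding the two edges `ab`, `bc` gives
`2 |E| ≥ |R| - 2 + 4 = |Z| - 1`, and `|Z|` is even by the handshake lemma.
-/

open scoped Classical

namespace CubicLine

variable {V : Type*} {G : SimpleGraph V}

/-! ### Edge sets with prescribed parities -/

/-- The degree of `v` in the edge set `E`. -/
noncomputable def deg (E : Finset (Sym2 V)) (v : V) : ℕ := (E.filter (fun e => v ∈ e)).card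

/-- `E` is a set of edges of `G` inside `S` such that the two ends of each edge have degrees of
different parity, where the degree of each vertex `x` is increased by `t x`. -/
structure Conf (G : SimpleGraph V) (S : Finset V) (E : Finset (Sym2 V)) (t : V → ℕ) : Prop where
  edge : ∀ e ∈ E, e ∈ G.edgeSet
  supp : ∀ e ∈ E, ∀ x ∈ e, x ∈ S
  odd : ∀ a b, s(a, b) ∈ E → Odd (deg E a + t a + (deg E b + t b))

/-- One pending edge at `v`. -/
noncomputable def ind (v : V) : V → ℕ := fun x => if x = v then 1 else 0

lemma Conf.deg_zero {S : Finset V} {E : Finset (Sym2 V)} {t : V → ℕ} (h : Conf G S E t)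
    {x : V} (hx : x ∉ S) : deg E x = 0 := by
  unfold deg
  rw [Finset.card_eq_zero, Finset.filter_eq_empty_iff]
  exact fun e he hxe => hx (h.supp e he x hxe)

lemma Conf.mono {S S' : Finset V} {E : Finset (Sym2 V)} {t t' : V → ℕ} (h : Conf G S E t)
    (hS : S ⊆ S') (ht : ∀ x ∈ S, t' x = t x) : Conf G S' E t' := by
  refine ⟨h.edge, fun e he x hx => hS (h.supp e he x hx), fun a b hab => ?_⟩
  rw [ht a (h.supp _ hab a (by simp)), ht b (h.supp _ hab b (by simp))]
  exact h.odd a b hab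

lemma Conf.empty (S : Finset V) (t : V → ℕ) : Conf G S ∅ t :=
  ⟨by simp, by simp, by simp⟩

lemma Conf.disjoint {S₁ S₂ : Finset V} {E₁ E₂ : Finset (Sym2 V)} {t₁ t₂ : V → ℕ}
    (h₁ : Conf G S₁ E₁ t₁) (h₂ : Conf G S₂ E₂ t₂) (hd : Disjoint S₁ S₂) : Disjoint E₁ E₂ := by
  rw [Finset.disjoint_left]
  intro e he₁ he₂
  induction e using Sym2.ind with
  | _ a b =>
    exact Finset.disjoint_left.1 hd (h₁.supp _ he₁ a (by simp)) (h₂.supp _ he₂ a (by simp))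

lemma deg_union {E₁ E₂ : Finset (Sym2 V)} (hd : Disjoint E₁ E₂) (x : V) :
    deg (E₁ ∪ E₂) x = deg E₁ x + deg E₂ x := by
  unfold deg
  rw [Finset.filter_union, Finset.card_union_of_disjoint]
  exact Finset.disjoint_filter_filter hd

lemma Conf.union {S₁ S₂ : Finset V} {E₁ E₂ : Finset (Sym2 V)} {t t₁ t₂ : V → ℕ}
    (h₁ : Conf G S₁ E₁ t₁) (h₂ : Conf G S₂ E₂ t₂) (hd : Disjoint S₁ S₂)
    (ht₁ : ∀ x ∈ S₁, t x = t₁ x) (ht₂ : ∀ x ∈ S₂, t x = t₂ x) :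
    Conf G (S₁ ∪ S₂) (E₁ ∪ E₂) t := by
  have hE := h₁.disjoint h₂ hd
  have g₁ : Conf G (S₁ ∪ S₂) E₁ t := h₁.mono Finset.subset_union_left ht₁
  have g₂ : Conf G (S₁ ∪ S₂) E₂ t := h₂.mono Finset.subset_union_right ht₂
  refine ⟨?_, ?_, ?_⟩
  · intro e he
    rcases Finset.mem_union.1 he with h | h
    exacts [g₁.edge e h, g₂.edge e h]
  · intro e he
    rcases Finset.mem_union.1 he with h | h
    exacts [g₁.supp e h, g₂.supp e h]
  · intro a b hab
    rw [deg_union hE, deg_union hE]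
    rcases Finset.mem_union.1 hab with h | h
    · rw [h₂.deg_zero (Finset.disjoint_left.1 hd (h₁.supp _ h a (by simp))),
        h₂.deg_zero (Finset.disjoint_left.1 hd (h₁.supp _ h b (by simp)))]
      exact g₁.odd a b h
    · rw [h₁.deg_zero (Finset.disjoint_right.1 hd (h₂.supp _ h a (by simp))),
        h₁.deg_zero (Finset.disjoint_right.1 hd (h₂.supp _ h b (by simp)))]
      simpa using g₂.odd a b h

lemma deg_insert {E : Finset (Sym2 V)} {v c : V} (hvc : v ≠ c) (hE : s(v, c) ∉ E) (x : V) :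
    deg (insert s(v, c) E) x = deg E x + ind v x + ind c x := by
  unfold deg ind
  rw [Finset.filter_insert]
  by_cases h1 : x = v
  · subst h1
    simp [hvc, hE]
  · by_cases h2 : x = c
    · subst h2
      simp [h1, hE]
    · simp [h1, h2]

/-- Turning two pending half-edges, at `v` and at `c`, into the edge `vc`. -/
lemma Conf.insert {S : Finset V} {E : Finset (Sym2 V)} {t t' : V → ℕ} {v c : V}
    (h : Conf G S E t') (hv : v ∈ S) (hc : c ∈ S) (hadj : G.Adj v c) (hE : s(v, c) ∉ E)
    (ht : ∀ x ∈ S, t' x = t x + ind v x + ind c x)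
    (ho : Odd (deg E v + t' v + (deg E c + t' c))) :
    Conf G S (insert s(v, c) E) t := by
  have hd := deg_insert hadj.ne hE
  have key : ∀ x ∈ S, deg (Insert.insert s(v, c) E) x + t x = deg E x + t' x := by
    intro x hx
    rw [hd, ht x hx]
    ring
  refine ⟨?_, ?_, ?_⟩
  · intro e he
    rcases Finset.mem_insert.1 he with rfl | he
    exacts [hadj, h.edge e he]
  · intro e he x hx
    rcases Finset.mem_insert.1 he with rfl | he
    · rcases Sym2.mem_iff.1 hx with rfl | rfl <;> assumption
    · exact h.supp e he x hx
  · intro a b hab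
    rcases Finset.mem_insert.1 hab with he | he
    · rcases Sym2.eq_iff.1 he with ⟨rfl, rfl⟩ | ⟨rfl, rfl⟩
      · rw [key _ hv, key _ hc]
        exact ho
      · rw [key _ hv, key _ hc, add_comm]
        exact ho
    · rw [key _ (h.supp _ he a (by simp)), key _ (h.supp _ he b (by simp))]
      exact h.odd a b he

lemma Conf.not_mem {S : Finset V} {E : Finset (Sym2 V)} {t : V → ℕ} (h : Conf G S E t)
    {v : V} (hv : v ∉ S) (c : V) : s(v, c) ∉ E :=
  fun he => hv (h.supp _ he v (by simp))

/-- Joining a new root `v` to the root `c` of a configuration with a pending edge; `v` itself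
keeps `t v` pending edges. -/
lemma Conf.attach {S : Finset V} {E : Finset (Sym2 V)} {v c : V} {t : V → ℕ}
    (h : Conf G S E (ind c)) (hc : c ∈ S) (hv : v ∉ S) (hadj : G.Adj v c)
    (ht : ∀ x ∈ S, t x = 0) (ho : Odd (deg E c + t v)) :
    Conf G (Insert.insert v S) (Insert.insert s(v, c) E) t ∧
      (Insert.insert s(v, c) E).card = E.card + 1 ∧ deg (Insert.insert s(v, c) E) v = 1 := by
  have hE := h.not_mem hv c
  have hne := hadj.ne
  refine ⟨?_, Finset.card_insert_of_notMem hE, ?_⟩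
  · refine Conf.insert (t' := fun x => t x + ind v x + ind c x)
      (h.mono (Finset.subset_insert _ _) ?_) (by simp) (by simp [hc]) hadj hE (fun _ _ => rfl) ?_
    · intro x hx
      have : x ≠ v := fun e => hv (e ▸ hx)
      simp [ht x hx, ind, this]
    · simp only [h.deg_zero hv, ht c hc, ind, if_neg hne, if_neg hne.symm, if_true]
      obtain ⟨k, hk⟩ := ho
      exact ⟨k + 1, by omega⟩
  · rw [deg_insert hne hE, h.deg_zero hv]
    simp [ind, hne]

/-- Joining a new root `v` to the roots of two configurations with pending edges. -/
lemma Conf.attach_two {S₁ S₂ : Finset V} {E₁ E₂ : Finset (Sym2 V)} {v c₁ c₂ : V} {t : V → ℕ}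
    (h₁ : Conf G S₁ E₁ (ind c₁)) (h₂ : Conf G S₂ E₂ (ind c₂)) (hd : Disjoint S₁ S₂)
    (hc₁ : c₁ ∈ S₁) (hc₂ : c₂ ∈ S₂) (hv₁ : v ∉ S₁) (hv₂ : v ∉ S₂)
    (ha₁ : G.Adj v c₁) (ha₂ : G.Adj v c₂)
    (ht₁ : ∀ x ∈ S₁, t x = 0) (ht₂ : ∀ x ∈ S₂, t x = 0)
    (ho₁ : Odd (deg E₁ c₁ + t v + 1)) (ho₂ : Odd (deg E₂ c₂ + t v + 1)) :
    ∃ E, Conf G (Insert.insert v (S₁ ∪ S₂)) E t ∧ E.card = E₁.card + E₂.card + 2 ∧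
      deg E v = 2 := by
  have hc₂₁ : c₂ ∉ S₁ := Finset.disjoint_right.1 hd hc₂
  have hne := ha₂.ne
  -- `v` is first joined to `c₁`, while one further edge at `v` is pending.
  obtain ⟨g, gc, gd⟩ := h₁.attach (t := fun x => t x + ind v x) hc₁ hv₁ ha₁
    (fun x hx => by
      have : x ≠ v := fun e => hv₁ (e ▸ hx)
      simp [ht₁ x hx, ind, this]) (by simpa [ind, add_assoc] using ho₁)
  have hd' : Disjoint (Insert.insert v S₁) S₂ := by
    simp [Finset.disjoint_insert_left, hv₂, hd]
  have hEd := g.disjoint h₂ hd'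
  have hu := g.union (t := fun x => t x + ind v x + ind c₂ x) h₂ hd'
    (fun x hx => by
      have : x ≠ c₂ := by
        rintro rfl
        rcases Finset.mem_insert.1 hx with h | h
        exacts [hne h.symm, hc₂₁ h]
      simp [ind, this])
    (fun x hx => by
      have : x ≠ v := fun e => hv₂ (e ▸ hx)
      simp [ht₂ x hx, ind, this])
  have hnot : s(v, c₂) ∉ Insert.insert s(v, c₁) E₁ ∪ E₂ := by
    intro h
    rcases Finset.mem_union.1 h with h | h
    · have := g.supp _ h c₂ (by simp)
      rcases Finset.mem_insert.1 this with h | h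
      exacts [hne h.symm, hc₂₁ h]
    · exact h₂.not_mem hv₂ _ h
  have hg2 : deg (Insert.insert s(v, c₁) E₁) c₂ = 0 :=
    g.deg_zero (by simp [hc₂₁, hne.symm])
  refine ⟨Insert.insert s(v, c₂) (Insert.insert s(v, c₁) E₁ ∪ E₂), ?_, ?_, ?_⟩
  · have := hu.insert (v := v) (c := c₂) (t := t) (by simp) (by simp [hc₂]) ha₂ hnot
      (fun _ _ => rfl) (by
        simp only [deg_union hEd, gd, hg2, h₂.deg_zero hv₂, ht₂ c₂ hc₂, ind, if_neg hne,
          if_neg hne.symm, if_true]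
        obtain ⟨k, hk⟩ := ho₂
        exact ⟨k + 1, by omega⟩)
    rwa [Finset.insert_union] at this
  · rw [Finset.card_insert_of_notMem hnot, Finset.card_union_of_disjoint hEd, gc]
    ring
  · rw [deg_insert hne hnot, deg_union hEd, gd, h₂.deg_zero hv₂]
    simp [ind, hne]

/-! ### Rooted trees -/

/-- `RT G v S`: the set `S` is spanned by a tree of `G` rooted at `v` in which every vertex has at
most two children. -/
inductive RT (G : SimpleGraph V) : V → Finset V → Prop
  | leaf (v : V) : RT G v {v}
  | one (v c : V) (S : Finset V) (h : RT G c S) (hv : v ∉ S) (ha : G.Adj v c) :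
      RT G v (insert v S)
  | two (v c₁ c₂ : V) (S₁ S₂ : Finset V) (h₁ : RT G c₁ S₁) (h₂ : RT G c₂ S₂)
      (hd : Disjoint S₁ S₂) (hv₁ : v ∉ S₁) (hv₂ : v ∉ S₂) (ha₁ : G.Adj v c₁)
      (ha₂ : G.Adj v c₂) : RT G v (insert v (S₁ ∪ S₂))

lemma RT.root_mem {v : V} {S : Finset V} (h : RT G v S) : v ∈ S := by
  cases h <;> simp

/-- `S` carries a valid edge set `E` with `2 |E| ≥ |S| - k`. -/
def Plain (G : SimpleGraph V) (S : Finset V) (k : ℕ) : Prop :=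
  ∃ E, Conf G S E (fun _ => 0) ∧ S.card ≤ 2 * E.card + k

/-- `S` carries an edge set `E` with `2 |E| ≥ |S| - 1` that is valid with a pending edge at `v`,
which gives `v` odd degree. -/
def Wants (G : SimpleGraph V) (v : V) (S : Finset V) : Prop :=
  ∃ E, Conf G S E (ind v) ∧ Even (deg E v) ∧ S.card ≤ 2 * E.card + 1

/-- `S` carries an edge set `E` with `2 |E| ≥ |S|` that is valid with a pending edge at `v`,
which gives `v` even degree. -/
def Half (G : SimpleGraph V) (v : V) (S : Finset V) : Prop :=
  ∃ E, Conf G S E (ind v) ∧ Odd (deg E v) ∧ S.card ≤ 2 * E.card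

/-- The three kinds of rooted sets in the induction along a tree. -/
def Typed (G : SimpleGraph V) (v : V) (S : Finset V) : Prop :=
  Plain G S 0 ∨ (Plain G S 1 ∧ Wants G v S) ∨ (Plain G S 2 ∧ Half G v S)

lemma Plain.add {S₁ S₂ : Finset V} {k₁ k₂ : ℕ} (h₁ : Plain G S₁ k₁) (h₂ : Plain G S₂ k₂)
    (hd : Disjoint S₁ S₂) : Plain G (S₁ ∪ S₂) (k₁ + k₂) := by
  obtain ⟨E₁, c₁, n₁⟩ := h₁
  obtain ⟨E₂, c₂, n₂⟩ := h₂
  refine ⟨E₁ ∪ E₂, c₁.union c₂ hd (fun _ _ => rfl) (fun _ _ => rfl), ?_⟩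
  rw [Finset.card_union_of_disjoint hd, Finset.card_union_of_disjoint (c₁.disjoint c₂ hd)]
  omega

lemma Plain.weaken {S : Finset V} {k l : ℕ} (h : Plain G S k) (hkl : k ≤ l) : Plain G S l := by
  obtain ⟨E, c, n⟩ := h
  exact ⟨E, c, by omega⟩

lemma Plain.wants {S : Finset V} {v : V} (h : Plain G S 0) (hv : v ∉ S) :
    Plain G (insert v S) 1 ∧ Wants G v (insert v S) := by
  obtain ⟨E, c, n⟩ := h
  have hcard := Finset.card_insert_of_notMem hv
  refine ⟨⟨E, c.mono (Finset.subset_insert _ _) (fun _ _ => rfl), by omega⟩,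
    ⟨E, c.mono (Finset.subset_insert _ _) ?_, ?_, by omega⟩⟩
  · intro x hx
    have : x ≠ v := fun e => hv (e ▸ hx)
    simp [ind, this]
  · simp [c.deg_zero hv]

lemma Wants.half {S : Finset V} {v c : V} (h : Wants G c S) (hc : c ∈ S) (hv : v ∉ S)
    (ha : G.Adj v c) : Half G v (insert v S) := by
  obtain ⟨E, cf, he, n⟩ := h
  have hcard := Finset.card_insert_of_notMem hv
  obtain ⟨g, gc, gd⟩ := cf.attach (t := ind v) hc hv ha
    (fun x hx => by
      have : x ≠ v := fun e => hv (e ▸ hx)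
      simp [ind, this]) (by simpa [ind] using he.add_one)
  exact ⟨_, g, by simp [gd], by omega⟩

lemma Half.close {S : Finset V} {v c : V} (h : Half G c S) (hc : c ∈ S) (hv : v ∉ S)
    (ha : G.Adj v c) :
    ∃ E, Conf G (insert v S) E (fun _ => 0) ∧ (insert v S).card + 1 ≤ 2 * E.card := by
  obtain ⟨E, cf, he, n⟩ := h
  have hcard := Finset.card_insert_of_notMem hv
  obtain ⟨g, gc, gd⟩ := cf.attach (t := fun _ => 0) hc hv ha (fun _ _ => rfl) (by simpa using he)
  exact ⟨_, g, by omega⟩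

/-- If the first child has a pending edge giving it even degree, that edge is realised and the
second child keeps its own valid edge set. -/
lemma Half.close_add {S₁ S₂ : Finset V} {v c : V} {k : ℕ} (h : Half G c S₁) (hc : c ∈ S₁)
    (h₂ : Plain G S₂ (k + 1)) (hd : Disjoint S₁ S₂) (hv₁ : v ∉ S₁) (hv₂ : v ∉ S₂)
    (ha : G.Adj v c) : Plain G (insert v (S₁ ∪ S₂)) k := by
  obtain ⟨E, cf, n⟩ := h.close hc hv₁ ha
  obtain ⟨E₂, cf₂, n₂⟩ := h₂
  have hd' : Disjoint (insert v S₁) S₂ := by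
    simp [Finset.disjoint_insert_left, hv₂, hd]
  rw [← Finset.insert_union]
  refine ⟨E ∪ E₂, cf.union cf₂ hd' (fun _ _ => rfl) (fun _ _ => rfl), ?_⟩
  rw [Finset.card_union_of_disjoint hd', Finset.card_union_of_disjoint (cf.disjoint cf₂ hd')]
  omega

lemma Typed.one {S : Finset V} {v c : V} (h : Typed G c S) (hc : c ∈ S) (hv : v ∉ S)
    (ha : G.Adj v c) : Typed G v (insert v S) := by
  rcases h with h | ⟨h, w⟩ | ⟨_, w⟩
  · exact Or.inr (Or.inl (h.wants hv))
  · refine Or.inr (Or.inr ⟨?_, w.half hc hv ha⟩)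
    obtain ⟨E, cf, n⟩ := h
    have hcard := Finset.card_insert_of_notMem hv
    exact ⟨E, cf.mono (Finset.subset_insert _ _) (fun _ _ => rfl), by omega⟩
  · obtain ⟨E, cf, n⟩ := w.close hc hv ha
    exact Or.inl ⟨E, cf, by omega⟩

/-- A sibling subtree of the first kind does not affect the kind of the rest. -/
lemma Typed.add {S T : Finset V} {v : V} (h : Typed G v S) (hv : v ∈ S) (hT : Plain G T 0)
    (hd : Disjoint S T) : Typed G v (S ∪ T) := by
  have hp : ∀ k, Plain G S k → Plain G (S ∪ T) k := fun k hk => hk.add hT hd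
  have hvT : v ∉ T := Finset.disjoint_left.1 hd hv
  obtain ⟨E₂, cf₂, n₂⟩ := hT
  have key : ∀ E, Conf G S E (ind v) → Conf G (S ∪ T) (E ∪ E₂) (ind v) ∧
      deg (E ∪ E₂) v = deg E v ∧ (E ∪ E₂).card = E.card + E₂.card := by
    intro E cf
    refine ⟨cf.union cf₂ hd (fun _ _ => rfl) ?_, ?_,
      Finset.card_union_of_disjoint (cf.disjoint cf₂ hd)⟩
    · intro x hx
      have : x ≠ v := fun e => hvT (e ▸ hx)
      simp [ind, this]
    · rw [deg_union (cf.disjoint cf₂ hd), cf₂.deg_zero hvT, add_zero]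
  have hcard := Finset.card_union_of_disjoint hd
  rcases h with h | ⟨h, E, cf, he, n⟩ | ⟨h, E, cf, he, n⟩
  · exact Or.inl (hp 0 h)
  · obtain ⟨g, gd, gc⟩ := key E cf
    exact Or.inr (Or.inl ⟨hp 1 h, E ∪ E₂, g, gd ▸ he, by omega⟩)
  · obtain ⟨g, gd, gc⟩ := key E cf
    exact Or.inr (Or.inr ⟨hp 2 h, E ∪ E₂, g, gd ▸ he, by omega⟩)

lemma RT.typed {v : V} {S : Finset V} (h : RT G v S) : Typed G v S := by
  induction h with
  | leaf v =>
    have := Plain.wants (G := G) (S := ∅) (v := v) ⟨∅, Conf.empty _ _, by simp⟩ (by simp)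
    exact Or.inr (Or.inl (by simpa using this))
  | one v c S h hv ha ih => exact ih.one h.root_mem hv ha
  | two v c₁ c₂ S₁ S₂ h₁ h₂ hd hv₁ hv₂ ha₁ ha₂ ih₁ ih₂ =>
    have m₁ := h₁.root_mem
    have m₂ := h₂.root_mem
    have hcard : (insert v (S₁ ∪ S₂)).card = S₁.card + S₂.card + 1 := by
      rw [Finset.card_insert_of_notMem (by simp [hv₁, hv₂]), Finset.card_union_of_disjoint hd]
    have ind0 : ∀ S : Finset V, v ∉ S → ∀ x ∈ S, ind v x = 0 := by
      intro S hv x hx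
      have : x ≠ v := fun e => hv (e ▸ hx)
      simp [ind, this]
    rcases ih₂ with p₂ | ⟨p₂, w₂⟩ | ⟨p₂, w₂⟩
    · rw [← Finset.insert_union]
      exact (ih₁.one m₁ hv₁ ha₁).add (by simp) p₂
        (by simp [Finset.disjoint_insert_left, hv₂, hd])
    · rcases ih₁ with p₁ | ⟨p₁, w₁⟩ | ⟨p₁, w₁⟩
      · rw [Finset.union_comm, ← Finset.insert_union]
        exact (Typed.one (Or.inr (Or.inl ⟨p₂, w₂⟩)) m₂ hv₂ ha₂).add (by simp) p₁
          (by simp [Finset.disjoint_insert_left, hv₁, hd.symm])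
      · obtain ⟨E₁, cf₁, e₁, n₁⟩ := w₁
        obtain ⟨E₂, cf₂, e₂, n₂⟩ := w₂
        obtain ⟨E, cf, n, _⟩ := cf₁.attach_two (t := fun _ => 0) cf₂ hd m₁ m₂ hv₁ hv₂ ha₁ ha₂
          (fun _ _ => rfl) (fun _ _ => rfl) (by simpa using e₁.add_one) (by simpa using e₂.add_one)
        exact Or.inl ⟨E, cf, by omega⟩
      · exact Or.inl (w₁.close_add m₁ p₂ hd hv₁ hv₂ ha₁)
    · rcases ih₁ with p₁ | ⟨p₁, w₁⟩ | ⟨p₁, w₁⟩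
      · rw [Finset.union_comm, ← Finset.insert_union]
        exact (Typed.one (Or.inr (Or.inr ⟨p₂, w₂⟩)) m₂ hv₂ ha₂).add (by simp) p₁
          (by simp [Finset.disjoint_insert_left, hv₁, hd.symm])
      · rw [Finset.union_comm]
        exact Or.inl (w₂.close_add m₂ p₁ hd.symm hv₂ hv₁ ha₂)
      · refine Or.inr (Or.inl ⟨w₁.close_add m₁ p₂ hd hv₁ hv₂ ha₁, ?_⟩)
        obtain ⟨E₁, cf₁, e₁, n₁⟩ := w₁
        obtain ⟨E₂, cf₂, e₂, n₂⟩ := w₂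
        obtain ⟨E, cf, n, hdeg⟩ := cf₁.attach_two (t := ind v) cf₂ hd m₁ m₂ hv₁ hv₂ ha₁ ha₂
          (ind0 _ hv₁) (ind0 _ hv₂) (by simpa [ind] using e₁.add_one.add_one)
          (by simpa [ind] using e₂.add_one.add_one)
        exact ⟨E, cf, by simp [hdeg], by omega⟩

lemma RT.plain {v : V} {S : Finset V} (h : RT G v S) : Plain G S 2 := by
  rcases h.typed with h | ⟨h, _⟩ | ⟨h, _⟩
  exacts [h.weaken (by omega), h.weaken (by omega), h]

/-! ### Connected sets in cubic graphs -/

/-- Every vertex has exactly three neighbours. -/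
def Cubic (G : SimpleGraph V) : Prop :=
  ∀ v, ∃ a b c, a ≠ b ∧ a ≠ c ∧ b ≠ c ∧ ∀ x, G.Adj v x ↔ x = a ∨ x = b ∨ x = c

/-- `S` is connected, expressed by cuts: an edge leaves every nonempty proper subset. -/
def Conn (G : SimpleGraph V) (S : Finset V) : Prop :=
  ∀ T ⊆ S, T.Nonempty → T ≠ S → ∃ u ∈ T, ∃ w ∈ S, w ∉ T ∧ G.Adj u w

/-- A tree whose root has a neighbour `p` outside can be extended by any other neighbour `w` of
one of its vertices: no vertex can have two children, a parent and the new neighbour `w`. -/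
lemma RT.extend (hG : Cubic G) {v : V} {S : Finset V} (h : RT G v S) :
    ∀ p u w, p ∉ S → G.Adj v p → u ∈ S → w ∉ S → w ≠ p → G.Adj u w → RT G v (insert w S) := by
  induction h with
  | leaf v =>
    intro p u w hp hvp hu hw hwp huw
    rw [Finset.mem_singleton] at hu
    subst hu
    rw [Finset.pair_comm]
    exact RT.one u w {w} (RT.leaf w) (by simpa using huw.ne) huw
  | one v c S h hv ha ih =>
    intro p u w hp hvp hu hw hwp huw
    have hwv : w ≠ v := fun e => hw (by simp [e])
    have hwS : w ∉ S := fun e => hw (by simp [e])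
    rcases Finset.mem_insert.1 hu with rfl | hu
    · have : insert w (insert u S) = insert u (S ∪ {w}) := by
        ext x
        simp
        tauto
      rw [this]
      exact RT.two u c w S {w} h (RT.leaf w) (by simpa using hwS) hv (by simpa using hwv.symm)
        ha huw
    · rw [Finset.insert_comm]
      exact RT.one v c _ (ih v u w hv ha.symm hu hwS hwv huw) (by simp [hv, hwv.symm]) ha
  | two v c₁ c₂ S₁ S₂ h₁ h₂ hd hv₁ hv₂ ha₁ ha₂ ih₁ ih₂ =>
    intro p u w hp hvp hu hw hwp huw
    simp only [Finset.mem_insert, Finset.mem_union, not_or] at hw hu hp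
    obtain ⟨hwv, hw₁, hw₂⟩ := hw
    rcases hu with rfl | hu | hu
    · exfalso
      have m₁ := h₁.root_mem
      have m₂ := h₂.root_mem
      have n1 : c₁ ≠ c₂ := fun e => Finset.disjoint_left.1 hd m₁ (e ▸ m₂)
      have n2 : c₁ ≠ p := fun e => hp.2.1 (e ▸ m₁)
      have n3 : c₂ ≠ p := fun e => hp.2.2 (e ▸ m₂)
      have n4 : c₁ ≠ w := fun e => hw₁ (e ▸ m₁)
      have n5 : c₂ ≠ w := fun e => hw₂ (e ▸ m₂)
      obtain ⟨a, b, c, -, -, -, hN⟩ := hG u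
      rw [hN] at ha₁ ha₂ hvp huw
      grind
    · have : insert w (insert v (S₁ ∪ S₂)) = insert v (insert w S₁ ∪ S₂) := by
        ext x
        simp
        tauto
      rw [this]
      exact RT.two v c₁ c₂ _ _ (ih₁ v u w hv₁ ha₁.symm hu hw₁ hwv huw) h₂
        (by simp [Finset.disjoint_insert_left, hw₂, hd]) (by simp [hv₁, Ne.symm hwv]) hv₂ ha₁ ha₂
    · have : insert w (insert v (S₁ ∪ S₂)) = insert v (S₁ ∪ insert w S₂) := by
        ext x
        simp
        tauto
      rw [this]
      exact RT.two v c₁ c₂ _ _ h₁ (ih₂ v u w hv₂ ha₂.symm hu hw₂ hwv huw)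
        (by simp [Finset.disjoint_insert_right, hw₁, hd]) hv₁ (by simp [hv₂, Ne.symm hwv]) ha₁ ha₂

lemma RT.of_conn (hG : Cubic G) {S : Finset V} (hS : Conn G S) {v p : V} (hv : v ∈ S)
    (hp : p ∉ S) (hvp : G.Adj v p) : RT G v S := by
  obtain ⟨T, hT, hmax⟩ := (S.powerset.filter (fun T => RT G v T)).exists_max_image
    Finset.card ⟨{v}, by simp [hv, RT.leaf]⟩
  simp only [Finset.mem_filter, Finset.mem_powerset] at hT hmax
  obtain ⟨hTS, hRT⟩ := hT
  by_cases hne : T = S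
  · exact hne ▸ hRT
  exfalso
  obtain ⟨u, hu, w, hwS, hwT, huw⟩ := hS T hTS ⟨v, hRT.root_mem⟩ hne
  have hwp : w ≠ p := fun e => hp (e ▸ hwS)
  have := hmax (insert w T) ⟨Finset.insert_subset hwS hTS,
    hRT.extend hG p u w (fun h => hp (hTS h)) hvp hu hwT hwp huw⟩
  rw [Finset.card_insert_of_notMem hwT] at this
  omega

/-- Adding vertices that all have neighbours in a connected set keeps it connected. -/
lemma Conn.of_subset {C D : Finset V} (hC : Conn G C) (hCD : C ⊆ D)
    (h : ∀ x ∈ D, x ∉ C → ∃ y ∈ C, G.Adj x y) : Conn G D := by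
  intro T hT hTne hTD
  by_cases h0 : (T ∩ C).Nonempty
  · by_cases h1 : T ∩ C = C
    · obtain ⟨w, hwD, hwT⟩ := Finset.exists_of_ssubset (hT.ssubset_of_ne hTD)
      have hCT : C ⊆ T := Finset.inter_eq_right.1 h1
      obtain ⟨y, hy, hxy⟩ := h w hwD (fun hc => hwT (hCT hc))
      exact ⟨y, hCT hy, w, hwD, hwT, hxy.symm⟩
    · obtain ⟨u, hu, w, hw, hwT, huw⟩ := hC (T ∩ C) Finset.inter_subset_right h0 h1
      rw [Finset.mem_inter] at hu
      exact ⟨u, hu.1, w, hCD hw, fun hh => hwT (Finset.mem_inter.2 ⟨hh, hw⟩), huw⟩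
  · rw [Finset.not_nonempty_iff_eq_empty] at h0
    obtain ⟨x, hx⟩ := hTne
    have hd : ∀ y ∈ T, y ∉ C := fun y hy hc => by
      have : y ∈ T ∩ C := Finset.mem_inter.2 ⟨hy, hc⟩
      simp [h0] at this
    obtain ⟨y, hy, hxy⟩ := h x (hT hx) (hd x hx)
    exact ⟨x, hx, y, hCD hy, fun hh => hd y hh hy, hxy⟩

/-- Some path `a - b - c` of a component `Z` has a connected nonempty complement in `Z`.  Take a
largest connected `C` whose complement contains such a path, and `u ∉ C` with a neighbour in `C`.
By maximality there is no path on three vertices outside `C ∪ {u}`, so every vertex outside `C`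
has a neighbour in `C`. -/
lemma exists_path_removal (hG : Cubic G) {Z : Finset V} (hne : Z.Nonempty)
    (hcl : ∀ x ∈ Z, ∀ y, G.Adj x y → y ∈ Z) (hZ : Conn G Z) :
    ∃ a b c, a ∈ Z ∧ b ∈ Z ∧ c ∈ Z ∧ a ≠ c ∧ G.Adj b a ∧ G.Adj b c ∧
      Conn G (Z \ {a, b, c}) ∧ (Z \ {a, b, c}).Nonempty := by
  obtain ⟨z, hz⟩ := hne
  let P : Finset V → Prop := fun C => Conn G C ∧ C.Nonempty ∧
    ∃ a b c, a ∈ Z \ C ∧ b ∈ Z \ C ∧ c ∈ Z \ C ∧ a ≠ c ∧ G.Adj b a ∧ G.Adj b c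
  have hex : (Z.powerset.filter P).Nonempty := by
    obtain ⟨a, b, c, hab, hac, hbc, hN⟩ := hG z
    have ha : G.Adj z a := (hN a).2 (by simp)
    have hb : G.Adj z b := (hN b).2 (by simp)
    have hc : G.Adj z c := (hN c).2 (by simp)
    refine ⟨{a}, Finset.mem_filter.2 ⟨by simpa using hcl z hz a ha, ?_, by simp, b, z, c, ?_⟩⟩
    · intro T hT hTne hTa
      rcases Finset.subset_singleton_iff.1 hT with h | h
      · simp [h] at hTne
      · exact absurd h hTa
    · simp [hcl z hz b hb, hcl z hz c hc, hz, hab.symm, hac.symm, hbc, ha.ne, hb, hc]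
  obtain ⟨C, hC, hmax⟩ := (Z.powerset.filter P).exists_max_image Finset.card hex
  rw [Finset.mem_filter, Finset.mem_powerset] at hC
  obtain ⟨hCZ, hCc, hCne, a, b, c, ha, hb, hc, hac, hba, hbc⟩ := hC
  rw [Finset.mem_sdiff] at ha hb hc
  obtain ⟨y, hy, u, huZ, huC, hyu⟩ := hZ C hCZ hCne (fun e => ha.2 (e ▸ ha.1))
  have hall : ∀ x ∈ Z, x ∉ C → ∃ y ∈ C, G.Adj x y := by
    intro x hx hxC
    by_contra hno
    push Not at hno
    have hxu : x ≠ u := by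
      rintro rfl
      exact hno y hy hyu.symm
    -- Two of the three neighbours of `x` differ from `u`, and neither lies in `C`.
    have : ∃ p q, p ≠ q ∧ p ≠ u ∧ q ≠ u ∧ G.Adj x p ∧ G.Adj x q := by
      obtain ⟨p, q, r, hpq, hpr, hqr, hN⟩ := hG x
      have hp : G.Adj x p := (hN p).2 (by simp)
      have hq : G.Adj x q := (hN q).2 (by simp)
      have hr : G.Adj x r := (hN r).2 (by simp)
      by_cases h1 : p = u
      · exact ⟨q, r, hqr, fun e => hpq (h1.trans e.symm), fun e => hpr (h1.trans e.symm), hq, hr⟩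
      · by_cases h2 : q = u
        · exact ⟨p, r, hpr, h1, fun e => hqr (h2.trans e.symm), hp, hr⟩
        · exact ⟨p, q, hpq, h1, h2, hp, hq⟩
    obtain ⟨p, q, hpq, hpu, hqu, hp, hq⟩ := this
    have hpC : p ∉ C := fun h => hno p h hp
    have hqC : q ∉ C := fun h => hno q h hq
    have hP : P (insert u C) := by
      refine ⟨hCc.of_subset (Finset.subset_insert _ _) ?_, by simp, p, x, q, ?_⟩
      · intro w hw hwC
        rcases Finset.mem_insert.1 hw with rfl | hw
        exacts [⟨y, hy, hyu.symm⟩, absurd hw hwC]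
      · simp [hcl x hx p hp, hcl x hx q hq, hx, hpu, hqu, hxu, hpC, hqC, hxC, hpq, hp, hq]
    have := hmax _ (Finset.mem_filter.2
      ⟨Finset.mem_powerset.2 (Finset.insert_subset huZ hCZ), hP⟩)
    rw [Finset.card_insert_of_notMem huC] at this
    omega
  have hsub : C ⊆ Z \ {a, b, c} := by
    intro x hx
    simp only [Finset.mem_sdiff, Finset.mem_insert, Finset.mem_singleton, not_or]
    exact ⟨hCZ hx, fun e => ha.2 (e ▸ hx), fun e => hb.2 (e ▸ hx), fun e => hc.2 (e ▸ hx)⟩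
  exact ⟨a, b, c, ha.1, hb.1, hc.1, hac, hba, hbc,
    hCc.of_subset hsub (fun x hx => hall x (Finset.mem_sdiff.1 hx).1), hCne.mono hsub⟩

/-- The two edges of a path on three vertices form a valid edge set. -/
lemma path_conf {a b c : V} (hac : a ≠ c) (hba : G.Adj b a) (hbc : G.Adj b c) :
    ∃ E, Conf G {a, b, c} E (fun _ => 0) ∧ E.card = 2 := by
  obtain ⟨E, cf, n, -⟩ := Conf.attach_two (v := b) (t := fun _ => 0)
    (Conf.empty (G := G) {a} (ind a)) (Conf.empty {c} (ind c)) (by simpa using hac) (by simp)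
    (by simp) (by simpa using hba.ne) (by simpa using hbc.ne) hba hbc (fun _ _ => rfl)
    (fun _ _ => rfl) (by simp [deg]) (by simp [deg])
  refine ⟨E, ?_, by simpa using n⟩
  have : insert b ({a} ∪ {c}) = ({a, b, c} : Finset V) := by
    ext x
    simp
    tauto
  rwa [this] at cf

/-- A union of components of a finite cubic graph has even order, by the handshake lemma. -/
lemma even_card [Fintype V] (hdeg : ∀ v, G.degree v = 3) {Z : Finset V}
    (hcl : ∀ x ∈ Z, ∀ y, G.Adj x y → y ∈ Z) : Even Z.card := by
  let H : SimpleGraph V :=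
    { Adj := fun x y => G.Adj x y ∧ x ∈ Z
      symm := ⟨fun x y h => ⟨h.1.symm, hcl x h.2 y h.1⟩⟩
      loopless := ⟨fun x h => G.loopless.irrefl x h.1⟩ }
  have h := H.even_card_odd_degree_vertices
  have hZ : (Finset.univ.filter (fun v => Odd (H.degree v))) = Z := by
    ext x
    simp only [Finset.mem_filter, Finset.mem_univ, true_and]
    by_cases hx : x ∈ Z
    · have : H.degree x = G.degree x := by
        rw [← SimpleGraph.card_neighborFinset_eq_degree,
          ← SimpleGraph.card_neighborFinset_eq_degree]
        congr 1
        ext y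
        simp [H, hx]
      simp only [hx, iff_true, this, hdeg]
      decide
    · have : H.degree x = 0 := by
        rw [← SimpleGraph.card_neighborFinset_eq_degree, Finset.card_eq_zero]
        ext y
        simp [H, hx]
      simp [hx, this]
  rwa [hZ] at h

lemma component_plain [Fintype V] (hdeg : ∀ v, G.degree v = 3) (hG : Cubic G) {Z : Finset V}
    (hne : Z.Nonempty) (hcl : ∀ x ∈ Z, ∀ y, G.Adj x y → y ∈ Z) (hZ : Conn G Z) :
    Plain G Z 0 := by
  obtain ⟨a, b, c, ha, hb, hc, hac, hba, hbc, hR, hRne⟩ := exists_path_removal hG hne hcl hZ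
  obtain ⟨v, hv, p, -, hp, hvp⟩ := hZ _ Finset.sdiff_subset hRne
    (fun e => by
      have : a ∈ Z \ {a, b, c} := by rw [e]; exact ha
      simp at this)
  obtain ⟨E₁, cf₁, n₁⟩ := (RT.of_conn hG hR hv hp hvp).plain
  obtain ⟨E₂, cf₂, n₂⟩ := path_conf hac hba hbc
  have hd : Disjoint (Z \ {a, b, c}) {a, b, c} := Finset.sdiff_disjoint
  have hsub : ({a, b, c} : Finset V) ⊆ Z := by
    simp [Finset.insert_subset_iff, ha, hb, hc]
  have hcf := cf₁.union (t := fun _ => 0) cf₂ hd (fun _ _ => rfl) (fun _ _ => rfl)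
  rw [Finset.sdiff_union_of_subset hsub] at hcf
  refine ⟨E₁ ∪ E₂, hcf, ?_⟩
  have h3 : ({a, b, c} : Finset V).card = 3 :=
    Finset.card_eq_three.2 ⟨a, b, c, hba.ne.symm, hac, hbc.ne, rfl⟩
  have hle := Finset.card_le_card hsub
  rw [Finset.card_sdiff_of_subset hsub] at n₁
  rw [Finset.card_union_of_disjoint (cf₁.disjoint cf₂ hd)]
  obtain ⟨k, hk⟩ := even_card hdeg hcl
  omega

lemma closed_plain [Fintype V] (hdeg : ∀ v, G.degree v = 3) (hG : Cubic G) :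
    ∀ Z : Finset V, (∀ x ∈ Z, ∀ y, G.Adj x y → y ∈ Z) → Plain G Z 0 := by
  intro Z
  induction Z using Finset.strongInduction with
  | H Z ih =>
    intro hcl
    by_cases hZ : Conn G Z
    · rcases Z.eq_empty_or_nonempty with rfl | hne
      · exact ⟨∅, Conf.empty _ _, by simp⟩
      · exact component_plain hdeg hG hne hcl hZ
    · unfold Conn at hZ
      push Not at hZ
      obtain ⟨T, hT, hTne, hTZ, hno⟩ := hZ
      have hclT : ∀ x ∈ T, ∀ y, G.Adj x y → y ∈ T := by
        intro x hx y hxy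
        by_contra hy
        exact hno x hx y (hcl x (hT hx) y hxy) hy hxy
      have h₁ := ih T (hT.ssubset_of_ne hTZ) hclT
      have h₂ := ih (Z \ T) (Finset.sdiff_ssubset hT hTne) (fun x hx y hxy => by
        rw [Finset.mem_sdiff] at hx ⊢
        exact ⟨hcl x hx.1 y hxy, fun hy => hx.2 (hclT y hy x hxy.symm)⟩)
      have := h₁.add h₂ Finset.disjoint_sdiff
      rwa [Finset.union_sdiff_of_subset hT] at this

/-! ### Translation to the line graph -/

/-- The edge `ab` of `E` meets exactly `deg_E a + deg_E b - 2` other edges of `E`. -/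
lemma card_meeting {E : Finset (Sym2 V)} {a b : V} (hab : a ≠ b) (he : s(a, b) ∈ E) :
    (E.filter (fun e => e ≠ s(a, b) ∧ (a ∈ e ∨ b ∈ e))).card + 2 = deg E a + deg E b := by
  have h1 : (E.filter (fun e => a ∈ e)) ∩ (E.filter (fun e => b ∈ e)) = {s(a, b)} := by
    ext e
    simp only [Finset.mem_inter, Finset.mem_filter, Finset.mem_singleton]
    constructor
    · rintro ⟨⟨_, h⟩, _, h'⟩
      exact (Sym2.mem_and_mem_iff hab).1 ⟨h, h'⟩
    · rintro rfl
      simp [he]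
  have h2 := Finset.card_union_add_card_inter (E.filter (fun e => a ∈ e))
    (E.filter (fun e => b ∈ e))
  have h3 : E.filter (fun e => e ≠ s(a, b) ∧ (a ∈ e ∨ b ∈ e)) =
      ((E.filter (fun e => a ∈ e)) ∪ (E.filter (fun e => b ∈ e))).erase s(a, b) := by
    ext e
    simp only [Finset.mem_filter, Finset.mem_erase, Finset.mem_union]
    tauto
  have hm : s(a, b) ∈ (E.filter (fun e => a ∈ e)) ∪ (E.filter (fun e => b ∈ e)) := by
    simp [he]
  have h4 := Finset.card_erase_add_one hm
  rw [h1, Finset.card_singleton] at h2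
  rw [h3]
  unfold deg
  omega

end CubicLine

open CubicLine in
/-- If `G` is a cubic graph of order `n`, then `f_o(L(G)) ≥ n / 2`. -/
theorem fo_lineGraph_cubic {V : Type*} [Fintype V] (G : SimpleGraph V)
    [DecidableRel G.Adj] (hcubic : ∀ v, G.degree v = 3) :
    Fintype.card V ≤ 2 * fo G.lineGraph := by
  have hG : Cubic G := by
    intro v
    have h := hcubic v
    rw [← SimpleGraph.card_neighborFinset_eq_degree, Finset.card_eq_three] at h
    obtain ⟨a, b, c, hab, hac, hbc, hN⟩ := h
    refine ⟨a, b, c, hab, hac, hbc, fun x => ?_⟩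
    rw [← SimpleGraph.mem_neighborFinset, hN]
    simp
  obtain ⟨E, cf, n⟩ := closed_plain (G := G) (fun v => by convert hcubic v) hG Finset.univ
    (by simp)
  let s : Finset G.edgeSet := E.subtype (fun e => e ∈ G.edgeSet)
  have hs : s.card = E.card := by
    rw [Finset.card_subtype, Finset.filter_true_of_mem cf.edge]
  have hle : s.card ≤ fo G.lineGraph := by
    refine le_csSup ⟨Fintype.card G.edgeSet, ?_⟩ ⟨s, ?_, rfl⟩
    · rintro m ⟨r, -, rfl⟩
      exact Finset.card_le_univ r
    · rintro ⟨e, he⟩ hes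
      have heE : e ∈ E := by simpa [s] using hes
      induction e using Sym2.ind with
      | _ a b =>
        have hab : G.Adj a b := he
        have hcard : (s.filter (fun u => G.lineGraph.Adj ⟨s(a, b), he⟩ u)).card =
            (E.filter (fun e => e ≠ s(a, b) ∧ (a ∈ e ∨ b ∈ e))).card := by
          rw [← Finset.card_map (Function.Embedding.subtype _)]
          congr 1
          ext e
          simp only [Finset.mem_map, Finset.mem_filter, s, Finset.mem_subtype,
            Function.Embedding.coe_subtype, SimpleGraph.lineGraph_adj_iff_exists]
          constructor
          · rintro ⟨⟨f, hf⟩, ⟨hfE, hne, w, hw, hwf⟩, rfl⟩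
            refine ⟨hfE, fun h => hne (Subtype.ext h.symm), ?_⟩
            rcases Sym2.mem_iff.1 hw with rfl | rfl
            exacts [Or.inl hwf, Or.inr hwf]
          · rintro ⟨hE, hne, h⟩
            refine ⟨⟨e, cf.edge e hE⟩, ⟨hE, fun h => hne (congrArg Subtype.val h).symm, ?_⟩, rfl⟩
            rcases h with h | h
            exacts [⟨a, by simp, h⟩, ⟨b, by simp, h⟩]
        rw [hcard]
        have h2 := card_meeting hab.ne heE
        obtain ⟨k, hk⟩ := cf.odd a b heE
        simp only [add_zero] at hk
        exact ⟨k - 1, by omega⟩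
  rw [Finset.card_univ] at n
  omega
end

section
/- Let n be a positive even integer and let G_n = L(K_n) be the line graph of the complete graph K_n. Then f_o(G_n) = n(n-2)/4. -/
/-!
A set `T` of edges of `K_n` spans a subgraph `H` of `K_n`, and the degree of `uv ∈ T` in the induced
subgraph of `L(K_n)` is `d_H(u) + d_H(v) - 2`. So `T` is odd exactly when every edge of `H` joins a
vertex of odd degree to a vertex of even degree (`card_adj_add_two`).

Upper bound: let `a` and `b` be the numbers of vertices of odd and even degree, `a + b = n`. Then
`|T|` is the sum of the `a` odd degrees, each at most `b`, and also the sum of the `b` even degrees,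
each at most `a`. As `n` is even, `a` and `b` have the same parity. If both are even, an odd degree
is at most `b - 1`; if both are odd, an even degree is at most `a - 1`. So `|T|` is at most a product
of two integers with sum `n - 1`, hence at most `(n / 2) * (n / 2 - 1) = n (n - 2) / 4`.

Lower bound: with `n = 2 k`, take `H` to be `K_{k-1,k}` plus an isolated vertex; every edge has
degree sum `2 k - 1`, which is odd.
-/

open scoped Classical

section EdgeSets

variable {V : Type*} [Fintype V]

/-- The neighbours of `v` in the graph with edge set `T`. -/
noncomputable def nbrs (T : Finset (Sym2 V)) (v : V) : Finset V :=
  Finset.univ.filter (fun w => s(v, w) ∈ T)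

lemma mem_nbrs {T : Finset (Sym2 V)} {v w : V} : w ∈ nbrs T v ↔ s(v, w) ∈ T := by
  simp [nbrs]

lemma card_incident (T : Finset (Sym2 V)) (v : V) :
    (T.filter (fun e => v ∈ e)).card = (nbrs T v).card := by
  symm
  apply Finset.card_bij (fun w _ => s(v, w))
  · intro w hw
    simpa using mem_nbrs.1 hw
  · intro w _ w' _ h
    exact Sym2.congr_right.1 h
  · intro e he
    obtain ⟨heT, w, rfl⟩ := Finset.mem_filter.1 he
    exact ⟨w, mem_nbrs.2 heT, rfl⟩

/-- The degree of the edge `uv` in the line graph is `d(u) + d(v) - 2`. -/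
lemma card_adj_add_two {T : Finset (Sym2 V)} {u v : V} (huv : u ≠ v) (h : s(u, v) ∈ T) :
    (T.filter (fun e => s(u, v) ≠ e ∧ ∃ w, w ∈ s(u, v) ∧ w ∈ e)).card + 2
      = (nbrs T u).card + (nbrs T v).card := by
  rw [← card_incident, ← card_incident, ← Finset.card_union_add_card_inter]
  have hinter : T.filter (fun e => u ∈ e) ∩ T.filter (fun e => v ∈ e) = {s(u, v)} := by
    ext e
    simp only [Finset.mem_inter, Finset.mem_filter, Finset.mem_singleton]
    constructor
    · rintro ⟨⟨_, hu⟩, _, hv⟩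
      exact (Sym2.mem_and_mem_iff huv).1 ⟨hu, hv⟩
    · rintro rfl
      simp [h]
  have hunion : T.filter (fun e => u ∈ e) ∪ T.filter (fun e => v ∈ e)
      = insert s(u, v) (T.filter (fun e => s(u, v) ≠ e ∧ ∃ w, w ∈ s(u, v) ∧ w ∈ e)) := by
    ext e
    by_cases he : e = s(u, v)
    · subst he
      simp [h]
    · have he' : s(u, v) ≠ e := fun h' => he h'.symm
      simp [he, he', ← and_or_left]
  rw [hinter, hunion, Finset.card_insert_of_notMem (by simp), Finset.card_singleton]

/-- If every edge meets `O` in exactly one vertex, then the degrees over `O` count each edge once. -/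
lemma sum_card_nbrs {T : Finset (Sym2 V)} {O : Finset V}
    (h : ∀ e ∈ T, ∃ u v, e = s(u, v) ∧ u ∈ O ∧ v ∉ O) :
    ∑ v ∈ O, (nbrs T v).card = T.card := by
  simp_rw [← card_incident]
  have hcount := Finset.sum_card_bipartiteAbove_eq_sum_card_bipartiteBelow (s := O) (t := T)
    (fun v e => v ∈ e)
  simp only [Finset.bipartiteAbove, Finset.bipartiteBelow] at hcount
  rw [hcount, Finset.card_eq_sum_ones]
  refine Finset.sum_congr rfl fun e he => ?_
  obtain ⟨u, v, rfl, hu, hv⟩ := h e he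
  rw [Finset.card_eq_one]
  refine ⟨u, ?_⟩
  ext w
  simp only [Finset.mem_filter, Sym2.mem_iff, Finset.mem_singleton]
  constructor
  · rintro ⟨hw, rfl | rfl⟩
    · rfl
    · exact absurd hw hv
  · rintro rfl
    exact ⟨hu, Or.inl rfl⟩

/-- Two naturals with sum `2 k - 1` have product at most `k (k - 1)`. -/
lemma mul_le_of_add {x y k : ℕ} (h : x + y + 1 = 2 * k) : x * y ≤ k * (k - 1) := by
  obtain ⟨m, rfl⟩ : ∃ m, k = m + 1 := ⟨k - 1, by omega⟩
  simp only [Nat.add_sub_cancel]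
  rcases le_or_gt x m with hx | hx
  · obtain ⟨t, rfl⟩ := Nat.exists_eq_add_of_le hx
    have : y = x + 2 * t + 1 := by omega
    subst this
    nlinarith
  · obtain ⟨t, rfl⟩ := Nat.exists_eq_add_of_lt hx
    obtain ⟨r, rfl⟩ : ∃ r, m = y + r := ⟨m - y, by omega⟩
    have : t = r := by omega
    subst this
    nlinarith

lemma card_le_of_odd {T : Finset (Sym2 V)} {k : ℕ} (hV : Fintype.card V = 2 * k)
    (hT : ∀ e ∈ T, ∃ u v, e = s(u, v) ∧ Odd (nbrs T u).card ∧ ¬ Odd (nbrs T v).card) :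
    T.card ≤ k * (k - 1) := by
  set O : Finset V := Finset.univ.filter (fun v => Odd (nbrs T v).card) with hO
  set E : Finset V := Finset.univ.filter (fun v => ¬ Odd (nbrs T v).card) with hE
  have hcard : O.card + E.card = 2 * k := by
    rw [← hV, ← Finset.card_univ]
    exact Finset.card_filter_add_card_filter_not _
  have hsumO : ∑ v ∈ O, (nbrs T v).card = T.card := by
    refine sum_card_nbrs fun e he => ?_
    obtain ⟨u, v, rfl, hu, hv⟩ := hT e he
    exact ⟨u, v, rfl, by simpa [hO] using hu, by simpa [hO] using hv⟩
  have hsumE : ∑ v ∈ E, (nbrs T v).card = T.card := by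
    refine sum_card_nbrs fun e he => ?_
    obtain ⟨u, v, rfl, hu, hv⟩ := hT e he
    exact ⟨v, u, Sym2.eq_swap, by simpa [hE] using hv, by simpa [hE] using hu⟩
  have hedge : ∀ u v, s(u, v) ∈ T → (Odd (nbrs T u).card ↔ ¬ Odd (nbrs T v).card) := by
    intro u v h
    obtain ⟨u', v', he, hu, hv⟩ := hT _ h
    rcases Sym2.eq_iff.1 he with ⟨rfl, rfl⟩ | ⟨rfl, rfl⟩ <;> tauto
  have hdegO : ∀ v ∈ O, (nbrs T v).card ≤ E.card := by
    intro v hv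
    refine Finset.card_le_card fun w hw => ?_
    have hv' : Odd (nbrs T v).card := (Finset.mem_filter.1 hv).2
    exact Finset.mem_filter.2 ⟨Finset.mem_univ _, (hedge v w (mem_nbrs.1 hw)).1 hv'⟩
  have hdegE : ∀ v ∈ E, (nbrs T v).card ≤ O.card := by
    intro v hv
    refine Finset.card_le_card fun w hw => ?_
    have hv' : ¬ Odd (nbrs T v).card := (Finset.mem_filter.1 hv).2
    have := hedge v w (mem_nbrs.1 hw)
    exact Finset.mem_filter.2 ⟨Finset.mem_univ _, by tauto⟩
  rcases Nat.even_or_odd E.card with hEe | hEo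
  · -- Odd degrees bounded by the even number `E.card` are at most `E.card - 1`.
    have hle : T.card ≤ O.card * (E.card - 1) := by
      rw [← hsumO, ← smul_eq_mul]
      refine Finset.sum_le_card_nsmul _ _ _ fun v hv => ?_
      have h1 := hdegO v hv
      have h2 : Odd (nbrs T v).card := (Finset.mem_filter.1 hv).2
      rw [Nat.odd_iff] at h2
      rw [Nat.even_iff] at hEe
      omega
    rcases Nat.eq_zero_or_pos E.card with h0 | h0
    · rw [h0] at hle
      omega
    · exact hle.trans (mul_le_of_add (by omega))
  · have hOo : O.card % 2 = 1 := by
      rw [Nat.odd_iff] at hEo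
      omega
    have hle : T.card ≤ E.card * (O.card - 1) := by
      rw [← hsumE, ← smul_eq_mul]
      refine Finset.sum_le_card_nsmul _ _ _ fun v hv => ?_
      have h1 := hdegE v hv
      have h2 : ¬ Odd (nbrs T v).card := (Finset.mem_filter.1 hv).2
      rw [Nat.odd_iff] at h2
      omega
    exact hle.trans (mul_le_of_add (by omega))

/-- Oddness of a vertex set of `L(K_V)`, read off from the degrees in the graph it spans. -/
lemma odd_filter_adj_iff (s : Finset (⊤ : SimpleGraph V).edgeSet)
    (e : (⊤ : SimpleGraph V).edgeSet) (he : e ∈ s) {u v : V} (huv : (e : Sym2 V) = s(u, v)) :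
    Odd (s.filter (fun f => (SimpleGraph.lineGraph ⊤).Adj e f)).card ↔
      Odd ((nbrs (s.map (Function.Embedding.subtype _)) u).card
        + (nbrs (s.map (Function.Embedding.subtype _)) v).card) := by
  have hne : u ≠ v := by
    have h := e.2
    rw [huv] at h
    simpa using h
  have hmem : s(u, v) ∈ s.map (Function.Embedding.subtype _) :=
    Finset.mem_map.2 ⟨e, he, huv⟩
  rw [← card_adj_add_two hne hmem, Finset.filter_map, Finset.card_map]
  have : s.filter (fun f => (SimpleGraph.lineGraph ⊤).Adj e f) = s.filter
      ((fun f => s(u, v) ≠ f ∧ ∃ w, w ∈ s(u, v) ∧ w ∈ f) ∘ (Function.Embedding.subtype _)) := by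
    refine Finset.filter_congr fun f _ => ?_
    rw [SimpleGraph.lineGraph_adj_iff_exists, ← huv]
    simp [Subtype.ext_iff]
  rw [this, Nat.odd_add]
  simp

end EdgeSets

/-- The extremal example: the edges of `K_{k-1,k}`, with the last vertex of `Fin (2 * k)` isolated. -/
lemma exists_odd_set (k : ℕ) (hk : 0 < k) :
    ∃ s : Finset (⊤ : SimpleGraph (Fin (2 * k))).edgeSet,
      (∀ e ∈ s, Odd (s.filter (fun f => (SimpleGraph.lineGraph ⊤).Adj e f)).card) ∧
        s.card = k * (k - 1) := by
  set A : Finset (Fin (2 * k)) := Finset.univ.filter (fun i => i.val < k - 1) with hA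
  set B : Finset (Fin (2 * k)) :=
    Finset.univ.filter (fun i => k - 1 ≤ i.val ∧ i.val < 2 * k - 1) with hB
  have hAB : ∀ i, i ∈ A → i ∉ B := by
    intro i hi hi'
    simp only [hA, hB, Finset.mem_filter, Finset.mem_univ, true_and] at hi hi'
    omega
  have hAcard : A.card = k - 1 := by
    rw [← Finset.card_map Fin.valEmbedding, ← Finset.card_range (k - 1)]
    congr 1
    ext x
    simp only [hA, Finset.mem_map, Finset.mem_filter, Finset.mem_univ, true_and,
      Fin.valEmbedding_apply, Finset.mem_range]
    exact ⟨by rintro ⟨i, hi, rfl⟩; exact hi, fun hx => ⟨⟨x, by omega⟩, hx, rfl⟩⟩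
  have hBcard : B.card = k := by
    have : (Finset.Ico (k - 1) (2 * k - 1)).card = k := by
      rw [Nat.card_Ico]
      omega
    refine Eq.trans ?_ this
    rw [← Finset.card_map Fin.valEmbedding]
    congr 1
    ext x
    simp only [hB, Finset.mem_map, Finset.mem_filter, Finset.mem_univ, true_and,
      Fin.valEmbedding_apply, Finset.mem_Ico]
    exact ⟨by rintro ⟨i, hi, rfl⟩; exact hi, fun hx => ⟨⟨x, by omega⟩, hx, rfl⟩⟩
  set s : Finset (⊤ : SimpleGraph (Fin (2 * k))).edgeSet :=
    Finset.univ.filter (fun e => ∃ i j, i ∈ A ∧ j ∈ B ∧ (e : Sym2 _) = s(i, j)) with hs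
  set T := s.map (Function.Embedding.subtype _) with hT
  have hmemT : ∀ e, e ∈ T ↔ ∃ i j, i ∈ A ∧ j ∈ B ∧ e = s(i, j) := by
    intro e
    simp only [hT, hs, Finset.mem_map, Finset.mem_filter, Finset.mem_univ, true_and]
    constructor
    · rintro ⟨e, h, rfl⟩
      exact h
    · rintro ⟨i, j, hi, hj, rfl⟩
      have hij : i ≠ j := by
        rintro rfl
        exact hAB i hi hj
      exact ⟨⟨s(i, j), by simpa using hij⟩, ⟨i, j, hi, hj, rfl⟩, rfl⟩
  have hnA : ∀ i ∈ A, nbrs T i = B := by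
    intro i hi
    ext j
    rw [mem_nbrs, hmemT]
    constructor
    · rintro ⟨i', j', hi', hj', h⟩
      rcases Sym2.eq_iff.1 h with ⟨rfl, rfl⟩ | ⟨rfl, rfl⟩
      · exact hj'
      · exact absurd hj' (hAB _ hi)
    · intro hj
      exact ⟨i, j, hi, hj, rfl⟩
  have hnB : ∀ j ∈ B, nbrs T j = A := by
    intro j hj
    ext i
    rw [mem_nbrs, hmemT]
    constructor
    · rintro ⟨i', j', hi', hj', h⟩
      rcases Sym2.eq_iff.1 h with ⟨rfl, rfl⟩ | ⟨rfl, rfl⟩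
      · exact absurd hj (hAB _ hi')
      · exact hi'
    · intro hi
      exact ⟨i, j, hi, hj, Sym2.eq_swap⟩
  refine ⟨s, fun e he => ?_, ?_⟩
  · obtain ⟨i, j, hi, hj, hij⟩ := (Finset.mem_filter.1 he).2
    rw [odd_filter_adj_iff s e he hij, ← hT, hnA i hi, hnB j hj, hAcard, hBcard, Nat.odd_iff]
    omega
  · have hsum : ∑ v ∈ A, (nbrs T v).card = T.card := by
      refine sum_card_nbrs fun e he => ?_
      obtain ⟨i, j, hi, hj, rfl⟩ := (hmemT e).1 he
      exact ⟨i, j, rfl, hi, fun h => hAB j h hj⟩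
    have hsT : s.card = T.card := (Finset.card_map _).symm
    rw [hsT, ← hsum, Finset.sum_congr rfl (fun v hv => by rw [hnA v hv, hBcard]),
      Finset.sum_const, hAcard, smul_eq_mul, mul_comm]

/-- For a positive even integer `n`, the line graph of the complete graph `K_n`
satisfies `f_o(L(K_n)) = n (n - 2) / 4`. -/
theorem fo_lineGraph_completeGraph (n : ℕ) (hpos : 0 < n) (hn : Even n) :
    fo (SimpleGraph.lineGraph (⊤ : SimpleGraph (Fin n))) = n * (n - 2) / 4 := by
  obtain ⟨k, rfl⟩ := even_iff_two_dvd.1 hn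
  have hk : 0 < k := by omega
  have hval : 2 * k * (2 * k - 2) / 4 = k * (k - 1) := by
    have : 2 * k * (2 * k - 2) = 4 * (k * (k - 1)) := by
      rw [show 2 * k - 2 = 2 * (k - 1) by omega]
      ring
    omega
  rw [hval]
  refine IsGreatest.csSup_eq ⟨?_, ?_⟩
  · obtain ⟨s, hs, hc⟩ := exists_odd_set k hk
    exact ⟨s, fun v hv => by convert hs v hv, hc⟩
  · rintro m ⟨s, hs, rfl⟩
    rw [← Finset.card_map (Function.Embedding.subtype _)]
    refine card_le_of_odd (by simp) fun e he => ?_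
    obtain ⟨e, hes, rfl⟩ := Finset.mem_map.1 he
    obtain ⟨⟨u, v⟩, huv⟩ := Quot.exists_rep (e : Sym2 (Fin (2 * k)))
    have hodd := (odd_filter_adj_iff s e hes huv.symm).1 (by convert hs e hes)
    rw [Nat.odd_add, ← Nat.not_odd_iff_even] at hodd
    by_cases hu : Odd (nbrs (s.map (Function.Embedding.subtype _)) u).card
    · exact ⟨u, v, huv.symm, hu, hodd.1 hu⟩
    · exact ⟨v, u, huv.symm.trans Sym2.eq_swap, by tauto, hu⟩
end

section
/- For every even integer n ≥ 8, the line graph L(K_n) of the complete graph K_n is a connected simple graph of order N = n(n-1)/2 satisfying f_o(L(K_n)) < 2⌊N/4⌋. Hence the conjecture of Berman, Wang and Wargo, that every connected simple graph of order N satisfies f_o(G) ≥ 2⌊N/4⌋, is false. -/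
/-!
An induced subgraph of `L(K_n)` is the line graph of a graph `G` on `Fin n`, and the edge `uv` has
degree `d(u) + d(v) - 2` there. So the induced subgraph is odd iff every edge of `G` joins a vertex
of odd degree to one of even degree; in particular `G` is bipartite with parts `A` (odd degrees)
and `B` (even degrees), isolated vertices being put in `B`. As `n = 2m` is even, `|A|` and `|B|`
have the same parity. If both are odd, a vertex of `B` has at most `|A| - 1` neighbours; if both are
even, a vertex of `A` has at most `|B| - 1`. Hence the number of edges is at most a product of two
integers with sum `2m - 1`, so at most `m (m - 1)`, which is less than `2 ⌊m (2m - 1) / 4⌋` once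
`m ≥ 4`.
-/

open scoped Classical

/-- Two edges `ab`, `cd` of the complete graph are joined in the line graph through `ac`. -/
lemma lineGraph_top_connected (n : ℕ) (h8 : 8 ≤ n) :
    (SimpleGraph.lineGraph (⊤ : SimpleGraph (Fin n))).Connected := by
  have key : ∀ e f : (⊤ : SimpleGraph (Fin n)).edgeSet,
      (∃ v, v ∈ (e : Sym2 (Fin n)) ∧ v ∈ (f : Sym2 (Fin n))) →
      (SimpleGraph.lineGraph (⊤ : SimpleGraph (Fin n))).Reachable e f := by
    intro e f h
    by_cases hef : e = f
    · rw [hef]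
    · exact (SimpleGraph.lineGraph_adj_iff_exists.2 ⟨hef, h⟩).reachable
  have hne : Nonempty (⊤ : SimpleGraph (Fin n)).edgeSet :=
    ⟨⟨s(⟨0, by omega⟩, ⟨1, by omega⟩), by simp⟩⟩
  refine ⟨?_⟩
  rintro ⟨e, he⟩ ⟨f, hf⟩
  induction e using Sym2.ind with | _ a b =>
  induction f using Sym2.ind with | _ c d =>
  by_cases hac : a = c
  · exact key _ _ ⟨a, by simp, by simp [hac]⟩
  · have hm : s(a, c) ∈ (⊤ : SimpleGraph (Fin n)).edgeSet := by simpa using hac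
    exact (key _ ⟨s(a, c), hm⟩ ⟨a, by simp, by simp⟩).trans
      (key _ _ ⟨c, by simp, by simp⟩)

/-- A graph of even order all of whose edges join vertices of different degree parity is
bipartite, and the parity constraints bound its number of edges. -/
lemma card_edgeFinset_le_of_parity {m n : ℕ} (hm : n = m + m) (G : SimpleGraph (Fin n))
    (hG : ∀ u v, G.Adj u v → Odd (G.degree u + G.degree v)) :
    G.edgeFinset.card ≤ m * (m - 1) := by
  set A : Finset (Fin n) := Finset.univ.filter fun v => Odd (G.degree v) with hA
  set B : Finset (Fin n) := Finset.univ.filter fun v => ¬ Odd (G.degree v) with hB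
  have hAB : A.card + B.card = n := by
    refine (Finset.card_filter_add_card_filter_not (s := (Finset.univ : Finset (Fin n)))
      (fun v => Odd (G.degree v))).trans (by simp)
  have hbip : G.IsBipartiteWith (A : Set (Fin n)) (B : Set (Fin n)) := by
    refine ⟨?_, ?_⟩
    · rw [Finset.disjoint_coe]
      exact Finset.disjoint_filter_filter_not _ _ _
    · intro u v huv
      have := hG u v huv
      simp only [hA, hB, Finset.coe_filter, Finset.mem_univ, true_and, Set.mem_ofPred_eq]
      rw [Nat.odd_add, ← Nat.not_odd_iff_even] at this
      tauto
  have hsA := SimpleGraph.isBipartiteWith_sum_degrees_eq_card_edges hbip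
  have hsB := SimpleGraph.isBipartiteWith_sum_degrees_eq_card_edges hbip.symm
  have hdA : ∀ v ∈ A, G.degree v ≤ B.card := fun v hv =>
    SimpleGraph.isBipartiteWith_degree_le hbip hv
  have hdB : ∀ v ∈ B, G.degree v ≤ A.card := fun v hv =>
    SimpleGraph.isBipartiteWith_degree_le hbip.symm hv
  -- Two naturals `x`, `y` with `x + y = 2m` satisfy `x (y - 1) ≤ m (m - 1)`: over the
  -- integers the difference is `k (k - 1) ≥ 0` with `k = y - m`.
  have arith : ∀ x y : ℕ, x + y = n → x * (y - 1) ≤ m * (m - 1) := by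
    intro x y hxy
    rcases Nat.eq_zero_or_pos y with rfl | hy
    · simp
    have hm1 : 1 ≤ m := by omega
    obtain ⟨y, rfl⟩ := Nat.exists_eq_add_of_le' hy
    obtain ⟨k, rfl⟩ := Nat.exists_eq_add_of_le' hm1
    simp only [Nat.add_sub_cancel]
    rcases le_or_gt y k with h | h
    · obtain ⟨t, rfl⟩ := Nat.exists_eq_add_of_le h
      have : x = y + 2 * t + 1 := by omega
      subst this
      nlinarith
    · obtain ⟨t, rfl⟩ := Nat.exists_eq_add_of_le h
      have : k = x + t := by omega
      subst this
      nlinarith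
  rcases Nat.even_or_odd A.card with hev | hod
  · have hBe : Even B.card := by grind
    calc G.edgeFinset.card = ∑ v ∈ A, G.degree v := by rw [hsA]
      _ ≤ ∑ v ∈ A, (B.card - 1) := by
        refine Finset.sum_le_sum fun v hv => ?_
        have h1 := hdA v hv
        have h2 : Odd (G.degree v) := (Finset.mem_filter.1 hv).2
        grind
      _ = A.card * (B.card - 1) := by simp
      _ ≤ _ := arith _ _ hAB
  · calc G.edgeFinset.card = ∑ v ∈ B, G.degree v := by rw [hsB]
      _ ≤ ∑ v ∈ B, (A.card - 1) := by
        refine Finset.sum_le_sum fun v hv => ?_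
        have h1 := hdB v hv
        have h2 : ¬ Odd (G.degree v) := (Finset.mem_filter.1 hv).2
        grind
      _ = B.card * (A.card - 1) := by simp
      _ ≤ _ := arith _ _ (by omega)

/-- An odd induced subgraph of `L(K_n)` is the edge set of a graph on `Fin n` whose edges join
vertices of different degree parity, so `card_edgeFinset_le_of_parity` bounds its order. -/
lemma card_le_of_odd_s11 {m n : ℕ} (hm : n = m + m)
    (s : Finset (⊤ : SimpleGraph (Fin n)).edgeSet)
    (hs : ∀ v ∈ s, Odd ((s.filter
      (fun u => (SimpleGraph.lineGraph (⊤ : SimpleGraph (Fin n))).Adj v u)).card)) :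
    s.card ≤ m * (m - 1) := by
  set E : Finset (Sym2 (Fin n)) := s.map (Function.Embedding.subtype _) with hE
  obtain ⟨G, hGdef⟩ : ∃ G : SimpleGraph (Fin n),
      G = SimpleGraph.fromEdgeSet (E : Set (Sym2 (Fin n))) := ⟨_, rfl⟩
  have hGE : G.edgeFinset = E := by
    ext e
    rw [SimpleGraph.mem_edgeFinset, hGdef, SimpleGraph.edgeSet_fromEdgeSet]
    simp only [Set.mem_sdiff, Finset.mem_coe, and_iff_left_iff_imp]
    intro he
    obtain ⟨f, -, rfl⟩ := Finset.mem_map.1 he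
    simpa using SimpleGraph.not_isDiag_of_mem_edgeSet _ f.2
  have hdeg : ∀ v, G.degree v = (s.filter fun e : (⊤ : SimpleGraph (Fin n)).edgeSet =>
      v ∈ (e : Sym2 (Fin n))).card := by
    intro v
    rw [← SimpleGraph.card_incidenceFinset_eq_degree, SimpleGraph.incidenceFinset_eq_filter, hGE,
      hE, Finset.filter_map, Finset.card_map]
    rfl
  have hcard : s.card = G.edgeFinset.card := by rw [hGE, hE, Finset.card_map]
  rw [hcard]
  refine card_edgeFinset_le_of_parity hm G fun u v huv => ?_
  have huvE : s(u, v) ∈ E := by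
    rw [← hGE]
    simpa using huv
  obtain ⟨e, hes, he⟩ := Finset.mem_map.1 huvE
  replace he : (e : Sym2 (Fin n)) = s(u, v) := he
  have hodd := hs e hes
  have hne : u ≠ v := huv.ne
  -- The edges meeting `e = uv` are those at `u` or at `v`, and only `e` itself is at both.
  have hunion : (s.filter fun f : (⊤ : SimpleGraph (Fin n)).edgeSet => u ∈ (f : Sym2 (Fin n))) ∪
      (s.filter fun f : (⊤ : SimpleGraph (Fin n)).edgeSet => v ∈ (f : Sym2 (Fin n))) =
      insert e (s.filter
        (fun f => (SimpleGraph.lineGraph (⊤ : SimpleGraph (Fin n))).Adj e f)) := by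
    ext f
    simp only [Finset.mem_union, Finset.mem_filter, Finset.mem_insert,
      SimpleGraph.lineGraph_adj_iff_exists, he, Sym2.mem_iff]
    constructor
    · rintro (⟨h1, h2⟩ | ⟨h1, h2⟩) <;> by_cases hfe : f = e
      · exact .inl hfe
      · exact .inr ⟨h1, fun h => hfe h.symm, u, .inl rfl, h2⟩
      · exact .inl hfe
      · exact .inr ⟨h1, fun h => hfe h.symm, v, .inr rfl, h2⟩
    · rintro (rfl | ⟨h1, -, w, rfl | rfl, h2⟩)
      · exact .inl ⟨hes, by simp [he]⟩
      · exact .inl ⟨h1, h2⟩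
      · exact .inr ⟨h1, h2⟩
  have hinter : (s.filter fun f : (⊤ : SimpleGraph (Fin n)).edgeSet => u ∈ (f : Sym2 (Fin n))) ∩
      (s.filter fun f : (⊤ : SimpleGraph (Fin n)).edgeSet => v ∈ (f : Sym2 (Fin n))) = {e} := by
    ext f
    simp only [Finset.mem_inter, Finset.mem_filter, Finset.mem_singleton]
    constructor
    · rintro ⟨⟨-, h1⟩, -, h2⟩
      exact Subtype.ext (((Sym2.mem_and_mem_iff hne).1 ⟨h1, h2⟩).trans he.symm)
    · rintro rfl
      exact ⟨⟨hes, by simp [he]⟩, hes, by simp [he]⟩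
  have hc := Finset.card_union_add_card_inter
    (s.filter fun f : (⊤ : SimpleGraph (Fin n)).edgeSet => u ∈ (f : Sym2 (Fin n)))
    (s.filter fun f : (⊤ : SimpleGraph (Fin n)).edgeSet => v ∈ (f : Sym2 (Fin n)))
  rw [hunion, hinter, Finset.card_insert_of_notMem (by simp), Finset.card_singleton,
    ← hdeg, ← hdeg] at hc
  rw [← hc]
  grind

/-- For every even `n ≥ 8`, the line graph of `K_n` is a connected graph of order
`N = n (n - 1) / 2` with `f_o(L(K_n)) < 2 ⌊N / 4⌋`, disproving the conjecture of
Berman, Wang and Wargo. -/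
theorem lineGraph_completeGraph_counterexample (n : ℕ) (hn : Even n) (h8 : 8 ≤ n) :
    (SimpleGraph.lineGraph (⊤ : SimpleGraph (Fin n))).Connected ∧
    Fintype.card (⊤ : SimpleGraph (Fin n)).edgeSet = n * (n - 1) / 2 ∧
    fo (SimpleGraph.lineGraph (⊤ : SimpleGraph (Fin n))) <
      2 * ((n * (n - 1) / 2) / 4) := by
  refine ⟨lineGraph_top_connected n h8, ?_, ?_⟩
  · rw [← Nat.choose_two_right, ← SimpleGraph.edgeFinset_card]
    convert SimpleGraph.card_edgeFinset_top_eq_card_choose_two (V := Fin n)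
    simp
  · obtain ⟨m, hm⟩ := hn
    have hle : fo (SimpleGraph.lineGraph (⊤ : SimpleGraph (Fin n))) ≤ m * (m - 1) := by
      refine csSup_le ⟨0, ∅, by simp, rfl⟩ ?_
      rintro _ ⟨s, hs, rfl⟩
      exact card_le_of_odd_s11 hm s hs
    refine hle.trans_lt ?_
    obtain ⟨k, rfl⟩ := Nat.exists_eq_add_of_le' (show 4 ≤ m by omega)
    have h1 : n * (n - 1) / 2 = (k + 4) * (2 * k + 7) := by
      have : n * (n - 1) = 2 * ((k + 4) * (2 * k + 7)) := by
        rw [hm, show k + 4 + (k + 4) - 1 = 2 * k + 7 by omega]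
        ring
      omega
    have h2 : (k + 4) * (2 * k + 7) = 2 * ((k + 4) * (k + 4 - 1)) + (k + 4) := by
      rw [show k + 4 - 1 = k + 3 by omega]
      ring
    -- `m (m - 1)` is even, so `⌊(2m(m - 1) + m) / 4⌋` exceeds `m (m - 1) / 2` as `m ≥ 4`.
    have h3 : Even ((k + 4) * (k + 4 - 1)) := Nat.even_mul_pred_self _
    rw [h1, h2]
    grind
end

section
/- Let G be a finite simple graph and let F be a set of edges of G. The subgraph of the line graph L(G) induced by the vertex set F has all degrees odd if and only if for every edge uv ∈ F, the degrees of u and v in the spanning subgraph of G with edge set F have opposite parity (one odd, one even). Consequently, f_o(L(G)) equals the maximum number of edges of a spanning subgraph of G in which every edge joins a vertex of odd degree to a vertex of even degree. -/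
/-!
An edge `e = uv` of `F` has degree `d(u) + d(v) - 2` in the subgraph of `L(G)` induced by `F`,
where `d` is the degree in `(V, F)`: the edges of `F` at `u` and those at `v` together are `e` and
its neighbours, and as `G` is simple only `e` itself is counted twice
(`card_filter_lineGraph_adj_add_two`). So this degree is odd exactly when `d(u)` and `d(v)` have
opposite parity. The two suprema are then taken over the same family of edge sets.
-/

open scoped Classical

/-- The degree formula `d(u) + d(v) = d_{L(G)[F]}(uv) + 2`, written without subtraction. -/
lemma card_filter_lineGraph_adj_add_two {V : Type*} {G : SimpleGraph V} (F : Finset G.edgeSet)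
    {e : G.edgeSet} (he : e ∈ F) {u v : V} (huv : (e : Sym2 V) = s(u, v)) :
    (F.filter (fun f => G.lineGraph.Adj e f)).card + 2 =
      (F.filter (fun f : G.edgeSet => u ∈ (f : Sym2 V))).card +
        (F.filter (fun f : G.edgeSet => v ∈ (f : Sym2 V))).card := by
  have hne : u ≠ v := by
    have h := e.2
    rw [huv, SimpleGraph.mem_edgeSet] at h
    exact h.ne
  have hunion : F.filter (fun f : G.edgeSet => u ∈ (f : Sym2 V)) ∪
      F.filter (fun f : G.edgeSet => v ∈ (f : Sym2 V)) =
      insert e (F.filter (fun f => G.lineGraph.Adj e f)) := by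
    ext f
    simp only [Finset.mem_union, Finset.mem_filter, Finset.mem_insert,
      SimpleGraph.lineGraph_adj_iff_exists, huv, Sym2.mem_iff, or_and_right, exists_or,
      exists_eq_left]
    by_cases hfe : f = e
    · subst hfe
      simp [he, huv]
    · have hef : e ≠ f := Ne.symm hfe
      tauto
  have hinter : F.filter (fun f : G.edgeSet => u ∈ (f : Sym2 V)) ∩
      F.filter (fun f : G.edgeSet => v ∈ (f : Sym2 V)) =
      {e} := by
    ext f
    simp only [Finset.mem_inter, Finset.mem_filter, Finset.mem_singleton]
    constructor
    · rintro ⟨⟨-, hu⟩, -, hv⟩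
      exact Subtype.ext (((Sym2.mem_and_mem_iff hne).1 ⟨hu, hv⟩).trans huv.symm)
    · rintro rfl
      simp [he, huv]
  have hnot : e ∉ F.filter (fun f => G.lineGraph.Adj e f) := by simp
  have hcard := Finset.card_union_add_card_inter
    (F.filter (fun f : G.edgeSet => u ∈ (f : Sym2 V)))
    (F.filter (fun f : G.edgeSet => v ∈ (f : Sym2 V)))
  rw [hunion, hinter, Finset.card_insert_of_notMem hnot, Finset.card_singleton] at hcard
  omega

/-- In `F.filter (fun f => w ∈ (f : Sym2 V))` the variable `f` ranges over `Sym2 V`, and `F` is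
coerced to a `Finset (Sym2 V)` through the monad structure of `Finset`, that is, replaced by its
image under the inclusion. As the inclusion is injective, the count is that of the members of `F`
at `w`. -/
lemma card_filter_mem_coe {V : Type*} {G : SimpleGraph V} (F : Finset G.edgeSet) (w : V) :
    (F.filter (fun f => w ∈ (f : Sym2 V))).card =
      (F.filter (fun f : G.edgeSet => w ∈ (f : Sym2 V))).card := by
  rw [← Finset.card_image_of_injective (F.filter (fun f : G.edgeSet => w ∈ (f : Sym2 V)))
    Subtype.val_injective]
  congr 1
  ext f
  simp only [Finset.bind_def, Finset.pure_def, Finset.mem_filter, Finset.mem_sup,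
    Finset.mem_singleton, Finset.mem_image]
  constructor
  · rintro ⟨⟨a, ha, rfl⟩, hw⟩
    exact ⟨a, ⟨ha, hw⟩, rfl⟩
  · rintro ⟨a, ⟨ha, hw⟩, rfl⟩
    exact ⟨⟨a, ha, rfl⟩, hw⟩

lemma odd_lineGraph_degrees_iff {V : Type*} {G : SimpleGraph V} (F : Finset G.edgeSet) :
    (∀ e ∈ F, Odd ((F.filter (fun f => G.lineGraph.Adj e f)).card)) ↔
      (∀ e ∈ F, ∀ u v : V, (e : Sym2 V) = s(u, v) →
        (Odd ((F.filter (fun f => u ∈ (f : Sym2 V))).card) ↔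
          Even ((F.filter (fun f => v ∈ (f : Sym2 V))).card))) := by
  refine forall₂_congr fun e he => ?_
  have key : ∀ u v : V, (e : Sym2 V) = s(u, v) →
      (Odd ((F.filter (fun f => G.lineGraph.Adj e f)).card) ↔
        (Odd ((F.filter (fun f => u ∈ (f : Sym2 V))).card) ↔
          Even ((F.filter (fun f => v ∈ (f : Sym2 V))).card))) := by
    intro u v huv
    have h := card_filter_lineGraph_adj_add_two F he huv
    simp only [card_filter_mem_coe, Nat.odd_iff, Nat.even_iff]
    omega
  constructor
  · exact fun h u v huv => (key u v huv).1 h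
  · intro h
    obtain ⟨u, v, huv⟩ : ∃ u v : V, (e : Sym2 V) = s(u, v) := by
      induction h : (e : Sym2 V) with | _ u v => exact ⟨u, v, rfl⟩
    exact (key u v huv).2 (h u v huv)

/-- A set `F` of edges of `G` induces a subgraph of the line graph `L(G)` with all
degrees odd iff every edge `uv ∈ F` joins a vertex of odd degree to a vertex of even
degree in the spanning subgraph `(V, F)`. Consequently, `f_o(L(G))` is the maximum
number of edges of a spanning subgraph of `G` in which every edge joins a vertex of
odd degree to a vertex of even degree. -/
theorem fo_lineGraph_eq_max_odd_even_edge_subgraph {V : Type*} [Fintype V]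
    (G : SimpleGraph V) :
    (∀ F : Finset G.edgeSet,
      ((∀ e ∈ F, Odd ((F.filter (fun f => G.lineGraph.Adj e f)).card)) ↔
        (∀ e ∈ F, ∀ u v : V, (e : Sym2 V) = s(u, v) →
          (Odd ((F.filter (fun f => u ∈ (f : Sym2 V))).card) ↔
            Even ((F.filter (fun f => v ∈ (f : Sym2 V))).card))))) ∧
    fo G.lineGraph = sSup {m | ∃ F : Finset G.edgeSet,
      (∀ e ∈ F, ∀ u v : V, (e : Sym2 V) = s(u, v) →
        (Odd ((F.filter (fun f => u ∈ (f : Sym2 V))).card) ↔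
          Even ((F.filter (fun f => v ∈ (f : Sym2 V))).card))) ∧ F.card = m} := by
  refine ⟨odd_lineGraph_degrees_iff, ?_⟩
  unfold fo
  simp only [odd_lineGraph_degrees_iff]
end
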